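/- arXiv:2512.11311 — 4 statements merged into one kernel-verified Lean document; each statement's English description precedes it below -/
import Mathlib

section
/- There are only finitely many unit-generated real quadratic orders whose (wide) class group is 2-torsion. Equivalently, the set of integers n ≥ 3 such that every element of Cl(O_{n²−4}) has order dividing 2, together with the set of integers n ≥ 1 such that every element of Cl(O_{n²+4}) has order dividing 2, is finite. -/
noncomputable section

/-- A complex square root of an integer `d`. -/
def sqrtD (d : ℤ) : ℂ :=
  if 0 ≤ d then ((Real.sqrt d : ℝ) : ℂ) else Complex.I * ((Real.sqrt (-d) : ℝ) : ℂ)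

/-- The element `(Δ + √Δ)/2` generating the quadratic order of discriminant `Δ`. -/
def omegaD (d : ℤ) : ℂ := ((d : ℂ) + sqrtD d) / 2

/-- The quadratic order `O_Δ = ℤ[(Δ + √Δ)/2]` of discriminant `Δ`, as a subring of `ℂ`. -/
def QOrder (d : ℤ) : Subring ℂ := Subring.closure {omegaD d}

/-- The class number `h_Δ`: the order of the (wide) class group of `O_Δ`,
the group of invertible fractional ideals modulo principal fractional ideals. -/
def classNumber (d : ℤ) : ℕ := Nat.card (ClassGroup (QOrder d))

noncomputable section
open Ideal nonZeroDivisors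

lemma sq_principal {R : Type*} [CommRing R] [IsDomain R] (htor : ∀ g : ClassGroup R, g ^ 2 = 1)
    (I J : Ideal R) (s : R) (hs : s ≠ 0) (h : I * J = Ideal.span {s}) :
    ∃ α, I ^ 2 = Ideal.span {α} := by
  let K := FractionRing R
  have hs' : algebraMap R K s ≠ 0 := by
    simpa using hs
  have h1 : (I : FractionalIdeal R⁰ K) * ((J : FractionalIdeal R⁰ K) *
      FractionalIdeal.spanSingleton R⁰ (algebraMap R K s)⁻¹) = 1 := by
    rw [← mul_assoc, ← FractionalIdeal.coeIdeal_mul, h, FractionalIdeal.coeIdeal_span_singleton,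
      FractionalIdeal.spanSingleton_mul_spanSingleton, mul_inv_cancel₀ hs',
      FractionalIdeal.spanSingleton_one]
  let U : (FractionalIdeal R⁰ K)ˣ := Units.mkOfMulEqOne _ _ h1
  have h2 : ClassGroup.mk (K := K) (U ^ 2) = 1 := by rw [map_pow]; exact htor _
  have h3 := (ClassGroup.mk_eq_one_of_coe_ideal (I := U ^ 2) (I' := I ^ 2) (by simp [U, FractionalIdeal.coeIdeal_pow])).1 h2
  obtain ⟨x, -, hx⟩ := h3
  exact ⟨x, hx⟩

/-- The concrete quadratic ring. -/
abbrev SS (d : ℤ) := QuadraticAlgebra ℤ (-((d ^ 2 - d) / 4)) d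

lemma sqrtD_sq (d : ℤ) (hd : 0 ≤ d) : sqrtD d * sqrtD d = d := by
  unfold sqrtD
  rw [if_pos hd, ← Complex.ofReal_mul, Real.mul_self_sqrt (by exact_mod_cast hd)]
  simp

lemma omegaD_sq (d : ℤ) (hd : 0 ≤ d) (h4 : (4 : ℤ) ∣ d ^ 2 - d) :
    omegaD d * omegaD d = (-((d ^ 2 - d) / 4)) • (1 : ℂ) + d • omegaD d := by
  obtain ⟨k, hk⟩ := h4
  have h1 : (d ^ 2 - d) / 4 = k := by omega
  rw [h1]
  have h2 := sqrtD_sq d hd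
  have h3 : (d : ℂ) ^ 2 - d = 4 * k := by exact_mod_cast hk
  unfold omegaD
  simp only [zsmul_eq_mul, Int.cast_neg]
  linear_combination (1 / 4) * h2 - (1/4) * h3

/-- embedding -/
def SSemb (d : ℤ) (hd : 0 ≤ d) (h4 : (4 : ℤ) ∣ d ^ 2 - d) : SS d →ₐ[ℤ] ℂ :=
  QuadraticAlgebra.lift ⟨omegaD d, omegaD_sq d hd h4⟩

lemma SSemb_apply (d : ℤ) (hd : 0 ≤ d) (h4 : (4 : ℤ) ∣ d ^ 2 - d) (z : SS d) :
    SSemb d hd h4 z = z.re + z.im * omegaD d := by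
  simp [SSemb, QuadraticAlgebra.lift]

lemma SSemb_inj (d : ℤ) (hd : 0 ≤ d) (h4 : (4 : ℤ) ∣ d ^ 2 - d) (hsq : ¬ IsSquare d) :
    Function.Injective (SSemb d hd h4) := by
  rw [injective_iff_map_eq_zero]
  intro z hz
  rw [SSemb_apply] at hz
  have h2 := sqrtD_sq d hd
  unfold omegaD at hz
  have h5 : (z.im : ℂ) * sqrtD d = - (2 * z.re + z.im * d) := by linear_combination 2 * hz
  have h6 : (z.im : ℂ) ^ 2 * d = (2 * z.re + z.im * d) ^ 2 := by
    linear_combination (z.im * sqrtD d - (2 * z.re + z.im * d)) * h5 - (z.im : ℂ)^2 * h2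
  have h7 : z.im ^ 2 * d = (2 * z.re + z.im * d) ^ 2 := by exact_mod_cast h6
  have h8 : z.im = 0 := by
    by_contra hne
    apply hsq
    have : z.im ^ 2 ∣ (2 * z.re + z.im * d) ^ 2 := ⟨d, h7.symm⟩
    rw [Int.pow_dvd_pow_iff (by norm_num)] at this
    obtain ⟨k, hk⟩ := this
    refine ⟨k, ?_⟩
    rw [hk] at h7
    have h9 : z.im ^ 2 ≠ 0 := by positivity
    apply mul_left_cancel₀ h9
    rw [h7]; ring
  rw [h8] at h7
  have h10 : z.re = 0 := by
    have : (2 * z.re) ^ 2 = 0 := by linarith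
    have := pow_eq_zero_iff (n := 2) (by norm_num) |>.1 this
    omega
  ext <;> simp [h8, h10]

lemma SSemb_range (d : ℤ) (hd : 0 ≤ d) (h4 : (4 : ℤ) ∣ d ^ 2 - d) :
    (SSemb d hd h4).toRingHom.range = QOrder d := by
  apply le_antisymm
  · rintro x ⟨z, rfl⟩
    change SSemb d hd h4 z ∈ _
    rw [SSemb_apply]
    have : omegaD d ∈ QOrder d := Subring.subset_closure rfl
    exact add_mem (intCast_mem _ _) (mul_mem (intCast_mem _ _) this)
  · unfold QOrder
    rw [Subring.closure_le]
    rintro x rfl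
    refine ⟨⟨0, 1⟩, ?_⟩
    change SSemb d hd h4 _ = _
    rw [SSemb_apply]; simp

lemma SS_isDomain (d : ℤ) (hd : 0 ≤ d) (h4 : (4 : ℤ) ∣ d ^ 2 - d) (hsq : ¬ IsSquare d) :
    IsDomain (SS d) := (SSemb_inj d hd h4 hsq).isDomain (SSemb d hd h4).toRingHom

lemma SS_tor (d : ℤ) (hd : 0 ≤ d) (h4 : (4 : ℤ) ∣ d ^ 2 - d) (hsq : ¬ IsSquare d)
    (htor : ∀ g : ClassGroup (QOrder d), g ^ 2 = 1) [IsDomain (SS d)] :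
    ∀ g : ClassGroup (SS d), g ^ 2 = 1 := by
  intro g
  let e1 : SS d ≃+* (SSemb d hd h4).toRingHom.range :=
    RingEquiv.ofBijective (SSemb d hd h4).toRingHom.rangeRestrict
      ⟨fun x y h => SSemb_inj d hd h4 hsq (congrArg Subtype.val h),
        RingHom.rangeRestrict_surjective _⟩
  let e : SS d ≃+* QOrder d := e1.trans (RingEquiv.subringCongr (SSemb_range d hd h4))
  let E := ClassGroup.mulEquiv e
  apply E.injective
  rw [map_pow, htor, map_one]

lemma nonsq (n σ d : ℤ) (hσ : σ = 1 ∨ σ = -1) (hd : d = n ^ 2 - 4 * σ) (hn : 3 ≤ n) :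
    ¬ IsSquare d := by
  rintro ⟨r, hr⟩
  wlog h : 0 ≤ r generalizing r
  · exact this (-r) (by rw [hr]; ring) (by linarith)
  rcases hσ with h1 | h1 <;> subst h1
  · have : r < n := by nlinarith
    have : n - 1 < r := by nlinarith
    omega
  · have : n < r := by nlinarith
    have : r < n + 1 := by nlinarith
    omega

lemma gen_exists (d : ℤ) (hd : 0 ≤ d) (h4 : (4 : ℤ) ∣ d ^ 2 - d) (hsq : ¬ IsSquare d)
    (htor : ∀ g : ClassGroup (QOrder d), g ^ 2 = 1) (s b : ℤ) (hs : 1 < s) (hsb : IsCoprime s b)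
    (hb : 4 * s ∣ b ^ 2 - d)
    (n σ : ℤ) (hσ : σ = 1 ∨ σ = -1) (hdn : d = n ^ 2 - 4 * σ) :
    ∃ P : ℤ → ℤ → Prop, (∃ u v, P u v) ∧ ∀ u v, P u v → (v ≠ 0 ∧
      (u ^ 2 - d * v ^ 2 = 4 * s ^ 2 ∨ u ^ 2 - d * v ^ 2 = - (4 * s ^ 2)) ∧
      (∃ u' v', P u' v' ∧ 2 * v' = u + v * n) ∧ (∃ u' v', P u' v' ∧ 2 * v' = v * n - u)) := by
  have := SS_isDomain d hd h4 hsq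
  have htor' := SS_tor d hd h4 hsq htor
  obtain ⟨c, hc⟩ := hb
  obtain ⟨k, hk⟩ := h4
  have hk' : (d ^ 2 - d) / 4 = k := by omega
  have hpar : ∃ t, b - d = 2 * t := by
    have h1 : (2 : ℤ) ∣ b ^ 2 - d := ⟨2 * s * c, by rw [hc]; ring⟩
    have h2 : Even (b ^ 2 - d) := by rwa [even_iff_two_dvd]
    rw [Int.even_sub, Int.even_pow' (by norm_num), ← Int.even_sub, even_iff_two_dvd] at h2
    exact h2
  obtain ⟨t, ht⟩ := hpar
  let w : SS d := ⟨t, 1⟩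
  let s' : SS d := (s : SS d)
  have hws : w + star w = (b : SS d) := by
    ext
    · simp [w]; linarith
    · simp [w]
  have hwn : w * star w = s' * (c : SS d) := by
    ext
    · simp [w, s', hk']
      have : 4 * (t * (t + d) + k) = 4 * (s * c) := by
        have : b = d + 2 * t := by linarith
        subst this
        linear_combination hc - hk
      linarith
    · simp [w, s']
  have hs0 : s' ≠ 0 := by
    intro h
    have := congrArg QuadraticAlgebra.re h
    simp [s'] at this
    omega
  let I : Ideal (SS d) := Ideal.span {s', w}
  let J : Ideal (SS d) := Ideal.span {s', star w}
  have hIJ : I * J = Ideal.span {s'} := by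
    apply le_antisymm
    · rw [Ideal.span_mul_span']
      rw [Ideal.span_le]
      rintro _ ⟨x, hx, y, hy, rfl⟩
      simp only [Set.mem_insert_iff, Set.mem_singleton_iff] at hx hy
      simp only [SetLike.mem_coe, Ideal.mem_span_singleton]
      rcases hx with rfl | rfl
      · exact dvd_mul_right _ _
      · rcases hy with rfl | rfl
        · exact dvd_mul_left _ _
        · exact ⟨_, hwn⟩
    · rw [Ideal.span_singleton_le_iff_mem]
      obtain ⟨x, y, hxy⟩ := hsb
      have e1 : s' = (x : SS d) * (s' * s') + (y : SS d) * (s' * star w + w * s') := by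
        have : (x : SS d) * s' + y * b = 1 := by
          simp only [s']; exact_mod_cast congrArg (Int.cast : ℤ → SS d) hxy
        rw [← hws] at this
        linear_combination (-s') * this
      rw [e1]
      have hsI : s' ∈ I := Ideal.subset_span (by simp)
      have hwI : w ∈ I := Ideal.subset_span (by simp)
      have hsJ : s' ∈ J := Ideal.subset_span (by simp)
      have hwJ : star w ∈ J := Ideal.subset_span (by simp)
      exact add_mem (Ideal.mul_mem_left _ _ (Ideal.mul_mem_mul hsI hsJ))
        (Ideal.mul_mem_left _ _ (add_mem (Ideal.mul_mem_mul hsI hwJ) (Ideal.mul_mem_mul hwI hsJ)))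
  obtain ⟨α₀, hα₀⟩ := sq_principal htor' I J s' hs0 hIJ
  refine ⟨fun u v => ∃ α : SS d, I ^ 2 = Ideal.span {α} ∧ u = 2 * α.re + d * α.im ∧ v = α.im,
    ⟨_, _, α₀, hα₀, rfl, rfl⟩, ?_⟩
  rintro u v ⟨α, hα, rfl, rfl⟩
  have hJ2 : J ^ 2 = Ideal.span {star α} := by
    have h1 : Ideal.map (starRingEnd (SS d)) I = J := by
      simp only [I, J, Ideal.map_span, Set.image_pair]
      congr 2
      simp [s']
    have h2 := congrArg (Ideal.map (starRingEnd (SS d))) hα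
    rw [Ideal.map_pow, h1, Ideal.map_span, Set.image_singleton] at h2
    exact h2
  have h5 : Ideal.span {s' ^ 2} = Ideal.span {α * star α} := by
    rw [← Ideal.span_singleton_pow, ← hIJ, mul_pow, hα, hJ2, Ideal.span_singleton_mul_span_singleton]
  have h6 : Associated (s' ^ 2) (α * star α) := Ideal.span_singleton_eq_span_singleton.1 h5
  rw [← QuadraticAlgebra.algebraMap_norm_eq_mul_star] at h6
  have h7 : s' ^ 2 = algebraMap ℤ (SS d) (s ^ 2) := by simp [s']
  rw [h7] at h6
  have h8 : Associated (s ^ 2) α.norm := by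
    apply associated_of_dvd_dvd
    · exact QuadraticAlgebra.algebraMap_dvd_iff_dvd.1 h6.dvd
    · exact QuadraticAlgebra.algebraMap_dvd_iff_dvd.1 h6.symm.dvd
  rw [Int.associated_iff] at h8
  have h9 : 4 * α.norm = (2 * α.re + d * α.im) ^ 2 - d * α.im ^ 2 := by
    rw [QuadraticAlgebra.norm_def]
    linear_combination (4 * α.im ^ 2) * hk' - α.im ^ 2 * hk
  refine ⟨?_, ?_, ?_⟩
  · intro him
    have hw2 : α ∣ w ^ 2 := by
      rw [← Ideal.mem_span_singleton, ← hα]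
      exact Ideal.pow_mem_pow (Ideal.subset_span (by simp)) 2
    have hre : α.norm = α.re ^ 2 := by
      rw [QuadraticAlgebra.norm_def, him]; ring
    rw [hre] at h8
    have hre2 : α.re = s ∨ α.re = -s := by
      rcases h8 with h8 | h8
      · exact (sq_eq_sq_iff_eq_or_eq_neg.1 h8.symm)
      · nlinarith [sq_nonneg α.re]
    have hαs : α = algebraMap ℤ (SS d) α.re := by
      ext <;> simp [him]
    rw [hαs, QuadraticAlgebra.algebraMap_dvd_iff] at hw2
    have h10 : α.re ∣ 2 * t + d := by
      have := hw2.2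
      simp [w, pow_two] at this
      have e : 2 * t + d = t + t + d := by ring
      rw [e]; exact this
    have h11 : s ∣ b := by
      have : b = 2 * t + d := by linarith
      rw [this]
      rcases hre2 with h | h
      · rwa [h] at h10
      · rw [h] at h10; exact (neg_dvd).1 h10
    have h12 : IsUnit s := hsb.isUnit_of_dvd' dvd_rfl h11
    rw [Int.isUnit_iff] at h12
    omega
  · rw [← h9]
    rcases h8 with h8 | h8
    · left; rw [h8]
    · right; rw [h8]; ring


  · have hpar2 : ∃ r, n - d = 2 * r := by
      have h2 : Even (n ^ 2 - d) := ⟨2 * σ, by rw [hdn]; ring⟩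
      rw [Int.even_sub, Int.even_pow' (by norm_num), ← Int.even_sub, even_iff_two_dvd] at h2
      exact h2
    obtain ⟨r, hr⟩ := hpar2
    let ε : SS d := ⟨r, 1⟩
    have hε : IsUnit ε := by
      rw [QuadraticAlgebra.isUnit_iff_norm_isUnit, QuadraticAlgebra.norm_def, Int.isUnit_iff]
      have : 4 * (ε.re * ε.re + d * ε.re * ε.im - -((d ^ 2 - d) / 4) * ε.im * ε.im) = 4 * σ := by
        have : n = d + 2 * r := by linarith
        subst this
        simp only [ε]
        linear_combination 4 * hk' - hdn - hk
      omega
    have hε' : IsUnit (star ε) := hε.star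
    constructor
    · refine ⟨_, _, ⟨α * ε, ?_, rfl, rfl⟩, ?_⟩
      · rw [hα, Ideal.span_singleton_eq_span_singleton]
        exact (associated_mul_unit_right _ _ hε)
      · simp [ε]
        linear_combination (-α.im) * hr
    · refine ⟨_, _, ⟨α * star ε, ?_, rfl, rfl⟩, ?_⟩
      · rw [hα, Ideal.span_singleton_eq_span_singleton]
        exact (associated_mul_unit_right _ _ hε')
      · simp [ε]
        linear_combination (-α.im) * hr

/-- reduction by the unit: choose a generator with minimal `|v|` -/
lemma gen_reduced (n σ d : ℤ) (hσ : σ = 1 ∨ σ = -1) (hd : d = n ^ 2 - 4 * σ) (hn : 3 ≤ n) (S : ℤ)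
    (P : ℤ → ℤ → Prop) (hP : ∃ u v, P u v) (h : ∀ u v, P u v → (v ≠ 0 ∧
      (u ^ 2 - d * v ^ 2 = 4 * S ∨ u ^ 2 - d * v ^ 2 = - (4 * S)) ∧
      (∃ u' v', P u' v' ∧ 2 * v' = u + v * n) ∧ (∃ u' v', P u' v' ∧ 2 * v' = v * n - u))) :
    ∃ u v : ℤ, v ≠ 0 ∧ (u ^ 2 - d * v ^ 2 = 4 * S ∨ u ^ 2 - d * v ^ 2 = - (4 * S)) ∧
      (n - 2) * v ^ 2 ≤ |S| := by
  classical
  have hex : ∃ k : ℕ, ∃ u v, P u v ∧ v.natAbs = k := by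
    obtain ⟨u, v, hp⟩ := hP
    exact ⟨_, u, v, hp, rfl⟩
  obtain ⟨u, v, hp, hv⟩ := Nat.find_spec hex
  have hmin : ∀ u' v', P u' v' → |v| ≤ |v'| := by
    intro u' v' hp'
    have := Nat.find_min' hex ⟨u', v', hp', rfl⟩
    rw [← hv] at this
    rw [Int.abs_eq_natAbs, Int.abs_eq_natAbs]; exact_mod_cast this
  obtain ⟨hv0, hN, ⟨u1, v1, hp1, e1⟩, ⟨u2, v2, hp2, e2⟩⟩ := h u v hp
  refine ⟨u, v, hv0, hN, ?_⟩
  have m1 := hmin _ _ hp1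
  have m2 := hmin _ _ hp2
  have k1 : (2 * v) ^ 2 ≤ (u + v * n) ^ 2 := by
    rw [← e1]; apply sq_le_sq.2; rw [abs_mul, abs_mul, abs_two]; linarith
  have k2 : (2 * v) ^ 2 ≤ (v * n - u) ^ 2 := by
    rw [← e2]; apply sq_le_sq.2; rw [abs_mul, abs_mul, abs_two]; linarith
  have hvpos : 0 < |v| := abs_pos.2 hv0
  have key : (n + 2) * |v| ≤ |u| ∨ |u| ≤ (n - 2) * |v| := by
    have k3 : 2 * |v| ≤ |(|u| - |v| * n)| := by
      have hcases : (|u| - |v| * n) ^ 2 = (u + v * n) ^ 2 ∨ (|u| - |v| * n) ^ 2 = (v * n - u) ^ 2 := by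
        rcases abs_choice u with hu | hu <;> rcases abs_choice v with hv' | hv' <;> rw [hu, hv']
        · right; ring
        · left; ring
        · left; ring
        · right; ring
      have : (2 * v) ^ 2 ≤ (|u| - |v| * n) ^ 2 := by
        rcases hcases with h | h <;> rw [h] <;> assumption
      have := sq_le_sq.1 this
      rwa [abs_mul, abs_two] at this
    rcases le_abs.1 k3 with h | h
    · left; linarith
    · right; linarith
  have hS : |u ^ 2 - d * v ^ 2| = 4 * |S| := by
    rcases hN with h | h <;> rw [h] <;> simp [abs_mul]
  have hU : 0 ≤ |u| := abs_nonneg _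
  have hu2 : u ^ 2 = |u| ^ 2 := (sq_abs u).symm
  have hv2 : v ^ 2 = |v| ^ 2 := (sq_abs v).symm
  rw [hu2, hv2] at hS
  rw [hv2]
  generalize |u| = U at *
  generalize |v| = V at *
  have hd1 : n ^ 2 - 4 ≤ d ∧ d ≤ n ^ 2 + 4 := by rcases hσ with h | h <;> subst h <;> constructor <;> linarith
  have hV2 : 0 < V ^ 2 := by positivity
  rcases key with h | h
  · have : ((n + 2) * V) ^ 2 ≤ U ^ 2 := by apply pow_le_pow_left₀ (by positivity) h
    have h3 : U ^ 2 - d * V ^ 2 ≤ 4 * |S| := hS ▸ le_abs_self _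
    nlinarith
  · have : U ^ 2 ≤ ((n - 2) * V) ^ 2 := by apply pow_le_pow_left₀ hU h
    have h3 : -(U ^ 2 - d * V ^ 2) ≤ 4 * |S| := hS ▸ neg_le_abs _
    nlinarith

theorem keyA (n σ d : ℤ) (hσ : σ = 1 ∨ σ = -1) (hd : d = n ^ 2 - 4 * σ) (hn : 3 ≤ n)
    (htor : ∀ g : ClassGroup (QOrder d), g ^ 2 = 1) (s b : ℤ) (hs : 1 < s) (hsd : IsCoprime s d)
    (hb : 4 * s ∣ b ^ 2 - d) :
    ∃ u v : ℤ, v ≠ 0 ∧ (u ^ 2 - d * v ^ 2 = 4 * s ^ 2 ∨ u ^ 2 - d * v ^ 2 = - (4 * s ^ 2)) ∧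
      (n - 2) * v ^ 2 ≤ s ^ 2 := by
  have hsq : ¬ IsSquare d := nonsq n σ d hσ hd hn
  have hd0 : 0 ≤ d := by rcases hσ with h | h <;> subst h <;> nlinarith
  have h4 : (4 : ℤ) ∣ d ^ 2 - d := by
    rw [hd]
    rcases Int.even_or_odd' n with ⟨k, h | h⟩ <;> subst h
    · exact ⟨4 * k ^ 4 - 8 * k^2 * σ + 4 * σ ^ 2 - k ^ 2 + σ, by ring⟩
    · exact ⟨(k^2+k-σ) * (4 *k^2+4*k+1- 4 *σ), by ring⟩
  have hsb : IsCoprime s b := by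
    have h1 : IsCoprime s (b ^ 2) := by
      obtain ⟨c, hc⟩ := hb
      have : b ^ 2 = d + s * (4 * c) := by linear_combination hc
      rw [this]
      exact hsd.add_mul_left_right _
    exact IsCoprime.of_isCoprime_of_dvd_right h1 (dvd_pow_self _ (by norm_num))
  obtain ⟨P, hP, h⟩ := gen_exists d hd0 h4 hsq htor s b hs hsb hb n σ hσ hd
  have := gen_reduced n σ d hσ hd hn (s ^ 2) P hP h
  rwa [abs_of_nonneg (sq_nonneg s)] at this

end

noncomputable section
open Complex Filter Topology Metric LSeries

/-- the (normalised) Taylor coefficients at `2` -/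
def bb (a : ℕ → ℝ) (m : ℕ) : ℝ := ∑' k : ℕ, a k / (k : ℝ) ^ 2 * (Real.log k ^ m / m.factorial)

lemma logMul_iter (f : ℕ → ℂ) (m k : ℕ) : (logMul^[m] f) k = (Complex.log k) ^ m * f k := by
  induction m generalizing f with
  | zero => simp
  | succ m ih => rw [Function.iterate_succ_apply, ih]; simp only [logMul]; ring

lemma bb_eq (a : ℕ → ℝ) (m : ℕ) :
    LSeries (logMul^[m] (fun k => (a k : ℂ))) 2 = m.factorial * (bb a m : ℂ) := by
  have hm : (m.factorial : ℝ) ≠ 0 := by positivity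
  have : (m.factorial : ℂ) * (bb a m : ℂ) = ((m.factorial * bb a m : ℝ) : ℂ) := by push_cast; rfl
  rw [this, bb, ← tsum_mul_left, ofReal_tsum, LSeries]
  refine tsum_congr fun k => ?_
  rcases eq_or_ne k 0 with rfl | hk
  · simp
  · rw [term_of_ne_zero hk, logMul_iter]
    push_cast
    rw [natCast_log.symm]
    have hm' : (m.factorial : ℂ) ≠ 0 := by exact_mod_cast hm
    have : (k : ℂ) ^ (2 : ℂ) = (k : ℂ) ^ 2 := by
      rw [← cpow_natCast]; norm_num
    rw [this]
    have hk' : (k : ℂ) ≠ 0 := by exact_mod_cast hk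
    field_simp

lemma abs_lt_two (a : ℕ → ℝ) (h : abscissaOfAbsConv (fun k => (a k : ℂ)) ≤ 1) :
    abscissaOfAbsConv (fun k => (a k : ℂ)) < (2 : ℂ).re := by
  refine lt_of_le_of_lt h ?_
  simp
  exact_mod_cast (by norm_num : (1 : ℝ) < 2)

/-- Taylor coefficients of `H = dslope A 1` at `2`. -/
lemma taylor_coeff (a : ℕ → ℝ) (A : ℂ → ℂ)
    (habs : abscissaOfAbsConv (fun k => (a k : ℂ)) ≤ 1)
    (hAF : ∀ s : ℂ, 1 < s.re → A s = (s - 1) * LSeries (fun k => (a k : ℂ)) s) (m : ℕ) :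
    iteratedDeriv m (dslope A 1) 2 = m.factorial * (-1) ^ m * ((bb a m : ℂ) - A 1) := by
  have hev : dslope A 1 =ᶠ[𝓝 2] (LSeries (fun k => (a k : ℂ)) - fun s => A 1 * (s - 1)⁻¹) := by
    have : {s : ℂ | 1 < s.re} ∈ 𝓝 (2 : ℂ) :=
      (isOpen_lt continuous_const continuous_re).mem_nhds (by simp)
    filter_upwards [this] with s hs
    have hs1 : s ≠ 1 := by rintro rfl; simp at hs
    have hs2 : s - 1 ≠ 0 := sub_ne_zero.2 hs1
    rw [dslope_of_ne _ hs1, slope_def_field, hAF s hs]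
    simp only [Pi.sub_apply]
    field_simp
  rw [hev.iteratedDeriv_eq]
  have h2 := abs_lt_two a habs
  rw [iteratedDeriv_sub]
  · rw [LSeries_iteratedDeriv m h2, bb_eq, iteratedDeriv_const_mul_field]
    have : iteratedDeriv m (fun s : ℂ => (s - 1)⁻¹) 2 = (-1) ^ m * m.factorial := by
      rw [iteratedDeriv_comp_sub_const (f := fun s : ℂ => s⁻¹)]
      simp only
      rw [iteratedDeriv_eq_iterate, iter_deriv_inv]
      norm_num
    rw [this]; ring
  · exact ((LSeries_analyticOnNhd _) 2 h2).contDiffAt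
  · refine ContDiffAt.mul contDiffAt_const (ContDiffAt.inv (by fun_prop) (by norm_num))

lemma coeff_bound (a : ℕ → ℝ) (A : ℂ → ℂ) (hA : Differentiable ℂ A)
    (habs : abscissaOfAbsConv (fun k => (a k : ℂ)) ≤ 1)
    (hAF : ∀ s : ℂ, 1 < s.re → A s = (s - 1) * LSeries (fun k => (a k : ℂ)) s)
    (M : ℝ) (hM : ∀ s ∈ sphere (2 : ℂ) (4 / 3), ‖A s‖ ≤ M) (m : ℕ) :
    ‖(bb a m : ℂ) - A 1‖ ≤ 6 * M * (3 / 4) ^ m := by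
  have hA1 : ‖A 1‖ ≤ M := by
    refine norm_le_of_forall_mem_frontier_norm_le (U := ball (2 : ℂ) (4 / 3)) isBounded_ball
      hA.diffContOnCl ?_ ?_
    · rw [frontier_ball _ (by norm_num)]; exact hM
    · apply subset_closure; simp [dist_eq_norm]; norm_num
  have hH : Differentiable ℂ (dslope A 1) := by
    rw [← differentiableOn_univ] at hA ⊢
    exact (differentiableOn_dslope univ_mem).2 hA
  have hHb : ∀ s ∈ sphere (2 : ℂ) (4 / 3), ‖dslope A 1 s‖ ≤ 6 * M := by
    intro s hs
    have h1 : ‖s - 2‖ = 4 / 3 := by simpa [dist_eq_norm] using hs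
    have h2 : 1 / 3 ≤ ‖s - 1‖ := by
      have := norm_sub_le (s - 1) 1
      rw [show s - 1 - 1 = s - 2 by ring, h1] at this
      simp at this
      linarith
    have hs1 : s ≠ 1 := by rintro rfl; simp at h2; norm_num at h2
    rw [dslope_of_ne _ hs1, slope_def_field, norm_div, div_le_iff₀ (by linarith)]
    have := norm_sub_le (A s) (A 1)
    have := hM s hs
    have hM0 : 0 ≤ M := (norm_nonneg _).trans hA1
    nlinarith
  have := norm_iteratedDeriv_le_of_forall_mem_sphere_norm_le m (by norm_num : (0:ℝ) < 4 / 3)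
    hH.diffContOnCl hHb
  rw [taylor_coeff a A habs hAF, norm_mul, norm_mul] at this
  simp only [norm_natCast, norm_pow, norm_neg, norm_one, one_pow, mul_one] at this
  have hm : (0 : ℝ) < m.factorial := by positivity
  rw [mul_div_assoc] at this
  have := le_of_mul_le_mul_left this hm
  rw [div_eq_mul_inv, ← inv_pow] at this
  norm_num at this ⊢
  exact this

theorem estermann (a : ℕ → ℝ) (ha : ∀ k, 0 ≤ a k) (ha1 : a 1 = 1)
    (A : ℂ → ℂ) (hA : Differentiable ℂ A)
    (habs : abscissaOfAbsConv (fun k => (a k : ℂ)) ≤ 1)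
    (hAF : ∀ s : ℂ, 1 < s.re → A s = (s - 1) * LSeries (fun k => (a k : ℂ)) s)
    (M : ℝ) (hM : ∀ s ∈ sphere (2 : ℂ) (4 / 3), ‖A s‖ ≤ M)
    (β : ℝ) (hβ : 7 / 8 ≤ β) (hβ1 : β < 1) (hAβ : 0 ≤ (A β).re) (m : ℕ) (hm : m ≠ 0) :
    (1 - β) * (1 - 40 * M * (27 / 32) ^ m) ≤ (2 - β) ^ m * (bb a m + 6 * M * (3 / 4) ^ m) := by
  have hb := coeff_bound a A hA habs hAF M hM
  set l := (A 1).re with hl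
  have hM0 : 0 ≤ M := by
    have := (norm_nonneg _).trans (hb 0)
    simp at this; exact this
  have hb' : ∀ m, |bb a m - l| ≤ 6 * M * (3 / 4) ^ m := by
    intro m
    refine le_trans ?_ (hb m)
    have := abs_re_le_norm ((bb a m : ℂ) - A 1)
    simpa using this
  have hbb0 : ∀ m, 0 ≤ bb a m := by
    intro m
    refine tsum_nonneg fun k => ?_
    have := ha k
    have : 0 ≤ Real.log k := Real.log_natCast_nonneg k
    positivity
  have hl0 : 0 ≤ l := by
    have h1 : Tendsto (fun m : ℕ => 6 * M * (3 / 4 : ℝ) ^ m) atTop (𝓝 0) := by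
      have := (tendsto_pow_atTop_nhds_zero_of_lt_one (by norm_num : (0:ℝ) ≤ 3 / 4)
        (by norm_num)).const_mul (6 * M)
      simpa using this
    have : ∀ m : ℕ, -(6 * M * (3 / 4 : ℝ) ^ m) ≤ l := by
      intro m
      have := abs_le.1 (hb' m)
      have := hbb0 m
      linarith
    have h2 := h1.neg
    rw [neg_zero] at h2
    exact le_of_tendsto' h2 this
  have hH : Differentiable ℂ (dslope A 1) := by
    rw [← differentiableOn_univ] at hA ⊢
    exact (differentiableOn_dslope univ_mem).2 hA
  have hsum := Complex.hasSum_taylorSeries_of_entire hH 2 (β : ℂ)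
  have hsum2 : HasSum (fun k : ℕ => (bb a k - l) * (2 - β) ^ k) (dslope A 1 β).re := by
    have := hasSum_re hsum
    convert this using 2 with k
    rw [taylor_coeff a A habs hAF]
    have hk : (k.factorial : ℂ) ≠ 0 := by exact_mod_cast k.factorial_ne_zero
    simp only [smul_eq_mul]
    have : (k.factorial : ℂ)⁻¹ * (((β : ℂ) - 2) ^ k * (k.factorial * (-1) ^ k * ((bb a k : ℂ) - A 1)))
      = (((2 - β) ^ k : ℝ) : ℂ) * ((bb a k : ℂ) - A 1) := by
      rw [show (β : ℂ) - 2 = (-1) * (2 - β) by ring, mul_pow]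
      push_cast
      field_simp
      rw [← pow_mul, mul_comm k 2, pow_mul]; simp
    rw [this, re_ofReal_mul]
    simp [hl, mul_comm]
  have hβne : (β : ℂ) ≠ 1 := by
    intro h
    have : β = 1 := by exact_mod_cast h
    linarith
  have hslope : (dslope A 1 β).re = ((A β).re - l) / (β - 1) := by
    rw [dslope_of_ne _ hβne, slope_def_field]
    have : (β : ℂ) - 1 = ((β - 1 : ℝ) : ℂ) := by push_cast; rfl
    rw [this, div_ofReal_re]
    simp [hl]
  -- lower bound for the sum
  have hm1 : ∑ k ∈ Finset.range m, (bb a k - l) * (2 - β) ^ k ≥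
      (if m = 0 then 0 else 1) - l * (((2 - β) ^ m - 1) / (1 - β)) := by
    have hg : ∑ k ∈ Finset.range m, (2 - β) ^ k = ((2 - β) ^ m - 1) / (1 - β) := by
      rw [geom_sum_eq (by linarith)]
      congr 1; ring
    rw [← hg, Finset.mul_sum]
    simp only [sub_mul, Finset.sum_sub_distrib]
    apply sub_le_sub_right
    have h0 : 1 ≤ bb a 0 := by
      have hs : Summable (fun k : ℕ => a k / (k : ℝ) ^ 2 * (Real.log k ^ 0 / (Nat.factorial 0))) := by
        have := LSeriesSummable_of_abscissaOfAbsConv_lt_re (abs_lt_two a habs)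
        have := this.norm
        convert this using 2 with k
        rcases eq_or_ne k 0 with rfl | hk
        · simp
        · rw [term_of_ne_zero hk]
          have h2 : (k : ℂ) ^ (2 : ℂ) = (k : ℂ) ^ 2 := by
            rw [← cpow_natCast]; norm_num
          rw [h2]
          simp [abs_of_nonneg (ha k)]
      have := hs.le_tsum 1 (fun k _ => by have := ha k; simp; positivity)
      rw [ha1] at this
      simpa [bb] using this
    split_ifs with h
    · subst h; simp
    · have : (bb a 0) * (2 - β) ^ 0 ≤ ∑ k ∈ Finset.range m, bb a k * (2 - β) ^ k :=
        Finset.single_le_sum (f := fun k => bb a k * (2 - β) ^ k)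
          (fun k _ => mul_nonneg (hbb0 k) (pow_nonneg (by linarith) _)) (Finset.mem_range.2 (by omega))
      simp at this; linarith
  have htail : -(40 * M * (27 / 32) ^ m) ≤ ∑' k, (bb a (k + m) - l) * (2 - β) ^ (k + m) := by
    have hs : HasSum (fun k : ℕ => 6 * M * (27 / 32 : ℝ) ^ m * (27 / 32) ^ k)
        (6 * M * (27 / 32 : ℝ) ^ m * (1 - 27 / 32)⁻¹) :=
      (hasSum_geometric_of_lt_one (by norm_num) (by norm_num)).mul_left _
    have hsummable : Summable (fun k => (bb a (k + m) - l) * (2 - β) ^ (k + m)) :=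
      (summable_nat_add_iff m).2 hsum2.summable
    have := hasSum_le (f := fun k : ℕ => -(6 * M * (27 / 32 : ℝ) ^ m * (27 / 32) ^ k)) ?_ hs.neg hsummable.hasSum
    · refine le_trans ?_ this
      have : 0 ≤ M * (27 / 32 : ℝ) ^ m := by positivity
      norm_num
      nlinarith
    · intro k
      have h1 := neg_le_of_abs_le (hb' (k + m))
      have h2 : (2 - β) ^ (k + m) ≤ (9 / 8) ^ (k + m) := pow_le_pow_left₀ (by linarith) (by linarith) _
      have h3 : 0 < (2 - β) ^ (k + m) := pow_pos (by linarith) _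
      have h4 : (27 / 32 : ℝ) ^ m * (27 / 32) ^ k = (3 / 4) ^ (k + m) * (9 / 8) ^ (k + m) := by
        rw [← mul_pow, ← pow_add, add_comm]; norm_num
      have h5 : 0 ≤ 6 * M * (3 / 4) ^ (k + m) := by positivity
      rw [mul_assoc, h4]
      nlinarith [mul_le_mul_of_nonneg_left h2 h5, mul_le_mul_of_nonneg_right h1 h3.le]
  have htot := hsum2.tsum_eq
  rw [← hsum2.summable.sum_add_tsum_nat_add m, hslope] at htot
  have hlb : l ≤ bb a m + 6 * M * (3 / 4) ^ m := by
    have := abs_le.1 (hb' m); linarith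
  have hpow : 0 < (2 - β) ^ m := pow_pos (by linarith) _
  have h1 : (1 - β) * ((if m = 0 then 0 else 1) - 40 * M * (27 / 32) ^ m) ≤ l * (2 - β) ^ m := by
    have e1 : (1 - β) * (((A β).re - l) / (β - 1)) = l - (A β).re := by
      have : β - 1 ≠ 0 := by linarith
      field_simp; ring
    have e2 : (1 - β) * (l * (((2 - β) ^ m - 1) / (1 - β))) = l * ((2 - β) ^ m - 1) := by
      have : 1 - β ≠ 0 := by linarith
      field_simp
    have h3 : (if m = 0 then (0:ℝ) else 1) - l * (((2 - β) ^ m - 1) / (1 - β)) - 40 * M * (27 / 32) ^ m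
      ≤ ((A β).re - l) / (β - 1) := by linarith
    have := mul_le_mul_of_nonneg_left h3 (by linarith : 0 ≤ 1 - β)
    rw [e1] at this
    have e3 : (1 - β) * ((if m = 0 then (0:ℝ) else 1) - l * (((2 - β) ^ m - 1) / (1 - β)) - 40 * M * (27 / 32) ^ m)
      = (1 - β) * ((if m = 0 then (0:ℝ) else 1) - 40 * M * (27 / 32) ^ m) - (1 - β) * (l * (((2 - β) ^ m - 1) / (1 - β))) := by ring
    rw [e3, e2] at this
    linarith
  rw [if_neg hm] at h1
  refine h1.trans ?_
  rw [mul_comm]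
  exact mul_le_mul_of_nonneg_left hlb hpow.le
end

noncomputable section

theorem divisor_bound (ε : ℝ) (hε : 0 < ε) :
    ∃ C : ℝ, 1 ≤ C ∧ ∀ m : ℕ, m ≠ 0 → (m.divisors.card : ℝ) ≤ C * (m : ℝ) ^ ε := by
  have hl2 : 0 < Real.log 2 := Real.log_pos (by norm_num)
  obtain ⟨B, hB⟩ := exists_nat_ge ((2 : ℝ) ^ (1 / ε))
  set K : ℝ := 1 + 1 / (ε * Real.log 2) with hK
  have hK1 : 1 ≤ K := by
    have : 0 < 1 / (ε * Real.log 2) := by positivity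
    linarith
  have hsmall : ∀ (p e : ℕ), 2 ≤ p → ((e : ℝ) + 1) ≤ K * ((p : ℝ) ^ e) ^ ε := by
    intro p e hp
    have h1 : ((2 : ℝ) ^ e) ^ ε ≤ ((p : ℝ) ^ e) ^ ε := by
      have : (2 : ℝ) ≤ p := by exact_mod_cast hp
      gcongr
    have h2 : 1 + ε * Real.log 2 * e ≤ ((2 : ℝ) ^ e) ^ ε := by
      rw [Real.rpow_def_of_pos (by positivity), Real.log_pow]
      have := Real.add_one_le_exp (e * Real.log 2 * ε)
      linarith
    have h3 : (e : ℝ) + 1 ≤ K * (1 + ε * Real.log 2 * e) := by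
      have h4 : 1 / (ε * Real.log 2) * (ε * Real.log 2 * e) = e := by field_simp
      have h5 : 0 ≤ 1 / (ε * Real.log 2) := by positivity
      have h6 : 0 ≤ ε * Real.log 2 * e := by positivity
      rw [hK, add_mul, mul_add (1 / _), h4]
      linarith
    exact h3.trans (mul_le_mul_of_nonneg_left (h2.trans h1) (by linarith))
  have hlarge : ∀ (p e : ℕ), B ≤ p → ((e : ℝ) + 1) ≤ ((p : ℝ) ^ e) ^ ε := by
    intro p e hp
    have h1 : (2 : ℝ) ^ (1 / ε) ≤ p := hB.trans (by exact_mod_cast hp)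
    have h2 : (2 : ℝ) ≤ (p : ℝ) ^ ε := by
      have := Real.rpow_le_rpow (by positivity) h1 hε.le
      rwa [← Real.rpow_mul (by norm_num), one_div_mul_cancel hε.ne', Real.rpow_one] at this
    have h3 : ((p : ℝ) ^ e) ^ ε = ((p : ℝ) ^ ε) ^ e := by
      rw [← Real.rpow_natCast, ← Real.rpow_mul (by positivity), mul_comm, Real.rpow_mul (by positivity),
        Real.rpow_natCast]
    rw [h3]
    have h4 : ((e : ℝ) + 1) ≤ 2 ^ e := by
      have : e + 1 ≤ 2 ^ e := Nat.lt_two_pow_self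
      exact_mod_cast this
    exact h4.trans (pow_le_pow_left₀ (by norm_num) h2 _)
  refine ⟨K ^ B, one_le_pow₀ hK1, fun m hm => ?_⟩
  rw [Nat.card_divisors hm]
  have hprod : (m : ℝ) ^ ε = ∏ p ∈ m.primeFactors, ((p : ℝ) ^ (m.factorization p)) ^ ε := by
    rw [Real.finsetProd_rpow _ _ (fun i _ => by positivity)]
    congr 1
    conv_lhs => rw [← Nat.prod_factorization_pow_eq_self hm]
    rw [Finsupp.prod]; push_cast; rfl
  rw [hprod]
  have h1 : ∏ p ∈ m.primeFactors, (if p < B then K else 1) ≤ K ^ B := by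
    rw [Finset.prod_ite, Finset.prod_const, Finset.prod_const_one, mul_one]
    refine pow_le_pow_right₀ hK1 ?_
    calc _ ≤ (Finset.range B).card := Finset.card_le_card (fun x hx => by simp at hx ⊢; exact hx.2)
      _ = B := Finset.card_range B
  have h2 : 0 ≤ ∏ p ∈ m.primeFactors, ((p : ℝ) ^ (m.factorization p)) ^ ε :=
    Finset.prod_nonneg fun i _ => by positivity
  refine le_trans ?_ (mul_le_mul_of_nonneg_right h1 h2)
  rw [← Finset.prod_mul_distrib]
  push_cast
  refine Finset.prod_le_prod (fun i _ => by positivity) fun p hp => ?_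
  split_ifs with h
  · exact hsmall p _ (Nat.prime_of_mem_primeFactors hp).two_le
  · rw [one_mul]; exact hlarge p _ (not_lt.1 h)

/-- primitive representations as a sum of two squares -/
theorem prim_count (M : ℕ) (hM : M ≠ 0) (S : Finset (ℤ × ℤ))
    (hS : ∀ x ∈ S, x.1 ^ 2 + x.2 ^ 2 = M ∧ IsCoprime x.1 x.2) :
    S.card ≤ 15 * M.divisors.card := by
  classical
  rcases S.eq_empty_or_nonempty with rfl | ⟨⟨u0, w0⟩, h0⟩
  · simp
  obtain ⟨hM0, hc0⟩ := hS _ h0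
  simp only at hM0 hc0
  have cop : ∀ u w : ℤ, u ^ 2 + w ^ 2 = M → IsCoprime u w → IsCoprime u (M : ℤ) ∧ IsCoprime w (M : ℤ) := by
    intro u w h hc
    constructor
    · rw [← h, pow_two u]
      exact (IsCoprime.mul_add_left_right_iff).2 hc.pow_right
    · rw [← h, pow_two w]
      exact (IsCoprime.add_mul_left_right_iff).2 hc.symm.pow_right
  let f : ℤ × ℤ → ℕ := fun x => Int.gcd (x.1 * w0 - u0 * x.2) M
  have himg : S.image f ⊆ M.divisors := by
    intro g hg
    obtain ⟨x, _, rfl⟩ := Finset.mem_image.1 hg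
    rw [Nat.mem_divisors]
    exact ⟨by simpa using Int.gcd_dvd_natAbs_right (x.1 * w0 - u0 * x.2) M, hM⟩
  refine (Finset.card_le_mul_card_image S 15 ?_).trans (Nat.mul_le_mul_left _ (Finset.card_le_card himg))
  intro g hg
  obtain ⟨⟨u', w'⟩, hx', hgx⟩ := Finset.mem_image.1 hg
  obtain ⟨hM', hc'⟩ := hS _ hx'
  simp only at hM' hc'
  have hMz : (M : ℤ) ≠ 0 := by exact_mod_cast hM
  have hMpos : (0 : ℤ) < M := by positivity
  -- properties of elements with gcd `g`
  have prop : ∀ u w : ℤ, u ^ 2 + w ^ 2 = M → IsCoprime u w → f (u, w) = g →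
      (g : ℤ) ∣ u * w0 - u0 * w ∧ ∃ h : ℤ, (M : ℤ) = g * h ∧ h ∣ u * w0 + u0 * w := by
    intro u w h hc hf
    have h1 : (g : ℤ) ∣ u * w0 - u0 * w := by rw [← hf]; exact Int.gcd_dvd_left ..
    have h2 : (g : ℤ) ∣ M := by rw [← hf]; exact Int.gcd_dvd_right ..
    refine ⟨h1, ?_⟩
    obtain ⟨k, hk⟩ := h2
    refine ⟨k, hk, ?_⟩
    obtain ⟨A, hA⟩ := h1
    have hg0 : (g : ℤ) ≠ 0 := by rintro h0; rw [h0] at hk; simp at hk; omega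
    have hcop : IsCoprime k A := by
      rw [Int.isCoprime_iff_gcd_eq_one]
      have e : Int.gcd (u * w0 - u0 * w) M = g := hf
      rw [hA, hk, Int.gcd_mul_left, Int.natAbs_natCast] at e
      have hg0' : 0 < g := by omega
      rw [Int.gcd_comm]
      exact Nat.eq_of_mul_eq_mul_left hg0' (by rw [e, mul_one])
    refine hcop.dvd_of_dvd_mul_left (y := A) ?_
    refine ⟨u ^ 2 - u0 ^ 2, ?_⟩
    apply mul_left_cancel₀ hg0
    have : (u * w0 - u0 * w) * (u * w0 + u0 * w) = M * (u ^ 2 - u0 ^ 2) := by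
      linear_combination u ^ 2 * hM0 - u0 ^ 2 * h
    rw [hA] at this
    linear_combination this + (u ^ 2 - u0 ^ 2) * hk
  obtain ⟨p1, h, hMg, p2⟩ := prop u' w' hM' hc' hgx
  have hg0 : (g : ℤ) ≠ 0 := by rintro h0; rw [h0] at hMg; simp at hMg; omega
  have div2 : ∀ u w : ℤ, u ^ 2 + w ^ 2 = M → IsCoprime u w → f (u, w) = g →
      (M : ℤ) ∣ 2 * (u * w' - u' * w) := by
    intro u w hh hc hf
    obtain ⟨q1, h', hMg', q2⟩ := prop u w hh hc hf
    have e : h' = h := mul_left_cancel₀ hg0 (hMg'.symm.trans hMg)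
    subst e
    have hw0 := (cop u0 w0 hM0 hc0).2
    have hgM : (g : ℤ) ∣ M := ⟨_, hMg⟩
    have hhM : h' ∣ (M : ℤ) := ⟨_, by rw [hMg, mul_comm]⟩
    have d1 : (g : ℤ) ∣ u * w' - u' * w := by
      refine (IsCoprime.of_isCoprime_of_dvd_right hw0 hgM).symm.dvd_of_dvd_mul_left (y := w0) ?_
      have := dvd_sub (q1.mul_left w') (p1.mul_left w)
      convert this using 1; ring
    have d2 : h' ∣ u * w' - u' * w := by
      refine (IsCoprime.of_isCoprime_of_dvd_right hw0 hhM).symm.dvd_of_dvd_mul_left (y := w0) ?_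
      have := dvd_sub (q2.mul_left w') (p2.mul_left w)
      convert this using 1; ring
    have d3 : (Int.gcd g h' : ℤ) ∣ 2 := by
      have a1 : (Int.gcd g h' : ℤ) ∣ g := Int.gcd_dvd_left ..
      have a2 : (Int.gcd g h' : ℤ) ∣ h' := Int.gcd_dvd_right ..
      have a3 : (Int.gcd g h' : ℤ) ∣ u * w0 * 2 := by
        have := dvd_add (a1.trans q1) (a2.trans q2)
        have e : u * w0 * 2 = u * w0 - u0 * w + (u * w0 + u0 * w) := by ring
        rw [e]; exact this
      have hcu : IsCoprime (u * w0) (Int.gcd g h' : ℤ) :=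
        IsCoprime.of_isCoprime_of_dvd_right (((cop u w hh hc).1).mul_left hw0) (a1.trans hgM)
      exact hcu.symm.dvd_of_dvd_mul_left a3
    have d4 : (Int.lcm g h' : ℤ) ∣ u * w' - u' * w := Int.coe_lcm_dvd d1 d2
    have d5 : (M : ℤ) ∣ (Int.gcd g h' : ℤ) * (Int.lcm g h' : ℤ) := by
      have := Int.gcd_mul_lcm (g : ℤ) h'
      rw [hMg]
      have e2 : ((Int.gcd g h' : ℤ) * (Int.lcm g h' : ℤ)) = ((g * h').natAbs : ℤ) := by
        rw [Int.natAbs_mul]; exact_mod_cast this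
      rw [e2]
      exact Int.dvd_natAbs_self
    exact d5.trans (mul_dvd_mul d3 d4)
  -- the fibre is small
  let F : ℤ × ℤ → ℤ × ℤ := fun x =>
    (2 * (x.1 * w' - u' * x.2) / M, Int.sign (x.1 * u' + x.2 * w'))
  have hcard : (Finset.Icc (-2 : ℤ) 2 ×ˢ Finset.Icc (-1 : ℤ) 1).card = 15 := by decide
  rw [← hcard]
  refine Finset.card_le_card_of_injOn F ?_ ?_
  · rintro ⟨u, w⟩ hx
    simp only [Finset.coe_filter, Set.mem_ofPred_eq] at hx
    obtain ⟨hh, hc⟩ := hS _ hx.1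
    simp only at hh hc
    obtain ⟨q, hq⟩ := div2 u w hh hc hx.2
    simp only [F, hq, Int.mul_ediv_cancel_left q hMz, Finset.coe_product, Set.mem_prod,
      Finset.mem_coe, Finset.mem_Icc]
    have hX : (u * w' - u' * w) ^ 2 ≤ (M : ℤ) ^ 2 := by
      have : (u * w' - u' * w) ^ 2 + (u * u' + w * w') ^ 2 = (M : ℤ) ^ 2 := by
        have : (M : ℤ) ^ 2 = (u ^ 2 + w ^ 2) * (u' ^ 2 + w' ^ 2) := by rw [hh, hM']; ring
        rw [this]; ring
      nlinarith [sq_nonneg (u * u' + w * w')]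
    have hq2 : q ^ 2 ≤ 2 ^ 2 := by
      have : (M : ℤ) ^ 2 * q ^ 2 ≤ (M : ℤ) ^ 2 * 2 ^ 2 := by
        calc (M : ℤ) ^ 2 * q ^ 2 = (2 * (u * w' - u' * w)) ^ 2 := by rw [hq]; ring
          _ ≤ _ := by nlinarith
      exact le_of_mul_le_mul_left this (by positivity)
    have := abs_le.1 (abs_le_of_sq_le_sq hq2 (by norm_num))
    refine ⟨this, ?_⟩
    rcases lt_trichotomy (u * u' + w * w') 0 with h | h | h
    · rw [Int.sign_eq_neg_one_of_neg h]; norm_num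
    · rw [h]; norm_num
    · rw [Int.sign_eq_one_of_pos h]; norm_num
  · rintro ⟨u, w⟩ hx ⟨u2, w2⟩ hx2 hF
    simp only [Finset.coe_filter, Set.mem_ofPred_eq] at hx hx2
    obtain ⟨hh, hc⟩ := hS _ hx.1
    obtain ⟨hh2, hc2⟩ := hS _ hx2.1
    simp only at hh hc hh2 hc2
    obtain ⟨q, hq⟩ := div2 u w hh hc hx.2
    obtain ⟨q2, hq2⟩ := div2 u2 w2 hh2 hc2 hx2.2
    simp only [F, hq, hq2, Int.mul_ediv_cancel_left _ hMz, Prod.mk.injEq] at hF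
    obtain ⟨rfl, hsign⟩ := hF
    have hX : u * w' - u' * w = u2 * w' - u' * w2 := by linarith
    have id1 : ∀ u w : ℤ, u ^ 2 + w ^ 2 = M → (u * w' - u' * w) ^ 2 + (u * u' + w * w') ^ 2 = (M : ℤ) ^ 2 := by
      intro u w hh
      have : (M : ℤ) ^ 2 = (u ^ 2 + w ^ 2) * (u' ^ 2 + w' ^ 2) := by rw [hh, hM']; ring
      rw [this]; ring
    have hY2 : (u * u' + w * w') ^ 2 = (u2 * u' + w2 * w') ^ 2 := by
      have := id1 u w hh
      have := id1 u2 w2 hh2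
      rw [hX] at *
      linarith
    have hY : u * u' + w * w' = u2 * u' + w2 * w' := by
      rw [← Int.sign_mul_natAbs (u * u' + w * w'), ← Int.sign_mul_natAbs (u2 * u' + w2 * w'), hsign,
        Int.natAbs_eq_iff_sq_eq.2 hY2]
    have e1 : (M : ℤ) * u = M * u2 := by
      rw [← hM']; linear_combination w' * hX + u' * hY
    have e2 : (M : ℤ) * w = M * w2 := by
      rw [← hM']; linear_combination -u' * hX + w' * hY
    rw [mul_left_cancel₀ hMz e1, mul_left_cancel₀ hMz e2]

end

noncomputable section

theorem rep_count (M : ℕ) (hM : M ≠ 0) (S : Finset (ℤ × ℤ))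
    (hS : ∀ x ∈ S, x.1 ^ 2 + x.2 ^ 2 = M) :
    S.card ≤ 15 * M.divisors.card ^ 2 := by
  classical
  let f : ℤ × ℤ → ℕ := fun x => Int.gcd x.1 x.2
  have key : ∀ x ∈ S, (f x : ℤ) ^ 2 ∣ M := by
    intro x hx
    rw [← hS x hx]
    exact dvd_add (pow_dvd_pow_of_dvd (Int.gcd_dvd_left ..) 2) (pow_dvd_pow_of_dvd (Int.gcd_dvd_right ..) 2)
  have himg : S.image f ⊆ M.divisors := by
    intro g hg
    obtain ⟨x, hx, rfl⟩ := Finset.mem_image.1 hg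
    rw [Nat.mem_divisors]
    refine ⟨?_, hM⟩
    have : (f x : ℤ) ∣ M := (dvd_pow_self _ (by norm_num)).trans (key x hx)
    exact_mod_cast this
  have h1 : S.card ≤ (15 * M.divisors.card) * (S.image f).card := by
    refine Finset.card_le_mul_card_image S _ ?_
    intro c hc
    obtain ⟨y, hy, hyc⟩ := Finset.mem_image.1 hc
    have hcM := key y hy
    rw [hyc] at hcM
    obtain ⟨M', hM'⟩ : c ^ 2 ∣ M := by exact_mod_cast hcM
    have hc0 : c ≠ 0 := by rintro rfl; simp at hM'; exact hM hM'
    have hc0' : (c : ℤ) ≠ 0 := by exact_mod_cast hc0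
    have hM'0 : M' ≠ 0 := by rintro rfl; simp at hM'; exact hM hM'
    let F : ℤ × ℤ → ℤ × ℤ := fun x => (x.1 / c, x.2 / c)
    have hinj : Set.InjOn F ({x ∈ S | f x = c} : Finset (ℤ × ℤ)) := by
      rintro ⟨u, w⟩ hx ⟨u2, w2⟩ hx2 hF
      simp only [Finset.coe_filter, Set.mem_ofPred_eq] at hx hx2
      simp only [F, Prod.mk.injEq] at hF
      have a1 : (c : ℤ) ∣ u := by rw [← hx.2]; exact Int.gcd_dvd_left ..
      have a2 : (c : ℤ) ∣ w := by rw [← hx.2]; exact Int.gcd_dvd_right ..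
      have b1 : (c : ℤ) ∣ u2 := by rw [← hx2.2]; exact Int.gcd_dvd_left ..
      have b2 : (c : ℤ) ∣ w2 := by rw [← hx2.2]; exact Int.gcd_dvd_right ..
      rw [← Int.mul_ediv_cancel' a1, ← Int.mul_ediv_cancel' a2, ← Int.mul_ediv_cancel' b1,
        ← Int.mul_ediv_cancel' b2, hF.1, hF.2]
    rw [← Finset.card_image_of_injOn hinj]
    refine (prim_count M' hM'0 _ ?_).trans ?_
    · intro z hz
      obtain ⟨⟨u, w⟩, hx, rfl⟩ := Finset.mem_image.1 hz
      rw [Finset.mem_filter] at hx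
      have a1 : (c : ℤ) ∣ u := by rw [← hx.2]; exact Int.gcd_dvd_left ..
      have a2 : (c : ℤ) ∣ w := by rw [← hx.2]; exact Int.gcd_dvd_right ..
      have hu := Int.mul_ediv_cancel' a1
      have hw := Int.mul_ediv_cancel' a2
      have hs := hS _ hx.1
      simp only [F] at *
      constructor
      · have : (c : ℤ) ^ 2 * ((u / c) ^ 2 + (w / c) ^ 2) = c ^ 2 * M' := by
          calc (c : ℤ) ^ 2 * ((u / c) ^ 2 + (w / c) ^ 2) = (c * (u / c)) ^ 2 + (c * (w / c)) ^ 2 := by ring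
            _ = (M : ℤ) := by rw [hu, hw, hs]
            _ = _ := by rw [hM']; push_cast; ring
        exact mul_left_cancel₀ (pow_ne_zero 2 hc0') this
      · rw [Int.isCoprime_iff_gcd_eq_one]
        have h3 : Int.gcd u w = c := hx.2
        rw [← hu, ← hw, Int.gcd_mul_left, Int.natAbs_natCast] at h3
        exact Nat.eq_of_mul_eq_mul_left (Nat.pos_of_ne_zero hc0) (by rw [h3, mul_one])
    · refine Nat.mul_le_mul_left _ (Finset.card_le_card (Nat.divisors_subset_of_dvd hM ⟨c ^ 2, ?_⟩))
      rw [hM', mul_comm]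
  calc _ ≤ _ := h1
    _ ≤ (15 * M.divisors.card) * M.divisors.card := Nat.mul_le_mul_left _ (Finset.card_le_card himg)
    _ = _ := by ring

/-- the sparse set -/
def TT (n d : ℤ) : Set ℕ := {a | 0 < a ∧ ∃ u v : ℤ, v ≠ 0 ∧
  (u ^ 2 - d * v ^ 2 = 4 * (a : ℤ) ^ 2 ∨ u ^ 2 - d * v ^ 2 = -(4 * (a : ℤ) ^ 2)) ∧
    (n - 2) * v ^ 2 ≤ (a : ℤ) ^ 2}

lemma fibre_count (M : ℕ) (hM : M ≠ 0) (S : Finset ℕ)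
    (hS : ∀ a ∈ S, ∃ u : ℤ, (u ^ 2 - M = 4 * (a : ℤ) ^ 2 ∨ u ^ 2 - M = -(4 * (a : ℤ) ^ 2))) :
    S.card ≤ 16 * M.divisors.card ^ 2 := by
  classical
  choose! u hu using hS
  let S1 := S.filter (fun a => (u a) ^ 2 - M = 4 * (a : ℤ) ^ 2)
  let S2 := S.filter (fun a => ¬ ((u a) ^ 2 - M = 4 * (a : ℤ) ^ 2))
  have hcard : S.card = S1.card + S2.card := (Finset.card_filter_add_card_filter_not _).symm
  have h1 : S1.card ≤ M.divisors.card := by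
    refine Finset.card_le_card_of_injOn (fun a => (u a).natAbs + 2 * a) ?_ ?_
    · intro a ha
      simp only [S1, Finset.coe_filter, Set.mem_ofPred_eq] at ha
      simp only [Finset.mem_coe, Nat.mem_divisors]
      refine ⟨?_, hM⟩
      have : (((u a).natAbs + 2 * a : ℕ) : ℤ) ∣ M := by
        refine ⟨|u a| - 2 * a, ?_⟩
        push_cast
        have := sq_abs (u a)
        linear_combination -ha.2 - this
      exact_mod_cast this
    · intro a ha b hb hab
      simp only [S1, Finset.coe_filter, Set.mem_ofPred_eq] at ha hb
      have hab' : |u a| + 2 * (a : ℤ) = |u b| + 2 * (b : ℤ) := by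
        have : (((u a).natAbs + 2 * a : ℕ) : ℤ) = (((u b).natAbs + 2 * b : ℕ) : ℤ) := by
          exact_mod_cast hab
        push_cast at this; exact this
      have ea := sq_abs (u a)
      have eb := sq_abs (u b)
      have hpos : |u a| + 2 * (a : ℤ) ≠ 0 := by
        intro h0
        have h1 : |u a| = 0 := by have := abs_nonneg (u a); omega
        have h2 : (a : ℤ) = 0 := by omega
        rw [← ea, h1, h2] at ha
        simp at ha; omega
      have e : (|u a| + 2 * (a : ℤ)) * (|u a| - 2 * (a : ℤ)) = (|u a| + 2 * (a : ℤ)) * (|u b| - 2 * (b : ℤ)) := by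
        conv_rhs => rw [hab']
        linear_combination ha.2 - hb.2 + ea - eb
      have := mul_left_cancel₀ hpos e
      omega
  have h2 : S2.card ≤ 15 * M.divisors.card ^ 2 := by
    have hinj : Set.InjOn (fun a : ℕ => (u a, 2 * (a : ℤ))) (S2 : Set ℕ) := by
      intro a _ b _ hab
      simp at hab; exact hab.2
    rw [← Finset.card_image_of_injOn hinj]
    refine rep_count M hM _ ?_
    intro z hz
    obtain ⟨a, ha, rfl⟩ := Finset.mem_image.1 hz
    rw [Finset.mem_filter] at ha
    have := (hu a ha.1).resolve_left ha.2
    simp only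
    linear_combination this
  have : M.divisors.card ≤ M.divisors.card ^ 2 := Nat.le_self_pow (by norm_num) _
  omega

theorem sparse_sum : ∃ C : ℝ, 0 < C ∧ ∀ n σ d : ℤ, (σ = 1 ∨ σ = -1) → d = n ^ 2 - 4 * σ → 3 ≤ n →
    ∀ S : Finset ℕ, (∀ a ∈ S, a ∈ TT n d) →
      ∑ a ∈ S, (a : ℝ) ^ (-(1 + 1 / 2000) : ℝ) ≤ C * (n : ℝ) ^ (-(1 / 4) : ℝ) := by
  classical
  obtain ⟨C0, hC0, hdiv⟩ := divisor_bound (1 / 16000) (by norm_num)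
  have hsum : Summable (fun k : ℕ => (k : ℝ) ^ (-(1 + 1 / 4000) : ℝ)) :=
    Real.summable_nat_rpow.2 (by norm_num)
  set Z := ∑' k : ℕ, (k : ℝ) ^ (-(1 + 1 / 4000) : ℝ) with hZ
  have hZ0 : 0 ≤ Z := tsum_nonneg fun k => by positivity
  refine ⟨16 * C0 ^ 2 * 2 * 3 * (Z + 1), by positivity, ?_⟩
  intro n σ d hσ hd hn S hS
  have hd1 : 0 < d := by rcases hσ with h | h <;> subst h <;> nlinarith
  have hd2 : d ≤ 2 * n ^ 2 := by rcases hσ with h | h <;> subst h <;> nlinarith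
  have hn' : (3 : ℝ) ≤ n := by exact_mod_cast hn
  have hT : ∀ a ∈ S, ∃ v : ℕ, 0 < v ∧ (n - 2) * (v : ℤ) ^ 2 ≤ (a : ℤ) ^ 2 ∧ ∃ u : ℤ,
      (u ^ 2 - d * (v : ℤ) ^ 2 = 4 * (a : ℤ) ^ 2 ∨ u ^ 2 - d * (v : ℤ) ^ 2 = -(4 * (a : ℤ) ^ 2)) := by
    intro a ha
    obtain ⟨_, u, v, hv, h1, h2⟩ := hS a ha
    refine ⟨v.natAbs, by omega, ?_, u, ?_⟩ <;> simpa using by assumption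
  choose! v hv0 hv1 hv2 using hT
  -- bound on each fibre
  have hfib : ∀ k ∈ S.image v, ∑ a ∈ S with v a = k, (a : ℝ) ^ (-(1 + 1 / 2000) : ℝ) ≤
      16 * C0 ^ 2 * 2 * 3 * (n : ℝ) ^ (-(1 / 4) : ℝ) * (k : ℝ) ^ (-(1 + 1 / 4000) : ℝ) := by
    intro k hk
    obtain ⟨a0, ha0, hk0⟩ := Finset.mem_image.1 hk
    have hkpos : 0 < k := hk0 ▸ hv0 a0 ha0
    have hk1 : (1 : ℝ) ≤ k := by exact_mod_cast hkpos
    have hMpos : 0 < d * (k : ℤ) ^ 2 := by positivity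
    obtain ⟨M, hM⟩ : ∃ M : ℕ, (M : ℤ) = d * (k : ℤ) ^ 2 := ⟨(d * (k : ℤ) ^ 2).toNat, by omega⟩
    have hM0 : M ≠ 0 := by omega
    have hcount : (S.filter (fun a => v a = k)).card ≤ 16 * M.divisors.card ^ 2 := by
      refine fibre_count M hM0 _ ?_
      intro a ha
      rw [Finset.mem_filter] at ha
      have := hv2 a ha.1
      rw [ha.2, ← hM] at this
      exact this
    have hMle : (M : ℝ) ≤ 2 * (n : ℝ) ^ 2 * (k : ℝ) ^ 2 := by
      have : (M : ℤ) ≤ 2 * n ^ 2 * (k : ℤ) ^ 2 := by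
        rw [hM]; exact mul_le_mul_of_nonneg_right hd2 (by positivity)
      exact_mod_cast this
    have hcount2 : ((S.filter (fun a => v a = k)).card : ℝ) ≤
        16 * C0 ^ 2 * 2 * ((n : ℝ) ^ (1 / 4000 : ℝ) * (k : ℝ) ^ (1 / 4000 : ℝ)) := by
      have h1 : ((S.filter (fun a => v a = k)).card : ℝ) ≤ 16 * (M.divisors.card : ℝ) ^ 2 := by
        exact_mod_cast hcount
      have h2 := hdiv M hM0
      have h3 : (M : ℝ) ^ (1 / 16000 : ℝ) ≤ (2 * (n : ℝ) ^ 2 * (k : ℝ) ^ 2) ^ (1 / 16000 : ℝ) :=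
        Real.rpow_le_rpow (by positivity) hMle (by norm_num)
      have h4 : ((2 * (n : ℝ) ^ 2 * (k : ℝ) ^ 2) ^ (1 / 16000 : ℝ)) ^ 2 ≤
          2 * ((n : ℝ) ^ (1 / 4000 : ℝ) * (k : ℝ) ^ (1 / 4000 : ℝ)) := by
        have hnn : (0 : ℝ) ≤ n := by linarith
        rw [Real.mul_rpow (by positivity) (by positivity), Real.mul_rpow (by positivity) (by positivity),
          mul_pow, mul_pow, ← Real.rpow_natCast, ← Real.rpow_natCast, ← Real.rpow_natCast,
          ← Real.rpow_natCast, ← Real.rpow_natCast, ← Real.rpow_mul (by positivity), ← Real.rpow_mul (by positivity),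
          ← Real.rpow_mul (by positivity), ← Real.rpow_mul (by positivity), ← Real.rpow_mul (by positivity),
          mul_assoc]
        have h5 : (2 : ℝ) ^ (1 / 16000 * ((2 : ℕ) : ℝ)) ≤ 2 := by
          conv_rhs => rw [← Real.rpow_one 2]
          exact Real.rpow_le_rpow_of_exponent_le (by norm_num) (by norm_num)
        have e1 : ((2 : ℕ) : ℝ) * (1 / 16000 * ((2 : ℕ) : ℝ)) = 1 / 4000 := by norm_num
        have e2 : ((2 : ℕ) : ℝ) * (1 / 16000) * ((2 : ℕ) : ℝ) = 1 / 4000 := by norm_num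
        simp only [e1, e2, mul_assoc] at *
        exact mul_le_mul_of_nonneg_right h5 (by positivity)
      calc _ ≤ _ := h1
        _ ≤ 16 * (C0 * (2 * (n : ℝ) ^ 2 * (k : ℝ) ^ 2) ^ (1 / 16000 : ℝ)) ^ 2 := by
          have : (M.divisors.card : ℝ) ≤ C0 * (2 * (n : ℝ) ^ 2 * (k : ℝ) ^ 2) ^ (1 / 16000 : ℝ) :=
            h2.trans (mul_le_mul_of_nonneg_left h3 (by linarith))
          gcongr
        _ = 16 * C0 ^ 2 * (((2 * (n : ℝ) ^ 2 * (k : ℝ) ^ 2) ^ (1 / 16000 : ℝ)) ^ 2) := by ring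
        _ ≤ 16 * C0 ^ 2 * (2 * ((n : ℝ) ^ (1 / 4000 : ℝ) * (k : ℝ) ^ (1 / 4000 : ℝ))) :=
          mul_le_mul_of_nonneg_left h4 (by positivity)
        _ = _ := by ring
    have hterm : ∀ a ∈ S.filter (fun a => v a = k), (a : ℝ) ^ (-(1 + 1 / 2000) : ℝ) ≤
        3 * (n : ℝ) ^ (-(1 / 2) : ℝ) * (k : ℝ) ^ (-(1 + 1 / 2000) : ℝ) := by
      intro a ha
      rw [Finset.mem_filter] at ha
      have h1 := hv1 a ha.1
      rw [ha.2] at h1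
      have h2 : ((n : ℝ) / 3) * (k : ℝ) ^ 2 ≤ (a : ℝ) ^ 2 := by
        have h3 : ((n : ℝ) - 2) * (k : ℝ) ^ 2 ≤ (a : ℝ) ^ 2 := by exact_mod_cast h1
        have : (n : ℝ) / 3 ≤ n - 2 := by linarith
        have := mul_le_mul_of_nonneg_right this (sq_nonneg (k : ℝ))
        linarith
      have h4 : ((a : ℝ) ^ 2) ^ (-(1 + 1 / 2000) / 2 : ℝ) ≤ (((n : ℝ) / 3) * (k : ℝ) ^ 2) ^ (-(1 + 1 / 2000) / 2 : ℝ) :=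
        Real.rpow_le_rpow_of_nonpos (by positivity) h2 (by norm_num)
      have e1 : ∀ x : ℝ, 0 ≤ x → (x ^ 2) ^ (-(1 + 1 / 2000) / 2 : ℝ) = x ^ (-(1 + 1 / 2000) : ℝ) := by
        intro x hx
        rw [← Real.rpow_natCast, ← Real.rpow_mul hx]; congr 1; norm_num
      rw [Real.mul_rpow (by positivity) (by positivity), e1 _ (by positivity), e1 _ (by positivity)] at h4
      refine h4.trans (mul_le_mul_of_nonneg_right ?_ (by positivity))
      rw [Real.div_rpow (by linarith) (by norm_num), div_eq_mul_inv, ← Real.rpow_neg (by norm_num), mul_comm]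
      apply mul_le_mul
      · conv_rhs => rw [← Real.rpow_one 3]
        exact Real.rpow_le_rpow_of_exponent_le (by norm_num) (by norm_num)
      · exact Real.rpow_le_rpow_of_exponent_le (by linarith) (by norm_num)
      · exact Real.rpow_nonneg (by linarith) _
      · norm_num
    calc _ ≤ ∑ a ∈ S with v a = k, 3 * (n : ℝ) ^ (-(1 / 2) : ℝ) * (k : ℝ) ^ (-(1 + 1 / 2000) : ℝ) :=
          Finset.sum_le_sum hterm
      _ = ((S.filter (fun a => v a = k)).card : ℝ) * (3 * (n : ℝ) ^ (-(1 / 2) : ℝ) * (k : ℝ) ^ (-(1 + 1 / 2000) : ℝ)) := by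
          rw [Finset.sum_const, nsmul_eq_mul]
      _ ≤ (16 * C0 ^ 2 * 2 * ((n : ℝ) ^ (1 / 4000 : ℝ) * (k : ℝ) ^ (1 / 4000 : ℝ))) *
          (3 * (n : ℝ) ^ (-(1 / 2) : ℝ) * (k : ℝ) ^ (-(1 + 1 / 2000) : ℝ)) := by
          apply mul_le_mul_of_nonneg_right hcount2
          have : (0 : ℝ) ≤ (n : ℝ) ^ (-(1 / 2) : ℝ) := Real.rpow_nonneg (by linarith) _
          positivity
      _ = 16 * C0 ^ 2 * 2 * 3 * ((n : ℝ) ^ (1 / 4000 : ℝ) * (n : ℝ) ^ (-(1 / 2) : ℝ)) *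
          ((k : ℝ) ^ (1 / 4000 : ℝ) * (k : ℝ) ^ (-(1 + 1 / 2000) : ℝ)) := by ring
      _ ≤ _ := by
        rw [← Real.rpow_add (by linarith), ← Real.rpow_add (by linarith)]
        have e : (1 / 4000 + -(1 + 1 / 2000) : ℝ) = -(1 + 1 / 4000) := by norm_num
        rw [e]
        have : (n : ℝ) ^ (1 / 4000 + -(1 / 2) : ℝ) ≤ (n : ℝ) ^ (-(1 / 4) : ℝ) :=
          Real.rpow_le_rpow_of_exponent_le (by linarith) (by norm_num)
        gcongr
  rw [← Finset.sum_fiberwise_of_maps_to (t := S.image v) (g := v)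
    (fun a ha => Finset.mem_image_of_mem v ha)]
  refine (Finset.sum_le_sum hfib).trans ?_
  rw [← Finset.mul_sum]
  have h1 : ∑ k ∈ S.image v, (k : ℝ) ^ (-(1 + 1 / 4000) : ℝ) ≤ Z :=
    hsum.sum_le_tsum _ (fun k _ => by positivity)
  have h2 : 0 ≤ (n : ℝ) ^ (-(1 / 4) : ℝ) := Real.rpow_nonneg (by linarith) _
  calc _ ≤ 16 * C0 ^ 2 * 2 * 3 * (n : ℝ) ^ (-(1 / 4) : ℝ) * (Z + 1) := by
        apply mul_le_mul_of_nonneg_left (by linarith); positivity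
    _ = _ := by ring
end

noncomputable section
open Complex Filter Topology Metric LSeries

lemma log_pow_bound (k m : ℕ) (hk : 0 < k) (κ : ℝ) (hκ : 0 < κ) :
    Real.log k ^ m / m.factorial ≤ (k : ℝ) ^ κ * (1 / κ) ^ m := by
  have hk' : (0 : ℝ) < k := by exact_mod_cast hk
  have h0 : 0 ≤ Real.log k := Real.log_natCast_nonneg k
  have h := Real.pow_div_factorial_le_exp (x := κ * Real.log k) (by positivity) m
  rw [Real.rpow_def_of_pos hk', mul_comm (Real.log k)]
  calc Real.log k ^ m / m.factorial = ((κ * Real.log k) ^ m / m.factorial) * (1 / κ) ^ m := by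
        rw [mul_pow, one_div, inv_pow]; field_simp
    _ ≤ _ := mul_le_mul_of_nonneg_right h (by positivity)

theorem bb_upper : ∃ K : ℝ, 0 < K ∧ ∀ C : ℝ, 0 < C → ∀ n σ d : ℤ, (σ = 1 ∨ σ = -1) →
    d = n ^ 2 - 4 * σ → 3 ≤ n → ∀ a : ℕ → ℝ, (∀ k, 0 ≤ a k) →
    (∀ k, 0 < k → a k ≤ C * (k : ℝ) ^ (1 / 2000 : ℝ)) → (∀ k, a k ≠ 0 → IsSquare k ∨ k ∈ TT n d) →
    ∀ m, bb a m ≤ C * K * ((4 / 5) ^ m + (n : ℝ) ^ (-(1 / 4) : ℝ) * (1000 / 999) ^ m) := by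
  classical
  obtain ⟨K1, hK1, hsp⟩ := sparse_sum
  have hsum : Summable (fun k : ℕ => (k : ℝ) ^ (-(3 / 2 - 1 / 1000) : ℝ)) :=
    Real.summable_nat_rpow.2 (by norm_num)
  set Z := ∑' k : ℕ, (k : ℝ) ^ (-(3 / 2 - 1 / 1000) : ℝ) with hZ
  have hZ0 : 0 ≤ Z := tsum_nonneg fun k => by positivity
  refine ⟨K1 + Z, by positivity, ?_⟩
  intro C hC n σ d hσ hd hn a ha0 haC hsupp m
  have hn' : (3 : ℝ) ≤ n := by exact_mod_cast hn
  have hnn : 0 ≤ (n : ℝ) ^ (-(1 / 4) : ℝ) := Real.rpow_nonneg (by linarith) _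
  have hterm0 : ∀ k : ℕ, 0 ≤ a k / (k : ℝ) ^ 2 * (Real.log k ^ m / m.factorial) := by
    intro k
    have := ha0 k
    have : 0 ≤ Real.log k := Real.log_natCast_nonneg k
    positivity
  have hgen : ∀ (κ : ℝ), 0 < κ → ∀ k : ℕ, 0 < k → a k / (k : ℝ) ^ 2 * (Real.log k ^ m / m.factorial) ≤
      C * (1 / κ) ^ m * (k : ℝ) ^ (1 / 2000 - 2 + κ) := by
    intro κ hκ k hk
    have hk' : (0 : ℝ) < k := by exact_mod_cast hk
    have h1 := log_pow_bound k m hk κ hκ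
    have h2 := haC k hk
    have h3 : 0 ≤ Real.log k := Real.log_natCast_nonneg k
    calc _ ≤ (C * (k : ℝ) ^ (1 / 2000 : ℝ)) / (k : ℝ) ^ 2 * ((k : ℝ) ^ κ * (1 / κ) ^ m) := by gcongr
      _ = _ := by
        rw [Real.rpow_add hk', Real.rpow_sub hk', Real.rpow_two]; ring
  refine tsum_le_of_sum_le' ?_ ?_
  · positivity
  intro S
  have hsplit : ∑ k ∈ S, a k / (k : ℝ) ^ 2 * (Real.log k ^ m / m.factorial) ≤
      ∑ k ∈ S with (IsSquare k ∧ 0 < k), C * (4 / 5) ^ m * (k : ℝ) ^ (-(3 / 4 - 1 / 2000) : ℝ) +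
      ∑ k ∈ S with k ∈ TT n d, C * (1000 / 999) ^ m * (k : ℝ) ^ (-(1 + 1 / 2000) : ℝ) := by
    rw [Finset.sum_filter, Finset.sum_filter, ← Finset.sum_add_distrib]
    refine Finset.sum_le_sum fun k _ => ?_
    have p1 : 0 ≤ C * (4 / 5) ^ m * (k : ℝ) ^ (-(3 / 4 - 1 / 2000) : ℝ) := by positivity
    have p2 : 0 ≤ C * (1000 / 999) ^ m * (k : ℝ) ^ (-(1 + 1 / 2000) : ℝ) := by positivity
    rcases Nat.eq_zero_or_pos k with rfl | hk
    · have : (0:ℝ) ≤ (if IsSquare 0 ∧ 0 < 0 then C * (4 / 5) ^ m * ((0:ℕ) : ℝ) ^ (-(3 / 4 - 1 / 2000) : ℝ) else 0)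
        + (if 0 ∈ TT n d then C * (1000 / 999) ^ m * ((0:ℕ) : ℝ) ^ (-(1 + 1 / 2000) : ℝ) else 0) := by
        split_ifs <;> linarith
      simpa using this
    by_cases hak : a k = 0
    · rw [hak]
      simp only [zero_div, zero_mul]
      split_ifs <;> linarith
    rcases hsupp k hak with h | h
    · rw [if_pos ⟨h, hk⟩]
      have := hgen (5 / 4) (by norm_num) k hk
      have e : (1 / 2000 - 2 + 5 / 4 : ℝ) = -(3 / 4 - 1 / 2000) := by norm_num
      rw [e] at this
      norm_num at this ⊢
      split_ifs <;> norm_num at p2 <;> linarith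
    · rw [if_pos h]
      have := hgen (999 / 1000) (by norm_num) k hk
      have e : (1 / 2000 - 2 + 999 / 1000 : ℝ) = -(1 + 1 / 2000) := by norm_num
      rw [e] at this
      have e2 : (1 / (999 / 1000) : ℝ) = 1000 / 999 := by norm_num
      rw [e2] at this
      split_ifs <;> linarith
  refine hsplit.trans ?_
  rw [← Finset.mul_sum, ← Finset.mul_sum]
  have hT := hsp n σ d hσ hd hn (S.filter (fun k => k ∈ TT n d)) (fun k hk => (Finset.mem_filter.1 hk).2)
  have hQ : ∑ k ∈ S with (IsSquare k ∧ 0 < k), (k : ℝ) ^ (-(3 / 4 - 1 / 2000) : ℝ) ≤ Z := by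
    have hinj : Set.InjOn Nat.sqrt (S.filter (fun k => IsSquare k ∧ 0 < k) : Finset ℕ) := by
      intro x hx y hy hxy
      simp only [Finset.coe_filter, Set.mem_ofPred_eq] at hx hy
      obtain ⟨⟨p, rfl⟩, _⟩ := hx.2
      obtain ⟨⟨q, rfl⟩, _⟩ := hy.2
      rw [Nat.sqrt_eq, Nat.sqrt_eq] at hxy
      rw [hxy]
    have : ∑ k ∈ S with (IsSquare k ∧ 0 < k), (k : ℝ) ^ (-(3 / 4 - 1 / 2000) : ℝ) =
        ∑ j ∈ (S.filter (fun k => IsSquare k ∧ 0 < k)).image Nat.sqrt, (j : ℝ) ^ (-(3 / 2 - 1 / 1000) : ℝ) := by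
      rw [Finset.sum_image hinj]
      refine Finset.sum_congr rfl fun k hk => ?_
      obtain ⟨⟨p, rfl⟩, _⟩ := (Finset.mem_filter.1 hk).2
      rw [Nat.sqrt_eq]
      push_cast
      rw [← pow_two, ← Real.rpow_natCast, ← Real.rpow_mul (by positivity)]
      congr 1; norm_num
    rw [this]
    exact hsum.sum_le_tsum _ (fun k _ => by positivity)
  calc _ ≤ C * (4 / 5) ^ m * Z + C * (1000 / 999) ^ m * (K1 * (n : ℝ) ^ (-(1 / 4) : ℝ)) := by
        gcongr
    _ ≤ C * (4 / 5) ^ m * (K1 + Z) + C * (1000 / 999) ^ m * ((K1 + Z) * (n : ℝ) ^ (-(1 / 4) : ℝ)) := by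
        gcongr <;> linarith
    _ = _ := by ring

theorem final_contra (C β : ℝ) (hC : 0 < C) (hβ : 999 / 1000 ≤ β) (hβ1 : β < 1) :
    ∃ n0 : ℤ, ∀ n σ d : ℤ, (σ = 1 ∨ σ = -1) → d = n ^ 2 - 4 * σ → 3 ≤ n → n0 ≤ n →
    ∀ (a : ℕ → ℝ) (A : ℂ → ℂ), (∀ k, 0 ≤ a k) → a 1 = 1 →
    (∀ k, 0 < k → a k ≤ C * (k : ℝ) ^ (1 / 2000 : ℝ)) → (∀ k, a k ≠ 0 → IsSquare k ∨ k ∈ TT n d) →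
    Differentiable ℂ A → abscissaOfAbsConv (fun k => (a k : ℂ)) ≤ 1 →
    (∀ s : ℂ, 1 < s.re → A s = (s - 1) * LSeries (fun k => (a k : ℂ)) s) →
    (∀ s ∈ sphere (2 : ℂ) (4 / 3), ‖A s‖ ≤ C * (n : ℝ) ^ 8) → 0 ≤ (A β).re → False := by
  obtain ⟨K, hK, hU⟩ := bb_upper
  -- the eventual bound
  have hlim : Tendsto (fun j : ℕ => (40 + 6) * (C * 256) * (3 / 4 : ℝ) ^ j + C * K * ((3 / 4) ^ j + (93 / 100) ^ j))
      atTop (𝓝 ((40 + 6) * (C * 256) * 0 + C * K * (0 + 0))) := by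
    have h1 := tendsto_pow_atTop_nhds_zero_of_lt_one (by norm_num : (0:ℝ) ≤ 3 / 4) (by norm_num)
    have h2 := tendsto_pow_atTop_nhds_zero_of_lt_one (by norm_num : (0:ℝ) ≤ 93 / 100) (by norm_num)
    exact (h1.const_mul _).add ((h1.add h2).const_mul _)
  have hev : ∀ᶠ j : ℕ in atTop, (40 + 6) * (C * 256) * (3 / 4 : ℝ) ^ j + C * K * ((3 / 4) ^ j + (93 / 100) ^ j)
      < 1 - β := by
    apply hlim.eventually_lt_const
    simp; exact hβ1
  obtain ⟨j0, hj0⟩ := eventually_atTop.1 hev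
  refine ⟨2 ^ (j0 + 1), ?_⟩
  intro n σ d hσ hd hn hn0 a A ha0 ha1 haC hsupp hA habs hAF hM hAβ
  obtain ⟨N, rfl⟩ : ∃ N : ℕ, n = N := ⟨n.toNat, by omega⟩
  set j := Nat.log 2 N with hj
  have hN0 : N ≠ 0 := by rintro rfl; norm_num at hn
  have hNl : 2 ^ j ≤ N := Nat.pow_log_le_self 2 hN0
  have hNu : N < 2 ^ (j + 1) := Nat.lt_pow_succ_log_self (by norm_num) N
  have hjj : j0 + 1 ≤ j := by
    apply Nat.le_log_of_pow_le (by norm_num)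
    exact_mod_cast hn0
  have hlt := hj0 j (by omega)
  have hNl' : (2 : ℝ) ^ j ≤ N := by exact_mod_cast hNl
  have hNu' : (N : ℝ) ≤ 2 ^ (j + 1) := by exact_mod_cast hNu.le
  have hM' : ∀ s ∈ sphere (2 : ℂ) (4 / 3), ‖A s‖ ≤ C * 256 * 256 ^ j := by
    intro s hs
    refine (hM s hs).trans ?_
    have : ((N : ℤ) : ℝ) ^ 8 ≤ (2 ^ (j + 1)) ^ 8 := by
      push_cast
      exact pow_le_pow_left₀ (by positivity) hNu' 8
    calc C * ((N : ℤ) : ℝ) ^ 8 ≤ C * (2 ^ (j + 1)) ^ 8 := by gcongr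
      _ = C * 256 * 256 ^ j := by
        rw [← pow_mul, mul_comm (j + 1) 8, pow_mul]; norm_num; ring
  have hmain := estermann a ha0 ha1 A hA habs hAF _ hM' β (by linarith) hβ1 hAβ (35 * j) (by omega)
  have hb := hU C hC N σ d hσ hd hn a ha0 haC hsupp (35 * j)
  have hβp : (2 - β) ^ (35 * j) ≤ (1001 / 1000) ^ (35 * j) :=
    pow_le_pow_left₀ (by linarith) (by linarith) _
  have hβ0 : 0 < (2 - β) ^ (35 * j) := pow_pos (by linarith) _
  have hquart : ((N : ℤ) : ℝ) ^ (-(1 / 4) : ℝ) ≤ (6 / 7) ^ j := by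
    push_cast
    have h1 : (N : ℝ) ^ (-(1 / 4) : ℝ) ≤ ((2 : ℝ) ^ j) ^ (-(1 / 4) : ℝ) :=
      Real.rpow_le_rpow_of_nonpos (by positivity) hNl' (by norm_num)
    refine h1.trans ?_
    rw [← Real.rpow_natCast, ← Real.rpow_mul (by norm_num), mul_comm, Real.rpow_mul (by norm_num), Real.rpow_natCast]
    refine pow_le_pow_left₀ (by positivity) ?_ j
    rw [Real.rpow_neg (by norm_num), inv_le_comm₀ (by positivity) (by norm_num)]
    rw [← Real.rpow_le_rpow_iff (z := 4) (by positivity) (by positivity) (by norm_num), ← Real.rpow_mul (by norm_num)]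
    norm_num
  have r1 : (27 / 32 : ℝ) ^ (35 * j) * 256 ^ j ≤ (3 / 4) ^ j := by
    rw [pow_mul, ← mul_pow]
    exact pow_le_pow_left₀ (by positivity) (by norm_num) _
  have r2 : (1001 / 1000 : ℝ) ^ (35 * j) * (3 / 4) ^ (35 * j) * 256 ^ j ≤ (3 / 4) ^ j := by
    refine le_trans ?_ r1
    rw [← mul_pow]
    gcongr; norm_num
  have r3 : (1001 / 1000 : ℝ) ^ (35 * j) * (4 / 5) ^ (35 * j) ≤ (3 / 4) ^ j := by
    rw [← mul_pow, pow_mul]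
    exact pow_le_pow_left₀ (by positivity) (by norm_num) _
  have r4 : (1001 / 1000 : ℝ) ^ (35 * j) * ((6 / 7) ^ j * (1000 / 999) ^ (35 * j)) ≤ (93 / 100) ^ j := by
    rw [mul_left_comm, ← mul_pow, pow_mul, ← mul_pow]
    exact pow_le_pow_left₀ (by positivity) (by norm_num) _
  have hR : (2 - β) ^ (35 * j) * (bb a (35 * j) + 6 * (C * 256 * 256 ^ j) * (3 / 4) ^ (35 * j)) ≤
      C * K * ((3 / 4) ^ j + (93 / 100) ^ j) + 6 * (C * 256) * (3 / 4) ^ j := by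
    calc _ ≤ (1001 / 1000) ^ (35 * j) * (C * K * ((4 / 5) ^ (35 * j) + (6 / 7) ^ j * (1000 / 999) ^ (35 * j))
          + 6 * (C * 256 * 256 ^ j) * (3 / 4) ^ (35 * j)) := by
          have hb' : bb a (35 * j) ≤ C * K * ((4 / 5) ^ (35 * j) + (6 / 7) ^ j * (1000 / 999) ^ (35 * j)) := by
            refine hb.trans ?_
            gcongr
          have hpos : 0 ≤ C * K * ((4 / 5) ^ (35 * j) + (6 / 7) ^ j * (1000 / 999) ^ (35 * j))
            + 6 * (C * 256 * 256 ^ j) * (3 / 4 : ℝ) ^ (35 * j) := by positivity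
          calc _ ≤ (2 - β) ^ (35 * j) * (C * K * ((4 / 5) ^ (35 * j) + (6 / 7) ^ j * (1000 / 999) ^ (35 * j))
              + 6 * (C * 256 * 256 ^ j) * (3 / 4) ^ (35 * j)) := by gcongr
            _ ≤ _ := mul_le_mul_of_nonneg_right hβp hpos
      _ = C * K * ((1001 / 1000 : ℝ) ^ (35 * j) * (4 / 5) ^ (35 * j) + (1001 / 1000 : ℝ) ^ (35 * j) * ((6 / 7) ^ j * (1000 / 999) ^ (35 * j)))
          + 6 * (C * 256) * ((1001 / 1000 : ℝ) ^ (35 * j) * (3 / 4) ^ (35 * j) * 256 ^ j) := by ring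
      _ ≤ _ := by gcongr
  have hL : (1 - β) - 40 * (C * 256) * (3 / 4) ^ j ≤ (1 - β) * (1 - 40 * (C * 256 * 256 ^ j) * (27 / 32) ^ (35 * j)) := by
    have e : (1 - β) * (1 - 40 * (C * 256 * 256 ^ j) * (27 / 32) ^ (35 * j)) =
      (1 - β) - (1 - β) * (40 * (C * 256) * ((27 / 32) ^ (35 * j) * 256 ^ j)) := by ring
    rw [e]
    have h1 : (1 - β) * (40 * (C * 256) * ((27 / 32) ^ (35 * j) * 256 ^ j)) ≤ 1 * (40 * (C * 256) * (3 / 4) ^ j) := by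
      gcongr; linarith
    linarith
  linarith [hL.trans (hmain.trans hR)]
end

noncomputable section
open Complex Filter Topology Metric LSeries

/-- blocks of the Dirichlet series -/
def blk {N : ℕ} (χ : DirichletCharacter ℂ N) (k : ℕ) (s : ℂ) : ℂ :=
  ∑ a : Fin N, term (fun n : ℕ => χ n) s (k * N + a)

lemma sum_fin_char {N : ℕ} [NeZero N] (χ : DirichletCharacter ℂ N) (hχ : χ ≠ 1) :
    ∑ a : Fin N, χ ((a : ℕ) : ZMod N) = 0 := by
  rw [← MulChar.sum_eq_zero_of_ne_one hχ]
  have hb : Function.Bijective (fun a : Fin N => ((a : ℕ) : ZMod N)) := by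
    rw [Fintype.bijective_iff_injective_and_card]
    refine ⟨?_, by simp [ZMod.card]⟩
    intro a b h
    have := congrArg ZMod.val h
    simp only at this
    rw [ZMod.val_cast_of_lt a.2, ZMod.val_cast_of_lt b.2] at this
    exact Fin.ext this
  exact Fintype.sum_bijective _ hb _ _ (fun _ => rfl)

def UU : Set ℂ := {s | 1 / 2 < s.re} ∩ ball 0 4

lemma cpow_diff (s : ℂ) (hs : s ∈ UU) (x y : ℝ) (hx : 1 ≤ x) (hxy : x ≤ y) :
    ‖(y : ℂ) ^ (-s) - (x : ℂ) ^ (-s)‖ ≤ 4 * x ^ (-(3 / 2) : ℝ) * (y - x) := by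
  obtain ⟨h1, h2⟩ := hs
  simp only [Set.mem_ofPred_eq, mem_ball, dist_zero_right] at h1 h2
  have hder : ∀ t ∈ Set.Icc x y, HasDerivWithinAt (fun t : ℝ => (t : ℂ) ^ (-s)) (-s * (t : ℂ) ^ (-s - 1)) (Set.Icc x y) t := by
    intro t ht
    have ht0 : 0 < t := by linarith [ht.1]
    have := (hasDerivAt_id (t : ℂ)).cpow_const (c := -s) (Or.inl (by simpa using ht0))
    have := this.comp_ofReal
    simp only [id, mul_one] at this
    exact this.hasDerivWithinAt
  have := Convex.norm_image_sub_le_of_norm_hasDerivWithin_le (C := 4 * x ^ (-(3 / 2) : ℝ)) hder ?_ (convex_Icc x y)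
    (Set.left_mem_Icc.2 hxy) (Set.right_mem_Icc.2 hxy)
  · rwa [Real.norm_of_nonneg (by linarith)] at this
  · intro t ht
    have ht0 : 0 < t := by linarith [ht.1]
    rw [norm_mul, norm_neg, norm_cpow_eq_rpow_re_of_pos ht0]
    have e1 : t ^ (-s - 1).re ≤ t ^ (-(3 / 2) : ℝ) :=
      Real.rpow_le_rpow_of_exponent_le (by linarith [ht.1]) (by simp; linarith)
    have e2 : t ^ (-(3 / 2) : ℝ) ≤ x ^ (-(3 / 2) : ℝ) :=
      Real.rpow_le_rpow_of_nonpos (by linarith) ht.1 (by norm_num)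
    exact mul_le_mul h2.le (e1.trans e2) (by positivity) (by norm_num)

lemma term_eq' (f : ℕ → ℂ) (s : ℂ) (n : ℕ) (hn : n ≠ 0) : term f s n = f n * ((n : ℝ) : ℂ) ^ (-s) := by
  rw [term_of_ne_zero hn, cpow_neg]
  simp [div_eq_mul_inv]

lemma blk_bound {N : ℕ} [NeZero N] (χ : DirichletCharacter ℂ N) (hχ : χ ≠ 1) (k : ℕ) (s : ℂ) (hs : s ∈ UU) :
    ‖blk χ k s‖ ≤ N * ((if k = 0 then 1 else 0) + 4 * (k : ℝ) ^ (-(3 / 2) : ℝ)) := by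
  have hN : 0 < N := Nat.pos_of_ne_zero (NeZero.ne N)
  have hN1 : (1 : ℝ) ≤ N := by exact_mod_cast hN
  rcases Nat.eq_zero_or_pos k with rfl | hk
  · rw [blk]
    refine (norm_sum_le _ _).trans ?_
    have : ∀ a ∈ (Finset.univ : Finset (Fin N)), ‖term (fun n : ℕ => χ n) s (0 * N + a)‖ ≤ 1 := by
      intro a _
      rw [zero_mul, zero_add]
      rcases Nat.eq_zero_or_pos (a : ℕ) with h | h
      · rw [h]; simp
      · rw [term_eq' _ _ _ h.ne', norm_mul]
        have h1 : ‖χ ((a : ℕ) : ZMod N)‖ ≤ 1 := DirichletCharacter.norm_le_one χ _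
        have h2 : ‖(((a : ℕ) : ℝ) : ℂ) ^ (-s)‖ ≤ 1 := by
          rw [norm_cpow_eq_rpow_re_of_pos (by exact_mod_cast h)]
          apply Real.rpow_le_one_of_one_le_of_nonpos (by exact_mod_cast h)
          have := hs.1
          simp only [Set.mem_ofPred_eq] at this
          simp; linarith
        exact mul_le_one₀ h1 (norm_nonneg _) h2
    refine (Finset.sum_le_sum this).trans ?_
    simp
  · have hkN : 0 < k * N := Nat.mul_pos hk hN
    have hkN1 : (1 : ℝ) ≤ (k * N : ℕ) := by exact_mod_cast hkN
    have e : blk χ k s = ∑ a : Fin N, χ ((a : ℕ) : ZMod N) *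
        ((((k * N + a : ℕ) : ℝ) : ℂ) ^ (-s) - (((k * N : ℕ) : ℝ) : ℂ) ^ (-s)) := by
      simp only [mul_sub]
      rw [Finset.sum_sub_distrib, ← Finset.sum_mul, sum_fin_char χ hχ, zero_mul, sub_zero, blk]
      refine Finset.sum_congr rfl fun a _ => ?_
      rw [term_eq' _ _ _ (by omega)]
      simp
    rw [e]
    refine (norm_sum_le _ _).trans ?_
    have : ∀ a ∈ (Finset.univ : Finset (Fin N)), ‖χ ((a : ℕ) : ZMod N) *
        ((((k * N + a : ℕ) : ℝ) : ℂ) ^ (-s) - (((k * N : ℕ) : ℝ) : ℂ) ^ (-s))‖ ≤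
        4 * (k : ℝ) ^ (-(3 / 2) : ℝ) := by
      intro a _
      rw [norm_mul]
      have h1 : ‖χ ((a : ℕ) : ZMod N)‖ ≤ 1 := DirichletCharacter.norm_le_one χ _
      have h2 := cpow_diff s hs (k * N : ℕ) (k * N + a : ℕ) hkN1 (by exact_mod_cast Nat.le_add_right _ _)
      have h3 : 4 * ((k * N : ℕ) : ℝ) ^ (-(3 / 2) : ℝ) * (((k * N + a : ℕ) : ℝ) - (k * N : ℕ)) ≤
          4 * (k : ℝ) ^ (-(3 / 2) : ℝ) := by
        push_cast
        rw [add_sub_cancel_left, Real.mul_rpow (by positivity) (by positivity)]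
        have ha : ((a : ℕ) : ℝ) ≤ N := by exact_mod_cast a.2.le
        have h4 : (N : ℝ) ^ (-(3 / 2) : ℝ) * (a : ℕ) ≤ 1 := by
          calc (N : ℝ) ^ (-(3 / 2) : ℝ) * (a : ℕ) ≤ (N : ℝ) ^ (-1 : ℝ) * N := by
                gcongr
                norm_num
            _ = 1 := by rw [Real.rpow_neg_one]; field_simp
        have h5 : 0 ≤ 4 * (k : ℝ) ^ (-(3 / 2) : ℝ) := by positivity
        calc _ = 4 * (k : ℝ) ^ (-(3 / 2) : ℝ) * ((N : ℝ) ^ (-(3 / 2) : ℝ) * (a : ℕ)) := by ring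
          _ ≤ _ := mul_le_of_le_one_right h5 h4
      exact (mul_le_of_le_one_left (norm_nonneg _) h1).trans (h2.trans h3)
    refine (Finset.sum_le_sum this).trans ?_
    simp [hk.ne']

lemma LFunction_eq_blk {N : ℕ} [NeZero N] (χ : DirichletCharacter ℂ N) (hχ : χ ≠ 1) (s : ℂ) (hs : s ∈ UU) :
    χ.LFunction s = ∑' k, blk χ k s := by
  have hUo : IsOpen UU := (isOpen_lt continuous_const continuous_re).inter isOpen_ball
  have hsum : Summable (fun k : ℕ => (N : ℝ) * ((if k = 0 then 1 else 0) + 4 * (k : ℝ) ^ (-(3 / 2) : ℝ))) := by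
    refine Summable.mul_left _ (Summable.add ?_ ?_)
    · exact summable_of_ne_finset_zero (s := {0}) (by intro b hb; simp at hb; simp [hb])
    · exact (Real.summable_nat_rpow.2 (by norm_num)).mul_left _
  have hd : DifferentiableOn ℂ (fun w : ℂ => ∑' k, blk χ k w) UU := by
    refine differentiableOn_tsum_of_summable_norm hsum ?_ hUo (fun k w hw => blk_bound χ hχ k w hw)
    intro k
    unfold blk
    refine DifferentiableOn.fun_sum fun a _ => ?_
    intro w _
    exact (hasDerivAt_term _ _ _).differentiableAt.differentiableWithinAt
  have hpre : IsPreconnected UU :=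
    ((convex_halfSpace_re_gt (1 / 2)).inter (convex_ball 0 4)).isPreconnected
  have h2 : (2 : ℂ) ∈ UU := by
    constructor
    · simp; norm_num
    · simp; norm_num
  have hev : χ.LFunction =ᶠ[𝓝 2] (fun w : ℂ => ∑' k, blk χ k w) := by
    have : {s : ℂ | 1 < s.re} ∈ 𝓝 (2 : ℂ) :=
      (isOpen_lt continuous_const continuous_re).mem_nhds (by simp)
    filter_upwards [this] with w hw
    rw [DirichletCharacter.LFunction_eq_LSeries χ hw]
    have hS : Summable (term (fun n : ℕ => χ n) w) := DirichletCharacter.LSeriesSummable_of_one_lt_re χ hw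
    have hS2 : Summable (fun p : ℕ × Fin N => term (fun n : ℕ => χ n) w (p.1 * N + p.2)) := by
      have := (Nat.divModEquiv N).symm.summable_iff.2 hS
      exact this
    rw [LSeries, ← (Nat.divModEquiv N).symm.tsum_eq]
    have h3 := hS2.tsum_prod
    simp only [tsum_fintype] at h3
    exact h3
  exact (DifferentiableOn.analyticOnNhd (DirichletCharacter.differentiable_LFunction hχ).differentiableOn
    hUo).eqOn_of_preconnected_of_eventuallyEq (hd.analyticOnNhd hUo) hpre h2 hev hs

lemma sphere_mem (s : ℂ) (hs : s ∈ sphere (2 : ℂ) (4 / 3)) : s ∈ UU ∧ 1 / 3 ≤ ‖s - 1‖ ∧ ‖s - 1‖ ≤ 7 / 3 := by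
  have h1 : ‖s - 2‖ = 4 / 3 := by simpa [dist_eq_norm] using hs
  refine ⟨⟨?_, ?_⟩, ?_, ?_⟩
  · have := (abs_le.1 ((abs_re_le_norm (s - 2)).trans h1.le)).1
    simp at this ⊢
    linarith
  · have := norm_add_le (s - 2) 2
    simp at this ⊢
    linarith
  · have := norm_sub_le (s - 1) 1
    rw [show s - 1 - 1 = s - 2 by ring, h1] at this
    simp at this
    linarith
  · have := norm_add_le (s - 2) 1
    rw [show s - 2 + 1 = s - 1 by ring, h1] at this
    simp at this
    linarith

theorem L_bound : ∃ C : ℝ, 1 ≤ C ∧ ∀ (N : ℕ) [NeZero N] (χ : DirichletCharacter ℂ N), χ ≠ 1 →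
    ∀ s ∈ sphere (2 : ℂ) (4 / 3), ‖χ.LFunction s‖ ≤ C * N := by
  have hsum0 : Summable (fun k : ℕ => ((if k = 0 then 1 else 0) + 4 * (k : ℝ) ^ (-(3 / 2) : ℝ))) := by
    refine Summable.add ?_ ?_
    · exact summable_of_ne_finset_zero (s := {0}) (by intro b hb; simp at hb; simp [hb])
    · exact (Real.summable_nat_rpow.2 (by norm_num)).mul_left _
  set Z := ∑' k : ℕ, ((if k = 0 then 1 else 0) + 4 * (k : ℝ) ^ (-(3 / 2) : ℝ)) with hZ
  have hZ0 : 0 ≤ Z := tsum_nonneg fun k => by split_ifs <;> positivity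
  refine ⟨Z + 1, by linarith, ?_⟩
  intro N _ χ hχ s hs
  have hsU := (sphere_mem s hs).1
  rw [LFunction_eq_blk χ hχ s hsU]
  have := tsum_of_norm_bounded (hsum0.mul_left (N : ℝ)).hasSum (fun k => blk_bound χ hχ k s hsU)
  rw [tsum_mul_left] at this
  refine this.trans ?_
  have : (0 : ℝ) ≤ N := by positivity
  nlinarith

theorem triv_bound : ∃ C : ℝ, 1 ≤ C ∧ ∀ (N : ℕ) [NeZero N],
    ∀ s ∈ sphere (2 : ℂ) (4 / 3), ‖DirichletCharacter.LFunctionTrivChar₁ N s‖ ≤ C * N := by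
  obtain ⟨C, hC⟩ := (isCompact_sphere (2 : ℂ) (4 / 3)).exists_bound_of_continuousOn (f := riemannZeta) (by
    intro s hs
    have h := (sphere_mem s hs).2.1
    have hs1 : s ≠ 1 := by rintro rfl; simp at h; norm_num at h
    exact (differentiableAt_riemannZeta hs1).continuousAt.continuousWithinAt)
  refine ⟨7 / 3 * |C| + 1, by have := abs_nonneg C; linarith, ?_⟩
  intro N _ s hs
  obtain ⟨hU, h, h'⟩ := sphere_mem s hs
  have hs1 : s ≠ 1 := by rintro rfl; simp at h; norm_num at h
  have e : DirichletCharacter.LFunctionTrivChar₁ N s = (s - 1) * DirichletCharacter.LFunctionTrivChar N s :=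
    Function.update_of_ne hs1 _ _
  rw [e, DirichletCharacter.LFunctionTrivChar_eq_mul_riemannZeta hs1, norm_mul, norm_mul]
  have hN0 : N ≠ 0 := NeZero.ne N
  have hprod : ‖∏ p ∈ N.primeFactors, (1 - (p : ℂ) ^ (-s))‖ ≤ N := by
    rw [norm_prod]
    calc _ ≤ ∏ p ∈ N.primeFactors, (p : ℝ) := by
          refine Finset.prod_le_prod (fun _ _ => norm_nonneg _) fun p hp => ?_
          have hp2 := (Nat.prime_of_mem_primeFactors hp).two_le
          have hp0 : (0 : ℝ) < p := by exact_mod_cast (by omega : 0 < p)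
          refine (norm_sub_le _ _).trans ?_
          have h2 : ‖((p : ℝ) : ℂ) ^ (-s)‖ ≤ 1 := by
            rw [norm_cpow_eq_rpow_re_of_pos hp0]
            apply Real.rpow_le_one_of_one_le_of_nonpos (by exact_mod_cast (by omega : 1 ≤ p))
            have := hU.1
            simp only [Set.mem_ofPred_eq] at this
            simp; linarith
          simp only [ofReal_natCast] at h2
          have : (2 : ℝ) ≤ p := by exact_mod_cast hp2
          simp only [norm_one]; linarith
      _ = ((∏ p ∈ N.primeFactors, p : ℕ) : ℝ) := by push_cast; rfl
      _ ≤ N := by exact_mod_cast Nat.le_of_dvd (Nat.pos_of_ne_zero hN0) (Nat.prod_primeFactors_dvd N)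
  have hz := (hC s hs).trans (le_abs_self C)
  have hN : (0 : ℝ) ≤ N := by positivity
  calc _ ≤ 7 / 3 * (N * |C|) := by gcongr
    _ ≤ _ := by nlinarith
end

noncomputable section

/-- The arithmetic function of an integer valued Dirichlet character. -/
def af {N : ℕ} (χ : DirichletCharacter ℤ N) : ArithmeticFunction ℤ :=
  toArithmeticFunction (fun n => χ (n : ZMod N))

lemma af_apply {N : ℕ} (χ : DirichletCharacter ℤ N) {n : ℕ} (hn : n ≠ 0) : af χ n = χ (n : ZMod N) := by
  change (if n = 0 then 0 else _) = _
  simp [hn]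

lemma af_mult {N : ℕ} (χ : DirichletCharacter ℤ N) : (af χ).IsMultiplicative := by
  refine ArithmeticFunction.IsMultiplicative.iff_ne_zero.2 ⟨?_, ?_⟩
  · rw [af_apply _ one_ne_zero]; simp
  · intro m n hm hn _
    rw [af_apply _ hm, af_apply _ hn, af_apply _ (mul_ne_zero hm hn)]; simp

/-- two-fold -/
def rr {N : ℕ} (χ : DirichletCharacter ℤ N) : ArithmeticFunction ℤ :=
  af (1 : DirichletCharacter ℤ N) * af χ

/-- four-fold -/
def qq {N : ℕ} (χ ψ : DirichletCharacter ℤ N) : ArithmeticFunction ℤ := rr ψ * (af χ * af (χ * ψ))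

lemma qq_symm {N : ℕ} (χ ψ : DirichletCharacter ℤ N) : qq χ ψ = qq ψ χ := by
  unfold qq rr
  rw [mul_comm χ ψ]; ring

lemma conv_pp (f g : ArithmeticFunction ℤ) {p : ℕ} (hp : p.Prime) (k : ℕ) :
    (f * g) (p ^ k) = ∑ i ∈ Finset.range (k + 1), f (p ^ i) * g (p ^ (k - i)) := by
  rw [ArithmeticFunction.mul_apply, Nat.sum_divisorsAntidiagonal (f := fun a b => f a * g b),
    Nat.sum_divisors_prime_pow hp]
  refine Finset.sum_congr rfl fun i hi => ?_
  rw [Nat.pow_div (by simp at hi; omega) hp.pos]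

lemma af_pp {N : ℕ} (χ : DirichletCharacter ℤ N) {p : ℕ} (hp : p.Prime) (k : ℕ) :
    af χ (p ^ k) = χ (p : ZMod N) ^ k := by
  rw [af_apply _ (pow_ne_zero _ hp.ne_zero)]; simp

lemma rr_mult {N : ℕ} (χ : DirichletCharacter ℤ N) : (rr χ).IsMultiplicative := (af_mult _).mul (af_mult _)

lemma qq_mult {N : ℕ} (χ ψ : DirichletCharacter ℤ N) : (qq χ ψ).IsMultiplicative :=
  (rr_mult _).mul ((af_mult _).mul (af_mult _))

lemma rr_pp {N : ℕ} (χ : DirichletCharacter ℤ N) {p : ℕ} (hp : p.Prime) (k : ℕ) :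
    rr χ (p ^ k) = ∑ i ∈ Finset.range (k + 1), (1 : DirichletCharacter ℤ N) (p : ZMod N) ^ i *
      χ (p : ZMod N) ^ (k - i) := by
  rw [rr, conv_pp _ _ hp]
  simp only [af_pp _ hp]

lemma tt_pmul {N : ℕ} (χ ψ : DirichletCharacter ℤ N) (n : ℕ) :
    (af χ * af (χ * ψ)) n = χ (n : ZMod N) * rr ψ n := by
  rcases eq_or_ne n 0 with rfl | hn
  · simp
  rw [rr, ArithmeticFunction.mul_apply, ArithmeticFunction.mul_apply, Finset.mul_sum]
  refine Finset.sum_congr rfl fun i hi => ?_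
  obtain ⟨h1, h2⟩ := Nat.mem_divisorsAntidiagonal.1 hi
  have h3 : i.1 ≠ 0 := by rintro h; simp [h] at h1; omega
  have h4 : i.2 ≠ 0 := by rintro h; simp [h] at h1; omega
  rw [af_apply _ h3, af_apply _ h4, af_apply _ h3, af_apply _ h4, ← h1]
  simp only [MulChar.mul_apply, Nat.cast_mul, map_mul]
  by_cases hu : IsUnit ((i.1 : ℕ) : ZMod N)
  · rw [MulChar.one_apply hu]; ring
  · rw [MulChar.map_nonunit χ hu]; ring

lemma char_cases {N : ℕ} (χ : DirichletCharacter ℤ N) (hχ : χ.IsQuadratic) (p : ZMod N) :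
    ((1 : DirichletCharacter ℤ N) p = 0 ∧ χ p = 0) ∨
    ((1 : DirichletCharacter ℤ N) p = 1 ∧ (χ p = 1 ∨ χ p = -1)) := by
  by_cases hu : IsUnit p
  · right
    refine ⟨MulChar.one_apply hu, ?_⟩
    rcases hχ p with h | h
    · exact absurd h ((hu.map χ).ne_zero)
    · exact h
  · left
    exact ⟨MulChar.map_nonunit _ hu, MulChar.map_nonunit _ hu⟩

lemma neg_geom (k : ℕ) : ∑ i ∈ Finset.range (k + 1), (1 : ℤ) ^ i * (-1) ^ (k - i) = if Even k then 1 else 0 := by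
  simp only [one_pow, one_mul]
  have := Finset.sum_range_reflect (fun j => (-1 : ℤ) ^ j) (k + 1)
  simp only [Nat.add_sub_cancel] at this
  rw [this, neg_one_geom_sum]
  simp only [Nat.even_add_one]
  split_ifs <;> simp_all

lemma zero_geom (k : ℕ) : ∑ i ∈ Finset.range (k + 1), (0 : ℤ) ^ i * 0 ^ (k - i) = if k = 0 then 1 else 0 := by
  rcases Nat.eq_zero_or_pos k with rfl | hk
  · simp
  · rw [if_neg hk.ne']
    refine Finset.sum_eq_zero fun i hi => ?_
    rcases Nat.eq_zero_or_pos i with rfl | h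
    · simp [hk.ne']
    · simp [h.ne']

lemma rr_pp_nonneg {N : ℕ} (χ : DirichletCharacter ℤ N) (hχ : χ.IsQuadratic) {p : ℕ} (hp : p.Prime) (k : ℕ) :
    0 ≤ rr χ (p ^ k) := by
  rw [rr_pp _ hp]
  rcases char_cases χ hχ p with ⟨h1, h2⟩ | ⟨h1, h2 | h2⟩ <;> rw [h1, h2]
  · rw [zero_geom]; split_ifs <;> simp
  · exact Finset.sum_nonneg fun i _ => by simp
  · rw [neg_geom]; split_ifs <;> simp

lemma nonneg_of_pp (f : ArithmeticFunction ℤ) (hf : f.IsMultiplicative)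
    (h : ∀ p : ℕ, p.Prime → ∀ k, 0 ≤ f (p ^ k)) (n : ℕ) : 0 ≤ f n := by
  rcases eq_or_ne n 0 with rfl | hn
  · simp
  · rw [hf.multiplicative_factorization _ hn]
    exact Finset.prod_nonneg fun p hp => h p (Nat.prime_of_mem_primeFactors hp) _

lemma rr_nonneg {N : ℕ} (χ : DirichletCharacter ℤ N) (hχ : χ.IsQuadratic) (n : ℕ) : 0 ≤ rr χ n :=
  nonneg_of_pp _ (rr_mult χ) (fun _ hp k => rr_pp_nonneg χ hχ hp k) n

lemma qq_pp {N : ℕ} (χ ψ : DirichletCharacter ℤ N) {p : ℕ} (hp : p.Prime) (k : ℕ) :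
    qq χ ψ (p ^ k) = ∑ i ∈ Finset.range (k + 1), rr ψ (p ^ i) *
      (χ (p : ZMod N) ^ (k - i) * rr ψ (p ^ (k - i))) := by
  rw [qq, conv_pp _ _ hp]
  simp only [tt_pmul, Nat.cast_pow, map_pow]

lemma qq_pp_nonneg {N : ℕ} (χ ψ : DirichletCharacter ℤ N) (hχ : χ.IsQuadratic) (hψ : ψ.IsQuadratic)
    {p : ℕ} (hp : p.Prime) (k : ℕ) : 0 ≤ qq χ ψ (p ^ k) := by
  have key : ∀ χ ψ : DirichletCharacter ℤ N, ψ.IsQuadratic → 0 ≤ χ (p : ZMod N) → 0 ≤ qq χ ψ (p ^ k) := by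
    intro χ ψ hψ h
    rw [qq_pp _ _ hp]
    exact Finset.sum_nonneg fun i _ => mul_nonneg (rr_nonneg ψ hψ _) (mul_nonneg (pow_nonneg h _) (rr_nonneg ψ hψ _))
  rcases char_cases χ hχ p with ⟨h1, h2⟩ | ⟨h1, h2 | h2⟩
  · exact key χ ψ hψ h2.ge
  · exact key χ ψ hψ (by rw [h2]; norm_num)
  rcases char_cases ψ hψ p with ⟨h3, h4⟩ | ⟨h3, h4 | h4⟩
  · rw [qq_symm]; exact key ψ χ hχ h4.ge
  · rw [qq_symm]; exact key ψ χ hχ (by rw [h4]; norm_num)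
  rw [qq_pp _ _ hp]
  refine Finset.sum_nonneg fun i _ => mul_nonneg (rr_nonneg ψ hψ _) ?_
  rw [rr_pp _ hp, h2, h3, h4, neg_geom]
  split_ifs with h
  · rw [h.neg_one_pow]; norm_num
  · simp

lemma qq_nonneg {N : ℕ} (χ ψ : DirichletCharacter ℤ N) (hχ : χ.IsQuadratic) (hψ : ψ.IsQuadratic) (n : ℕ) :
    0 ≤ qq χ ψ n :=
  nonneg_of_pp _ (qq_mult χ ψ) (fun _ hp k => qq_pp_nonneg χ ψ hχ hψ hp k) n

/-- support predicate -/
def PP {N : ℕ} (χ : DirichletCharacter ℤ N) (n : ℕ) : Prop :=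
  n ≠ 0 ∧ ∀ p : ℕ, p.Prime → (¬ IsUnit (p : ZMod N) → n.factorization p = 0) ∧
    (χ (p : ZMod N) = -1 → Even (n.factorization p))

lemma PP_mul {N : ℕ} (χ : DirichletCharacter ℤ N) {m n : ℕ} (hm : PP χ m) (hn : PP χ n) : PP χ (m * n) := by
  refine ⟨mul_ne_zero hm.1 hn.1, fun p hp => ?_⟩
  rw [Nat.factorization_mul hm.1 hn.1, Finsupp.add_apply]
  exact ⟨fun h => by rw [(hm.2 p hp).1 h, (hn.2 p hp).1 h], fun h => ((hm.2 p hp).2 h).add ((hn.2 p hp).2 h)⟩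

lemma rr_supp {N : ℕ} (χ : DirichletCharacter ℤ N) {n : ℕ} (h : rr χ n ≠ 0) : PP χ n := by
  have hn : n ≠ 0 := by rintro rfl; simp at h
  refine ⟨hn, fun p hp => ?_⟩
  have h1 : rr χ (p ^ n.factorization p) ≠ 0 := by
    have e := Nat.ordProj_mul_ordCompl_eq_self n p
    rw [← e, (rr_mult χ).map_mul_of_coprime ((Nat.coprime_ordCompl hp hn).pow_left _)] at h
    exact left_ne_zero_of_mul h
  rw [rr_pp _ hp] at h1
  constructor
  · intro hu
    rw [MulChar.map_nonunit _ hu, MulChar.map_nonunit _ hu, zero_geom] at h1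
    by_contra h2
    simp [h2] at h1
  · intro hu
    have hun : IsUnit (p : ZMod N) := by
      by_contra h2
      rw [MulChar.map_nonunit _ h2] at hu; norm_num at hu
    rw [MulChar.one_apply hun, hu, neg_geom] at h1
    by_contra h2
    simp [h2] at h1

lemma qq_supp {N : ℕ} (χ ψ : DirichletCharacter ℤ N) {n : ℕ} (h : qq χ ψ n ≠ 0) : PP ψ n := by
  rw [qq, ArithmeticFunction.mul_apply] at h
  obtain ⟨i, hi, h1⟩ := Finset.exists_ne_zero_of_sum_ne_zero h
  rw [tt_pmul] at h1
  rw [← (Nat.mem_divisorsAntidiagonal.1 hi).1]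
  exact PP_mul ψ (rr_supp ψ (left_ne_zero_of_mul h1)) (rr_supp ψ (right_ne_zero_of_mul (right_ne_zero_of_mul h1)))

lemma af_le {N : ℕ} (χ : DirichletCharacter ℤ N) (hχ : χ.IsQuadratic) (n : ℕ) : |af χ n| ≤ 1 := by
  rcases eq_or_ne n 0 with rfl | hn
  · simp
  · rw [af_apply _ hn]
    rcases hχ n with h | h | h <;> rw [h] <;> simp

lemma one_quad (N : ℕ) : (1 : DirichletCharacter ℤ N).IsQuadratic := by
  intro a
  by_cases h : IsUnit a
  · right; left; exact MulChar.one_apply h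
  · left; exact MulChar.map_nonunit _ h

lemma rr_le {N : ℕ} (χ : DirichletCharacter ℤ N) (hχ : χ.IsQuadratic) (n : ℕ) :
    |rr χ n| ≤ n.divisors.card := by
  rw [rr, ArithmeticFunction.mul_apply]
  refine (Finset.abs_sum_le_sum_abs _ _).trans ?_
  calc _ ≤ ∑ i ∈ n.divisorsAntidiagonal, (1 : ℤ) := Finset.sum_le_sum fun i _ => by
        rw [abs_mul]
        exact mul_le_one₀ (af_le _ (one_quad N) _) (abs_nonneg _) (af_le _ hχ _)
    _ = n.divisors.card := by
        simp only [Finset.sum_const, nsmul_eq_mul, mul_one]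
        rw [← Nat.map_div_right_divisors, Finset.card_map]

lemma qq_le {N : ℕ} (χ ψ : DirichletCharacter ℤ N) (hχ : χ.IsQuadratic) (hψ : ψ.IsQuadratic) (n : ℕ) :
    |qq χ ψ n| ≤ (n.divisors.card : ℤ) ^ 3 := by
  rw [qq, ArithmeticFunction.mul_apply]
  refine (Finset.abs_sum_le_sum_abs _ _).trans ?_
  calc _ ≤ ∑ i ∈ n.divisorsAntidiagonal, (n.divisors.card : ℤ) ^ 2 := Finset.sum_le_sum fun i hi => by
        obtain ⟨h1, h2⟩ := Nat.mem_divisorsAntidiagonal.1 hi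
        rw [tt_pmul, abs_mul, abs_mul, sq]
        have hx : |χ ((i.2 : ℕ) : ZMod N)| ≤ 1 := by
          rcases hχ i.2 with h | h | h <;> rw [h] <;> simp
        have a1 : |rr ψ i.1| ≤ n.divisors.card := (rr_le ψ hψ i.1).trans (by
          exact_mod_cast Finset.card_le_card (Nat.divisors_subset_of_dvd h2 ⟨_, h1.symm⟩))
        have a2 : |rr ψ i.2| ≤ n.divisors.card := (rr_le ψ hψ i.2).trans (by
          exact_mod_cast Finset.card_le_card (Nat.divisors_subset_of_dvd h2 (Dvd.intro_left _ h1)))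
        refine mul_le_mul a1 ?_ (by positivity) (by positivity)
        exact (mul_le_of_le_one_left (abs_nonneg _) hx).trans a2
    _ = _ := by
        simp only [Finset.sum_const, nsmul_eq_mul]
        rw [← Nat.map_div_right_divisors, Finset.card_map]
        ring
end

noncomputable section
open NumberTheorySymbols

lemma J_mod (D N m : ℕ) (h : 4 * D ∣ N) (hN : Even N) (hm : Odd m) : J((D : ℤ) | m % N) = J((D : ℤ) | m) := by
  have hm' : Odd (m % N) := hm.mod_even hN
  rw [jacobiSym.mod_right' D hm', jacobiSym.mod_right' D hm, Nat.mod_mod_of_dvd _ h]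

lemma even_of_dvd {D N : ℕ} (h : 4 * D ∣ N) : Even N :=
  even_iff_two_dvd.2 ((Dvd.intro (2 * D) (by ring)).trans h)

lemma val_odd {N : ℕ} [NeZero N] (hN : Even N) {x : ZMod N} (hx : IsUnit x) : Odd x.val := by
  have h := (ZMod.isUnit_iff_coprime x.val N).1 (by rwa [ZMod.natCast_zmod_val])
  rw [← Nat.not_even_iff_odd]
  intro h2
  have := Nat.dvd_gcd (even_iff_two_dvd.1 h2) (even_iff_two_dvd.1 hN)
  rw [h] at this; omega

lemma J_ne_zero {D N : ℕ} [NeZero N] (h : 4 * D ∣ N) {x : ZMod N} (hx : IsUnit x) : J((D : ℤ) | x.val) ≠ 0 := by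
  have h1 := (ZMod.isUnit_iff_coprime x.val N).1 (by rwa [ZMod.natCast_zmod_val])
  apply jacobiSym.ne_zero
  rw [Int.gcd_natCast_natCast]
  exact (Nat.Coprime.coprime_dvd_right ((Dvd.intro_left 4 rfl).trans h) h1).symm

/-- The Jacobi character. -/
def chi (D N : ℕ) [NeZero N] (h : 4 * D ∣ N) : DirichletCharacter ℤ N where
  toFun x := by
    classical
    exact if IsUnit x then J((D : ℤ) | x.val) else 0
  map_one' := by
    have h1 := J_mod D N 1 h (even_of_dvd h) odd_one
    have h2 : (1 : ZMod N).val = 1 % N := by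
      have := ZMod.val_natCast N 1
      simpa using this
    simp [h2, h1]
  map_mul' x y := by
    by_cases hx : IsUnit x
    · by_cases hy : IsUnit y
      · have hx' := val_odd (even_of_dvd h) hx
        have hy' := val_odd (even_of_dvd h) hy
        simp only [IsUnit.mul_iff, hx, hy, and_self, if_true]
        rw [ZMod.val_mul, J_mod D N _ h (even_of_dvd h) (hx'.mul hy'),
          jacobiSym.mul_right' _ hx'.pos.ne' hy'.pos.ne']
      · simp [hy]
    · simp [hx]
  map_nonunit' x hx := by simp [hx]

lemma chi_val (D N : ℕ) [NeZero N] (h : 4 * D ∣ N) {x : ZMod N} (hx : IsUnit x) :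
    chi D N h x = J((D : ℤ) | x.val) := by
  classical
  change (if IsUnit x then _ else _) = _
  rw [if_pos hx]

lemma chi_nat (D N : ℕ) [NeZero N] (h : 4 * D ∣ N) {n : ℕ} (hx : IsUnit (n : ZMod N)) :
    chi D N h n = J((D : ℤ) | n) := by
  rw [chi_val D N h hx, ZMod.val_natCast]
  have h1 := (ZMod.isUnit_iff_coprime n N).1 hx
  have : Odd n := by
    rw [← Nat.not_even_iff_odd]
    intro h2
    have := Nat.dvd_gcd (even_iff_two_dvd.1 h2) (even_iff_two_dvd.1 (even_of_dvd h))
    rw [h1] at this; omega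
  exact J_mod D N n h (even_of_dvd h) this

lemma chi_quad (D N : ℕ) [NeZero N] (h : 4 * D ∣ N) : (chi D N h).IsQuadratic := by
  intro x
  by_cases hx : IsUnit x
  · rw [chi_val D N h hx]; exact jacobiSym.trichotomy _ _
  · left; exact MulChar.map_nonunit _ hx

lemma chi_mul (D E N : ℕ) [NeZero N] (h1 : 4 * D ∣ N) (h2 : 4 * E ∣ N) (h3 : 4 * (D * E) ∣ N) :
    chi D N h1 * chi E N h2 = chi (D * E) N h3 := by
  refine MulChar.ext' fun x => ?_
  rw [MulChar.mul_apply]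
  by_cases hx : IsUnit x
  · rw [chi_val D N h1 hx, chi_val E N h2 hx, chi_val _ N h3 hx, Nat.cast_mul, jacobiSym.mul_left]
  · simp [MulChar.map_nonunit _ hx]

/-- complex version -/
def cc {N : ℕ} (χ : DirichletCharacter ℤ N) : DirichletCharacter ℂ N := χ.ringHomComp (Int.castRingHom ℂ)

lemma cc_apply {N : ℕ} (χ : DirichletCharacter ℤ N) (x : ZMod N) : cc χ x = ((χ x : ℤ) : ℂ) := rfl

lemma cc_one (N : ℕ) : cc (1 : DirichletCharacter ℤ N) = 1 := by
  refine MulChar.ext fun x => ?_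
  rw [cc_apply]; simp

lemma cc_inj {N : ℕ} {χ ψ : DirichletCharacter ℤ N} (h : cc χ = cc ψ) : χ = ψ := by
  refine MulChar.ext' fun x => ?_
  have := DFunLike.congr_fun h x
  rw [cc_apply, cc_apply] at this
  exact_mod_cast this

lemma cc_ne_one {N : ℕ} {χ : DirichletCharacter ℤ N} (h : χ ≠ 1) : cc χ ≠ 1 :=
  fun h2 => h (cc_inj (h2.trans (cc_one N).symm))

lemma chi_change (D N M : ℕ) [NeZero N] [NeZero M] (h : 4 * D ∣ N) (hNM : N ∣ M) :
    cc (chi D M (h.trans hNM)) = DirichletCharacter.changeLevel hNM (cc (chi D N h)) := by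
  refine MulChar.ext' fun x => ?_
  by_cases hx : IsUnit x
  · have hcl := DirichletCharacter.changeLevel_eq_cast_of_dvd (cc (chi D N h)) hNM hx.unit
    rw [IsUnit.unit_spec] at hcl
    rw [hcl, cc_apply, cc_apply, chi_val _ _ _ hx]
    have hx2 : x = ((x.val : ℕ) : ZMod M) := by rw [ZMod.natCast_zmod_val]
    have hc := (ZMod.isUnit_iff_coprime x.val M).1 (by rwa [← hx2])
    have e : (x.cast : ZMod N) = ((x.val : ℕ) : ZMod N) := by
      rw [ZMod.cast_eq_val]
    rw [e, chi_nat D N h ((ZMod.isUnit_iff_coprime _ _).2 (hc.coprime_dvd_right hNM))]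
  · rw [MulChar.map_nonunit _ hx, MulChar.map_nonunit _ hx]

lemma exists_neg (D N : ℕ) (hD : ¬ IsSquare D) : ∃ q : ℕ, N < q ∧ q.Prime ∧ J((D : ℤ) | q) = -1 := by
  have hD0 : D ≠ 0 := by rintro rfl; exact hD (IsSquare.zero)
  obtain ⟨a, r, hra, hsf⟩ := Nat.sq_mul_squarefree D
  have hr0 : r ≠ 0 := by rintro rfl; simp at hra; exact hD0 hra.symm
  have ha0 : a ≠ 0 := by rintro rfl; simp at hra; exact hD0 hra.symm
  have ha1 : a ≠ 1 := by rintro rfl; exact hD ⟨r, by rw [← hra]; ring⟩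
  have red : ∀ q : ℕ, r < q → q.Prime → J((a : ℤ) | q) = -1 → J((D : ℤ) | q) = -1 := by
    intro q hq hqp h
    rw [← hra]; push_cast
    rw [jacobiSym.mul_left, h, jacobiSym.pow_left, jacobiSym.sq_one, one_mul]
    rw [Int.gcd_natCast_natCast]
    exact (Nat.coprime_of_lt_prime hr0 hq hqp).symm
  by_cases hodd : ∃ p : ℕ, p.Prime ∧ p ≠ 2 ∧ p ∣ a
  · obtain ⟨p, hp, hp2, b, rfl⟩ := hodd
    haveI : Fact p.Prime := ⟨hp⟩
    have hb0 : b ≠ 0 := right_ne_zero_of_mul ha0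
    have hpb : p.Coprime b := by
      rw [Nat.squarefree_mul_iff] at hsf
      exact hsf.1
    have hp4 : p.Coprime (4 * b) := by
      refine Nat.Coprime.mul_right ?_ hpb
      rw [show 4 = 2 ^ 2 by rfl]
      exact ((Nat.coprime_primes hp Nat.prime_two).2 hp2).pow_right 2
    obtain ⟨c, hc⟩ := FiniteField.exists_nonsquare (F := ZMod p) (by rw [ZMod.ringChar_zmod_n]; exact hp2)
    have hc0 : c ≠ 0 := by rintro rfl; exact hc IsSquare.zero
    let e := (Nat.chineseRemainder hp4.symm 1 c.val)
    have he1 : (e : ℕ) ≡ 1 [MOD 4 * b] := e.2.1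
    have he2 : (e : ℕ) ≡ c.val [MOD p] := e.2.2
    have hu : IsUnit (((e : ℕ) : ℕ) : ZMod (4 * b * p)) := by
      rw [ZMod.isUnit_iff_coprime]
      refine Nat.Coprime.mul_right ?_ ?_
      · rw [Nat.Coprime, he1.gcd_eq]; simp
      · rw [Nat.Coprime, he2.gcd_eq, ← Nat.Coprime, ← ZMod.isUnit_iff_coprime, ZMod.natCast_zmod_val]
        exact hc0.isUnit
    haveI : NeZero (4 * b * p) := ⟨by have := hp.ne_zero; positivity⟩
    obtain ⟨q, hq, hqp, hqe⟩ := Nat.forall_exists_prime_gt_and_eq_mod hu (N + r)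
    rw [ZMod.natCast_eq_natCast_iff] at hqe
    have hq1 : q ≡ 1 [MOD 4 * b] := (hqe.of_mul_right p).trans he1
    have hq2 : q ≡ c.val [MOD p] := (hqe.of_mul_left (4 * b)).trans he2
    have hq4 : q % 4 = 1 := (hq1.of_mul_right b : q ≡ 1 [MOD 4])
    have hqo : Odd q := Nat.odd_iff.2 (by omega)
    refine ⟨q, by omega, hqp, red q (by omega) hqp ?_⟩
    push_cast
    rw [jacobiSym.mul_left, jacobiSym.mod_right' b hqo, hq1, Nat.mod_eq_of_lt (by omega), jacobiSym.one_right,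
      mul_one, jacobiSym.quadratic_reciprocity_one_mod_four' (hp.odd_of_ne_two hp2) hq4,
      ← jacobiSym.legendreSym.to_jacobiSym, legendreSym.eq_neg_one_iff]
    have : ((q : ℤ) : ZMod p) = c := by
      rw [Int.cast_natCast, (ZMod.natCast_eq_natCast_iff _ _ _).2 hq2, ZMod.natCast_zmod_val]
    rwa [this]
  · push Not at hodd
    have ha2 : a = 2 := by
      obtain ⟨p, hp, hpa⟩ := Nat.exists_prime_and_dvd ha1
      have hp2 : p = 2 := by by_contra h; exact hodd p hp h hpa
      subst hp2
      obtain ⟨b, rfl⟩ := hpa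
      by_cases hb : b = 1
      · rw [hb]
      · obtain ⟨p, hp, hpb⟩ := Nat.exists_prime_and_dvd hb
        have hp2 : p = 2 := by by_contra h; exact hodd p hp h (hpb.mul_left 2)
        subst hp2
        have := hsf 2 (mul_dvd_mul_left 2 hpb)
        simp at this
    subst ha2
    haveI : NeZero 8 := ⟨by norm_num⟩
    obtain ⟨q, hq, hqp, hqe⟩ := Nat.forall_exists_prime_gt_and_eq_mod (q := 8) (a := 5) (by decide) (N + r)
    refine ⟨q, by omega, hqp, red q (by omega) hqp ?_⟩
    have h8 : q % 8 = 5 := by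
      have := (ZMod.natCast_eq_natCast_iff q 5 8).1 (by rw [hqe]; rfl)
      exact this
    have := jacobiSym.at_two (Nat.odd_iff.2 (by omega : q % 2 = 1))
    push_cast
    rw [this, hqe]
    rfl

lemma chi_ne_one (D N : ℕ) [NeZero N] (h : 4 * D ∣ N) (hD : ¬ IsSquare D) : chi D N h ≠ 1 := by
  obtain ⟨q, hq, hqp, hJ⟩ := exists_neg D N hD
  intro h1
  have hu : IsUnit (q : ZMod N) := by
    rw [ZMod.isUnit_iff_coprime]
    exact (Nat.coprime_of_lt_prime (NeZero.ne N) hq hqp)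
  have h2 := chi_nat D N h hu
  rw [h1, MulChar.one_apply hu, hJ] at h2
  norm_num at h2

lemma chi_eq_of_mul_eq_one (N : ℕ) (χ ψ : DirichletCharacter ℤ N) (hψ : ψ.IsQuadratic)
    (h : χ * ψ = 1) : χ = ψ := by
  have := hψ.sq_eq_one
  calc χ = χ * (ψ ^ 2) := by rw [this, mul_one]
    _ = (χ * ψ) * ψ := by rw [sq, mul_assoc]
    _ = ψ := by rw [h, one_mul]
end

noncomputable section
open NumberTheorySymbols

lemma isSquare_mul_zmod (D : ℤ) {m n : ℕ} (hc : m.Coprime n) (hm : IsSquare (D : ZMod m))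
    (hn : IsSquare (D : ZMod n)) : IsSquare (D : ZMod (m * n)) := by
  have : IsSquare (D : ZMod m × ZMod n) := by
    obtain ⟨x, hx⟩ := hm
    obtain ⟨y, hy⟩ := hn
    exact ⟨(x, y), by ext <;> simp [hx, hy]⟩
  simpa only [map_intCast] using this.map (ZMod.chineseRemainder hc).symm

lemma isSquare_sqfree (D : ℤ) (s : ℕ) (hs : Squarefree s) (h : ∀ p : ℕ, p.Prime → p ∣ s → IsSquare (D : ZMod p)) :
    IsSquare (D : ZMod s) := by
  induction s using induction_on_primes with
  | zero => simp at hs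
  | one => exact ⟨0, Subsingleton.elim _ _⟩
  | prime_mul p a hp ih =>
    have h1 := Nat.squarefree_mul_iff.1 hs
    exact isSquare_mul_zmod D h1.1 (h p hp (Dvd.intro _ rfl)) (ih h1.2.2 fun q hq hqa => h q hq (hqa.mul_left p))

theorem supp_TT (n σ d : ℤ) (hσ : σ = 1 ∨ σ = -1) (hd : d = n ^ 2 - 4 * σ) (hn : 3 ≤ n)
    (htor : ∀ g : ClassGroup (QOrder d), g ^ 2 = 1) (D N : ℕ) [NeZero N] (hD : (D : ℤ) = d) (h : 4 * D ∣ N)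
    (k : ℕ) (hk : PP (chi D N h) k) : IsSquare k ∨ k ∈ TT n d := by
  obtain ⟨s, t, hts, hsf⟩ := Nat.sq_mul_squarefree k
  have ht0 : t ≠ 0 := by rintro rfl; simp at hts; exact hk.1 hts.symm
  have hs0 : s ≠ 0 := by rintro rfl; simp at hts; exact hk.1 hts.symm
  have hp : ∀ p : ℕ, p.Prime → p ∣ s → p.Coprime N ∧ IsSquare (d : ZMod p) := by
    intro p hp hps
    haveI : Fact p.Prime := ⟨hp⟩
    have hf : k.factorization p = 2 * t.factorization p + 1 := by
      rw [← hts, Nat.factorization_mul (pow_ne_zero _ ht0) hs0, Nat.factorization_pow, Finsupp.add_apply,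
        Finsupp.smul_apply, smul_eq_mul]
      have h1 := hsf.natFactorization_le_one p
      have h2 := (hp.dvd_iff_one_le_factorization hs0).1 hps
      omega
    have hu : IsUnit (p : ZMod N) := by
      by_contra hu
      have := (hk.2 p hp).1 hu
      omega
    have hc := (ZMod.isUnit_iff_coprime p N).1 hu
    refine ⟨hc, ?_⟩
    have hne : chi D N h p ≠ -1 := by
      intro h2
      have := (hk.2 p hp).2 h2
      rw [hf, Nat.even_iff] at this
      omega
    have h1 : chi D N h p = 1 := by
      rcases chi_quad D N h p with h2 | h2 | h2
      · exact absurd h2 ((hu.map (chi D N h)).ne_zero)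
      · exact h2
      · exact absurd h2 hne
    rw [chi_nat D N h hu, ← jacobiSym.legendreSym.to_jacobiSym, hD] at h1
    by_contra h3
    rw [(legendreSym.eq_neg_one_iff p).2 h3] at h1
    norm_num at h1
  rcases eq_or_ne s 1 with rfl | hs1
  · left; exact ⟨t, by rw [← hts]; ring⟩
  right
  have hcop : s.Coprime N := by
    refine Nat.coprime_of_dvd fun p hpp hps hpN => ?_
    have := (hp p hpp hps).1
    have h2 := Nat.dvd_gcd (dvd_refl p) hpN
    rw [this] at h2
    exact hpp.one_lt.ne' (Nat.dvd_one.1 h2)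
  have hcop4 : s.Coprime 4 := hcop.coprime_dvd_right ((Dvd.intro D rfl).trans h)
  have hcopD : s.Coprime D := hcop.coprime_dvd_right ((Dvd.intro_left 4 rfl).trans h)
  have hsodd : s % 2 = 1 := by
    by_contra h2
    have := Nat.dvd_gcd (show 2 ∣ s by omega) (show 2 ∣ 4 by norm_num)
    rw [hcop4] at this; omega
  obtain ⟨x, hx⟩ := isSquare_sqfree d s hsf fun p hpp hps => (hp p hpp hps).2
  haveI : NeZero s := ⟨hs0⟩
  have hb0 : ∃ b0 : ℤ, (s : ℤ) ∣ b0 ^ 2 - d := by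
    refine ⟨x.val, ?_⟩
    rw [← ZMod.intCast_zmod_eq_zero_iff_dvd]
    push_cast
    rw [ZMod.natCast_zmod_val, hx]; ring
  obtain ⟨b0, hb0⟩ := hb0
  have hb : ∃ b : ℤ, (s : ℤ) ∣ b ^ 2 - d ∧ (2 : ℤ) ∣ b - n := by
    by_cases hpar : (2 : ℤ) ∣ b0 - n
    · exact ⟨b0, hb0, hpar⟩
    · refine ⟨b0 + s, ?_, by omega⟩
      rw [show (b0 + (s : ℤ)) ^ 2 - d = (b0 ^ 2 - d) + s * (2 * b0 + s) by ring]
      exact dvd_add hb0 (Dvd.intro _ rfl)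
  obtain ⟨b, hb1, hb2⟩ := hb
  have hb4 : (4 : ℤ) ∣ b ^ 2 - d := by
    obtain ⟨c, hc⟩ := hb2
    refine ⟨c ^ 2 + c * n + σ, ?_⟩
    rw [hd, show b = n + 2 * c by linarith]; ring
  have hb4s : 4 * (s : ℤ) ∣ b ^ 2 - d := by
    refine IsCoprime.mul_dvd ?_ hb4 hb1
    exact (Nat.isCoprime_iff_coprime (m := 4) (n := s)).2 hcop4.symm
  obtain ⟨u, v, hv, huv, hle⟩ := keyA n σ d hσ hd hn htor s b (by omega)
    (by rw [← hD]; exact Nat.isCoprime_iff_coprime.2 hcopD) hb4s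
  refine ⟨Nat.pos_of_ne_zero hk.1, t ^ 2 * u, t ^ 2 * v, ?_, ?_, ?_⟩
  · exact mul_ne_zero (pow_ne_zero _ (by exact_mod_cast ht0)) hv
  · rw [← hts]; push_cast
    rcases huv with huv | huv
    · left
      calc _ = (t : ℤ) ^ 4 * (u ^ 2 - d * v ^ 2) := by ring
        _ = _ := by rw [huv]; ring
    · right
      calc _ = (t : ℤ) ^ 4 * (u ^ 2 - d * v ^ 2) := by ring
        _ = _ := by rw [huv]; ring
  · rw [← hts]; push_cast
    calc _ = (t : ℤ) ^ 4 * ((n - 2) * v ^ 2) := by ring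
      _ ≤ (t : ℤ) ^ 4 * (s : ℤ) ^ 2 := by gcongr
      _ = _ := by ring
end

noncomputable section
open Complex Filter Topology Metric LSeries
open scoped ComplexOrder

/-- Two-fold analytic function. -/
def A2 {N : ℕ} [NeZero N] (χ : DirichletCharacter ℤ N) (s : ℂ) : ℂ :=
  DirichletCharacter.LFunctionTrivChar₁ N s * (cc χ).LFunction s

/-- Four-fold analytic function. -/
def A4 {N : ℕ} [NeZero N] (χ ψ : DirichletCharacter ℤ N) (s : ℂ) : ℂ :=
  A2 ψ s * ((cc χ).LFunction s * (cc (χ * ψ)).LFunction s)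

lemma A2_diff {N : ℕ} [NeZero N] (χ : DirichletCharacter ℤ N) (h : χ ≠ 1) : Differentiable ℂ (A2 χ) :=
  (DirichletCharacter.differentiable_LFunctionTrivChar₁ N).mul
    (DirichletCharacter.differentiable_LFunction (cc_ne_one h))

lemma A4_diff {N : ℕ} [NeZero N] (χ ψ : DirichletCharacter ℤ N) (h : χ ≠ 1) (h2 : ψ ≠ 1) (h3 : χ * ψ ≠ 1) :
    Differentiable ℂ (A4 χ ψ) :=
  (A2_diff ψ h2).mul ((DirichletCharacter.differentiable_LFunction (cc_ne_one h)).mul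
    (DirichletCharacter.differentiable_LFunction (cc_ne_one h3)))

lemma af_has {N : ℕ} [NeZero N] (χ : DirichletCharacter ℤ N) {s : ℂ} (hs : 1 < s.re) :
    LSeriesHasSum (fun k => ((af χ k : ℤ) : ℂ)) s ((cc χ).LFunction s) := by
  have h1 := (DirichletCharacter.LSeriesSummable_of_one_lt_re (cc χ) hs).LSeriesHasSum
  rw [← DirichletCharacter.LFunction_eq_LSeries _ hs] at h1
  refine (LSeriesHasSum_congr _ _ fun {n} hn => ?_).1 h1
  rw [af_apply χ hn, cc_apply]

lemma mul_has {f g : ArithmeticFunction ℤ} {s x y : ℂ} (hf : LSeriesHasSum (fun k => ((f k : ℤ) : ℂ)) s x)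
    (hg : LSeriesHasSum (fun k => ((g k : ℤ) : ℂ)) s y) :
    LSeriesHasSum (fun k => (((f * g) k : ℤ) : ℂ)) s (x * y) := by
  have := ArithmeticFunction.LSeriesHasSum_mul (f := (f : ArithmeticFunction ℂ)) (g := (g : ArithmeticFunction ℂ)) hf hg
  rw [← ArithmeticFunction.intCoe_mul] at this
  exact this

lemma triv_eq (N : ℕ) [NeZero N] {s : ℂ} (hs : s ≠ 1) : DirichletCharacter.LFunctionTrivChar₁ N s =
    (s - 1) * (1 : DirichletCharacter ℂ N).LFunction s :=
  Function.update_of_ne hs _ _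

lemma rr_has {N : ℕ} [NeZero N] (χ : DirichletCharacter ℤ N) {s : ℂ} (hs : 1 < s.re) :
    LSeriesHasSum (fun k => ((rr χ k : ℤ) : ℂ)) s ((1 : DirichletCharacter ℂ N).LFunction s * (cc χ).LFunction s) := by
  have := mul_has (af_has (1 : DirichletCharacter ℤ N) hs) (af_has χ hs)
  rwa [cc_one] at this

lemma qq_has {N : ℕ} [NeZero N] (χ ψ : DirichletCharacter ℤ N) {s : ℂ} (hs : 1 < s.re) :
    LSeriesHasSum (fun k => ((qq χ ψ k : ℤ) : ℂ)) s ((1 : DirichletCharacter ℂ N).LFunction s * (cc ψ).LFunction s *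
      ((cc χ).LFunction s * (cc (χ * ψ)).LFunction s)) :=
  mul_has (rr_has ψ hs) (mul_has (af_has χ hs) (af_has (χ * ψ) hs))

lemma ne_one_of_re {s : ℂ} (hs : 1 < s.re) : s ≠ 1 := by rintro rfl; simp at hs

lemma A2_eq {N : ℕ} [NeZero N] (χ : DirichletCharacter ℤ N) {s : ℂ} (hs : 1 < s.re) :
    A2 χ s = (s - 1) * LSeries (fun k => (((rr χ k : ℤ) : ℝ) : ℂ)) s := by
  have := (rr_has χ hs).LSeries_eq
  simp only [ofReal_intCast]
  rw [this, A2, triv_eq N (ne_one_of_re hs)]; ring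

lemma A4_eq {N : ℕ} [NeZero N] (χ ψ : DirichletCharacter ℤ N) {s : ℂ} (hs : 1 < s.re) :
    A4 χ ψ s = (s - 1) * LSeries (fun k => (((qq χ ψ k : ℤ) : ℝ) : ℂ)) s := by
  have := (qq_has χ ψ hs).LSeries_eq
  simp only [ofReal_intCast]
  rw [this, A4, A2, triv_eq N (ne_one_of_re hs)]; ring

lemma rr_absc {N : ℕ} [NeZero N] (χ : DirichletCharacter ℤ N) :
    abscissaOfAbsConv (fun k => (((rr χ k : ℤ) : ℝ) : ℂ)) ≤ 1 := by
  refine abscissaOfAbsConv_le_of_forall_lt_LSeriesSummable fun y hy => ?_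
  simp only [ofReal_intCast]
  exact (rr_has χ (by simpa using hy)).LSeriesSummable

lemma qq_absc {N : ℕ} [NeZero N] (χ ψ : DirichletCharacter ℤ N) :
    abscissaOfAbsConv (fun k => (((qq χ ψ k : ℤ) : ℝ) : ℂ)) ≤ 1 := by
  refine abscissaOfAbsConv_le_of_forall_lt_LSeriesSummable fun y hy => ?_
  simp only [ofReal_intCast]
  exact (qq_has χ ψ (by simpa using hy)).LSeriesSummable

lemma A_bounds : ∃ C : ℝ, 1 ≤ C ∧ ∀ (N : ℕ) [NeZero N] (χ ψ : DirichletCharacter ℤ N), ψ ≠ 1 →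
    ∀ s ∈ sphere (2 : ℂ) (4 / 3), ‖A2 ψ s‖ ≤ C * (N : ℝ) ^ 4 ∧
      (χ ≠ 1 → χ * ψ ≠ 1 → ‖A4 χ ψ s‖ ≤ C * (N : ℝ) ^ 4) := by
  obtain ⟨C, hC, h1⟩ := L_bound
  obtain ⟨C', hC', h2⟩ := triv_bound
  refine ⟨C' * C ^ 3, one_le_mul_of_one_le_of_one_le hC' (one_le_pow₀ hC), ?_⟩
  intro N _ χ ψ hψ s hs
  have hN : (1 : ℝ) ≤ N := by exact_mod_cast Nat.one_le_iff_ne_zero.2 (NeZero.ne N)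
  have b0 := h2 N s hs
  have b1 := h1 N (cc ψ) (cc_ne_one hψ) s hs
  have b2 : ‖A2 ψ s‖ ≤ (C' * N) * (C * N) := by
    rw [A2, norm_mul]
    exact mul_le_mul b0 b1 (norm_nonneg _) (by positivity)
  have hCN : 1 ≤ C * N := one_le_mul_of_one_le_of_one_le hC hN
  constructor
  · calc _ ≤ _ := b2
      _ ≤ (C' * N) * (C * N) * ((C * N) * (C * N)) := by
          refine le_mul_of_one_le_right (by positivity) (one_le_mul_of_one_le_of_one_le hCN hCN)
      _ = _ := by ring
  · intro hχ hχψ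
    have b3 := h1 N (cc χ) (cc_ne_one hχ) s hs
    have b4 := h1 N (cc (χ * ψ)) (cc_ne_one hχψ) s hs
    calc ‖A4 χ ψ s‖ ≤ (C' * N) * (C * N) * ((C * N) * (C * N)) := by
          rw [A4, norm_mul, norm_mul]
          refine mul_le_mul b2 (mul_le_mul b3 b4 (norm_nonneg _) (by positivity)) (by positivity) (by positivity)
      _ = _ := by ring

lemma A2_zero {N : ℕ} [NeZero N] (χ : DirichletCharacter ℤ N) (hχ : χ.IsQuadratic) (h : χ ≠ 1) (β₀ : ℝ) (hβ : β₀ < 1)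
    (hneg : (A2 χ β₀).re < 0) : ∃ β : ℝ, β₀ < β ∧ β < 1 ∧ A2 χ β = 0 := by
  have hd := A2_diff χ h
  have hpos : ∀ x : ℝ, 1 < x → 0 ≤ A2 χ x := by
    intro x hx
    rw [A2_eq χ (by simpa using hx)]
    refine mul_nonneg ?_ ?_
    · have : (0 : ℂ) ≤ ((x - 1 : ℝ) : ℂ) := by
        rw [Complex.zero_le_real]; linarith
      simpa using this
    · refine tsum_nonneg fun k => term_nonneg ?_ x
      rw [Complex.zero_le_real]
      exact_mod_cast rr_nonneg χ hχ k
  have hconj : (starRingEnd ℂ) ∘ (A2 χ) ∘ (starRingEnd ℂ) = A2 χ := by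
    have hd2 : Differentiable ℂ ((starRingEnd ℂ) ∘ (A2 χ) ∘ (starRingEnd ℂ)) := by
      intro s
      have := (hd ((starRingEnd ℂ) s)).conj_conj
      simpa using this
    refine AnalyticOnNhd.eq_of_frequently_eq (z₀ := 2) (fun z _ => hd2.analyticAt z) (fun z _ => hd.analyticAt z) ?_
    have ht : Tendsto (fun x : ℝ => (x : ℂ)) (𝓝[≠] (2 : ℝ)) (𝓝[≠] (2 : ℂ)) := by
      refine tendsto_nhdsWithin_iff.2 ⟨?_, ?_⟩
      · have : Tendsto (fun x : ℝ => (x : ℂ)) (𝓝 (2 : ℝ)) (𝓝 ((2 : ℝ) : ℂ)) := continuous_ofReal.tendsto 2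
        simp only [ofReal_ofNat] at this
        exact this.mono_left nhdsWithin_le_nhds
      · filter_upwards [self_mem_nhdsWithin] with x hx
        intro h2
        apply hx
        have : (x : ℂ) = 2 := h2
        exact_mod_cast this
    refine ht.frequently (Eventually.frequently ?_)
    have : ∀ᶠ x in 𝓝[≠] (2 : ℝ), 1 < x := nhdsWithin_le_nhds (lt_mem_nhds (by norm_num))
    filter_upwards [this] with x hx
    have h0 := hpos x hx
    simp only [Function.comp_apply, conj_ofReal]
    rw [Complex.conj_eq_iff_im]
    exact ((Complex.nonneg_iff).1 h0).2.symm
  have him : ∀ x : ℝ, (A2 χ x).im = 0 := by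
    intro x
    have := congrFun hconj (x : ℂ)
    simp only [Function.comp_apply, conj_ofReal] at this
    exact Complex.conj_eq_iff_im.1 this
  have hcont : Continuous (fun x : ℝ => (A2 χ x).re) :=
    continuous_re.comp (hd.continuous.comp continuous_ofReal)
  have h1 : 0 ≤ (A2 χ (1 : ℝ)).re := by
    have ht : Tendsto (fun x : ℝ => (A2 χ x).re) (𝓝[>] 1) (𝓝 (A2 χ (1 : ℝ)).re) :=
      (hcont.tendsto 1).mono_left nhdsWithin_le_nhds
    refine ge_of_tendsto ht ?_
    filter_upwards [self_mem_nhdsWithin] with x hx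
    exact ((Complex.nonneg_iff).1 (hpos x hx)).1
  have h1' : A2 χ (1 : ℝ) ≠ 0 := by
    rw [A2, ofReal_one]
    exact mul_ne_zero (DirichletCharacter.LFunctionTrivChar₁_apply_one_ne_zero N)
      (DirichletCharacter.LFunction_apply_one_ne_zero (cc_ne_one h))
  have hone_pos : 0 < (A2 χ (1 : ℝ)).re := by
    refine lt_of_le_of_ne h1 fun h2 => h1' (Complex.ext h2.symm (him 1))
  obtain ⟨β, hb, hb2⟩ := intermediate_value_Ioo hβ.le hcont.continuousOn ⟨hneg, hone_pos⟩
  exact ⟨β, hb.1, hb.2, Complex.ext hb2 (him β)⟩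

lemma zero_change {N M : ℕ} [NeZero N] [NeZero M] (D : ℕ) (h : 4 * D ∣ N) (hNM : N ∣ M) (β : ℝ) (hβ : β < 1)
    (h0 : A2 (chi D N h) β = 0) : A2 (chi D M (h.trans hNM)) β = 0 := by
  have hb : (β : ℂ) ≠ 1 := by
    intro h; have : β = 1 := by exact_mod_cast h
    linarith
  rw [A2, triv_eq _ hb] at h0 ⊢
  have e1 := DirichletCharacter.LFunction_changeLevel hNM (1 : DirichletCharacter ℂ N) (s := β) (Or.inr hb)
  have e2 := DirichletCharacter.LFunction_changeLevel hNM (cc (chi D N h)) (s := β) (Or.inr hb)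
  rw [← chi_change] at e2
  rw [map_one] at e1
  rw [e1, e2]
  linear_combination (∏ p ∈ M.primeFactors, (1 - (1 : DirichletCharacter ℂ N) p * (p : ℂ) ^ (-(β : ℂ)))) *
    (∏ p ∈ M.primeFactors, (1 - (cc (chi D N h)) p * (p : ℂ) ^ (-(β : ℂ)))) * h0
end

noncomputable section
open Complex Filter Topology Metric LSeries

theorem fin_all (B β : ℝ) (hB : 1 ≤ B) (hβ : 999 / 1000 ≤ β) (hβ1 : β < 1) : ∃ n0 : ℤ, ∀ n σ d : ℤ,
    (σ = 1 ∨ σ = -1) → d = n ^ 2 - 4 * σ → 3 ≤ n → n0 ≤ n → (∀ g : ClassGroup (QOrder d), g ^ 2 = 1) →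
    ∀ (D N : ℕ) [NeZero N] (_ : (D : ℤ) = d) (h : 4 * D ∣ N), (N : ℝ) ≤ B * (n : ℝ) ^ 2 →
    ¬ (0 ≤ (A2 (chi D N h) β).re) ∧
    ∀ χ : DirichletCharacter ℤ N, χ.IsQuadratic → χ ≠ 1 → χ * chi D N h ≠ 1 →
      ¬ (0 ≤ (A4 χ (chi D N h) β).re) := by
  obtain ⟨C1, hC1, hA⟩ := A_bounds
  obtain ⟨C2, hC2, hdiv⟩ := divisor_bound (1 / 6000) (by norm_num)
  obtain ⟨n0, hn0⟩ := final_contra (C1 * B ^ 4 + C2 ^ 3) β (by positivity) hβ hβ1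
  refine ⟨n0, ?_⟩
  intro n σ d hσ hd hn hnn htor D N _ hD h hN
  have hDsq : ¬ IsSquare D := by
    rintro ⟨r, hr⟩
    exact nonsq n σ d hσ hd hn ⟨r, by rw [← hD, hr]; push_cast; ring⟩
  have hne := chi_ne_one D N h hDsq
  have hq := chi_quad D N h
  have hdiv3 : ∀ k : ℕ, 0 < k → (k.divisors.card : ℝ) ^ 3 ≤ (C1 * B ^ 4 + C2 ^ 3) * (k : ℝ) ^ (1 / 2000 : ℝ) := by
    intro k hk
    calc (k.divisors.card : ℝ) ^ 3 ≤ (C2 * (k : ℝ) ^ (1 / 6000 : ℝ)) ^ 3 := by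
          gcongr; exact hdiv k hk.ne'
      _ = C2 ^ 3 * (k : ℝ) ^ (1 / 2000 : ℝ) := by
          rw [mul_pow, ← Real.rpow_natCast ((k : ℝ) ^ (1 / 6000 : ℝ)), ← Real.rpow_mul (by positivity)]
          norm_num
      _ ≤ _ := by
          gcongr
          have : 0 ≤ C1 * B ^ 4 := by positivity
          linarith
  have hNb : C1 * (N : ℝ) ^ 4 ≤ (C1 * B ^ 4 + C2 ^ 3) * (n : ℝ) ^ 8 := by
    calc C1 * (N : ℝ) ^ 4 ≤ C1 * (B * (n : ℝ) ^ 2) ^ 4 := by gcongr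
      _ = C1 * B ^ 4 * (n : ℝ) ^ 8 := by ring
      _ ≤ _ := by
          have : 0 ≤ C2 ^ 3 * (n : ℝ) ^ 8 := by positivity
          linarith
  constructor
  · intro hre
    refine hn0 n σ d hσ hd hn hnn (fun k => ((rr (chi D N h) k : ℤ) : ℝ)) (A2 (chi D N h)) ?_ ?_ ?_ ?_
      (A2_diff _ hne) (rr_absc _) (fun s hs => A2_eq _ hs) ?_ hre
    · intro k; exact_mod_cast rr_nonneg _ hq k
    · simp [(rr_mult (chi D N h)).map_one]
    · intro k hk
      refine le_trans ?_ (hdiv3 k hk)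
      have h1 : rr (chi D N h) k ≤ k.divisors.card := (le_abs_self _).trans (rr_le _ hq k)
      have h2 : (1 : ℝ) ≤ k.divisors.card := by
        exact_mod_cast Finset.card_pos.2 ⟨1, Nat.one_mem_divisors.2 hk.ne'⟩
      calc ((rr (chi D N h) k : ℤ) : ℝ) ≤ (k.divisors.card : ℝ) := by exact_mod_cast h1
        _ ≤ _ := le_self_pow₀ h2 (by norm_num)
    · intro k hk
      exact supp_TT n σ d hσ hd hn htor D N hD h k (rr_supp _ (by exact_mod_cast hk))
    · intro s hs
      exact ((hA N 1 _ hne s hs).1).trans hNb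
  · intro χ hχ hχ1 hχψ hre
    refine hn0 n σ d hσ hd hn hnn (fun k => ((qq χ (chi D N h) k : ℤ) : ℝ)) (A4 χ (chi D N h)) ?_ ?_ ?_ ?_
      (A4_diff _ _ hχ1 hne hχψ) (qq_absc _ _) (fun s hs => A4_eq _ _ hs) ?_ hre
    · intro k; exact_mod_cast qq_nonneg _ _ hχ hq k
    · simp [(qq_mult χ (chi D N h)).map_one]
    · intro k hk
      refine le_trans ?_ (hdiv3 k hk)
      have h1 : qq χ (chi D N h) k ≤ (k.divisors.card : ℤ) ^ 3 := (le_abs_self _).trans (qq_le _ _ hχ hq k)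
      exact_mod_cast h1
    · intro k hk
      exact supp_TT n σ d hσ hd hn htor D N hD h k (qq_supp _ _ (by exact_mod_cast hk))
    · intro s hs
      exact ((hA N χ _ hne s hs).2 hχ1 hχψ).trans hNb

theorem main_bound : ∃ n0 : ℤ, ∀ n σ d : ℤ, (σ = 1 ∨ σ = -1) → d = n ^ 2 - 4 * σ → 3 ≤ n → n0 ≤ n →
    ¬ (∀ g : ClassGroup (QOrder d), g ^ 2 = 1) := by
  have hDpos : ∀ n σ d : ℤ, (σ = 1 ∨ σ = -1) → d = n ^ 2 - 4 * σ → 3 ≤ n →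
      ∃ D : ℕ, (D : ℤ) = d ∧ D ≠ 0 ∧ (D : ℝ) ≤ 2 * (n : ℝ) ^ 2 ∧ ¬ IsSquare D := by
    intro n σ d hσ hd hn
    have h1 : 0 < d := by rcases hσ with rfl | rfl <;> nlinarith
    have h2 : d ≤ 2 * n ^ 2 := by rcases hσ with rfl | rfl <;> nlinarith
    have e : ((d.toNat : ℕ) : ℤ) = d := Int.toNat_of_nonneg h1.le
    refine ⟨d.toNat, e, by omega, ?_, ?_⟩
    · have : ((d.toNat : ℕ) : ℤ) ≤ 2 * n ^ 2 := by rw [e]; exact h2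
      exact_mod_cast this
    · rintro ⟨r, hr⟩
      exact nonsq n σ d hσ hd hn ⟨r, by rw [← e, hr]; push_cast; ring⟩
  by_cases H : ∃ (D : ℕ) (_ : NeZero (4 * D)), ¬ IsSquare D ∧
      (A2 (chi D (4 * D) dvd_rfl) ((999 / 1000 : ℝ) : ℂ)).re < 0
  · obtain ⟨D1, hz, hD1, hneg⟩ := H
    have hD10 : D1 ≠ 0 := by rintro rfl; exact hD1 IsSquare.zero
    obtain ⟨β, hb0, hb1, hzero⟩ := A2_zero _ (chi_quad D1 _ dvd_rfl) (chi_ne_one D1 _ dvd_rfl hD1) _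
      (by norm_num) hneg
    have hD1r : (1 : ℝ) ≤ D1 := by exact_mod_cast Nat.one_le_iff_ne_zero.2 hD10
    obtain ⟨n0, hn0⟩ := fin_all (32 * D1) β (by linarith) hb0.le hb1
    refine ⟨n0, ?_⟩
    intro n σ d hσ hd hn hnn htor
    obtain ⟨D, hD, hD0, hDn, hDsq⟩ := hDpos n σ d hσ hd hn
    haveI : NeZero (4 * D1 * (4 * D)) := ⟨by positivity⟩
    obtain ⟨f2, f4⟩ := hn0 n σ d hσ hd hn hnn htor D (4 * D1 * (4 * D)) hD (Dvd.intro_left _ rfl) (by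
      push_cast
      nlinarith)
    have hz1 := zero_change (M := 4 * D1 * (4 * D)) D1 dvd_rfl (Dvd.intro _ rfl) β hb1 hzero
    set χ := chi D1 (4 * D1 * (4 * D)) ((dvd_refl _).trans (Dvd.intro _ rfl)) with hχ
    by_cases hone : χ * chi D (4 * D1 * (4 * D)) (Dvd.intro_left _ rfl) = 1
    · have := chi_eq_of_mul_eq_one _ _ _ (chi_quad _ _ _) hone
      rw [← this] at f2
      apply f2
      rw [hz1]; simp
    · apply f4 χ (chi_quad _ _ _) (chi_ne_one _ _ _ hD1) hone
      have hz2 : A4 χ (chi D (4 * D1 * (4 * D)) (Dvd.intro_left _ rfl)) β = 0 := by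
        unfold A2 at hz1
        unfold A4 A2
        linear_combination (((cc (chi D (4 * D1 * (4 * D)) (Dvd.intro_left _ rfl))).LFunction (β : ℂ)) *
          ((cc (χ * chi D (4 * D1 * (4 * D)) (Dvd.intro_left _ rfl))).LFunction (β : ℂ))) * hz1
      rw [hz2]; simp
  · push Not at H
    obtain ⟨n0, hn0⟩ := fin_all 8 (999 / 1000) (by norm_num) le_rfl (by norm_num)
    refine ⟨n0, ?_⟩
    intro n σ d hσ hd hn hnn htor
    obtain ⟨D, hD, hD0, hDn, hDsq⟩ := hDpos n σ d hσ hd hn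
    haveI : NeZero (4 * D) := ⟨by positivity⟩
    obtain ⟨f2, -⟩ := hn0 n σ d hσ hd hn hnn htor D (4 * D) hD dvd_rfl (by
      push_cast
      linarith)
    exact f2 (H D inferInstance hDsq)

end

/-- There are only finitely many unit-generated real quadratic orders (the orders
`O_{n²-4}` for `n ≥ 3` and `O_{n²+4}` for `n ≥ 1`) whose (wide) class group is
`2`-torsion. -/
theorem finite_unitGenerated_twoTorsion_classGroup :
    ({n : ℤ | 3 ≤ n ∧ ∀ g : ClassGroup (QOrder (n ^ 2 - 4)), g ^ 2 = 1} ∪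
      {n : ℤ | 1 ≤ n ∧ ∀ g : ClassGroup (QOrder (n ^ 2 + 4)), g ^ 2 = 1}).Finite := by
  obtain ⟨n0, hn0⟩ := main_bound
  refine (Set.finite_Icc (1 : ℤ) (max n0 3)).subset ?_
  rintro n (⟨h1, h2⟩ | ⟨h1, h2⟩)
  · refine ⟨by omega, ?_⟩
    by_contra h
    push Not at h
    exact hn0 n 1 (n ^ 2 - 4) (Or.inl rfl) (by ring) (by omega) ((le_max_left _ _).trans h.le) h2
  · refine ⟨by omega, ?_⟩
    by_contra h
    push Not at h
    have h3 : 3 ≤ n := (le_max_right _ _).trans h.le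
    exact hn0 n (-1) (n ^ 2 + 4) (Or.inr rfl) (by ring) h3 ((le_max_left _ _).trans h.le) h2
end
end

section
/- Let K be a real quadratic field and let O be a unit-generated order of K, that is, an order generated as a ℤ-module by its group of units O^×. Fix a real embedding of K, and let ε be the smallest unit of O satisfying ε > 1. Then O = ℤ + εℤ = ℤ[ε]. -/
noncomputable section

/-- `x` is a unit of the subring `O` of `ℝ`. -/
def IsUnitOf (O : Subring ℝ) (x : ℝ) : Prop := x ∈ O ∧ ∃ y ∈ O, x * y = 1

/-- `O` is an order of the subfield `K` of `ℝ`: a subring of the ring of integers of `K`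
that is a free `ℤ`-module of rank 2 with fraction field `K`. -/
def IsOrderOf (K : Subfield ℝ) (O : Subring ℝ) : Prop :=
  (O : Set ℝ) ⊆ K ∧ (∀ x ∈ O, IsIntegral ℤ x) ∧
    Module.Free ℤ O ∧ Module.finrank ℤ O = 2 ∧
    ∀ x ∈ K, ∃ p ∈ O, ∃ q ∈ O, q ≠ 0 ∧ x = p / q

/-- A subring `O` of `ℝ` is unit-generated if it is generated, as a `ℤ`-module
(equivalently, as an additive group), by its set of units. -/
def IsUnitGenerated (O : Subring ℝ) : Prop :=
  AddSubgroup.closure {x : ℝ | IsUnitOf O x} = O.toAddSubgroup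

/-- `K` is a real quadratic field: `K = ℚ(√D)` for a positive nonsquare integer `D`. -/
def IsRealQuadratic (K : Subfield ℝ) : Prop :=
  ∃ D : ℤ, 0 < D ∧ ¬ IsSquare D ∧ K = Subfield.closure {Real.sqrt D}

/-- The ring of integers (maximal order) of a subfield `K` of `ℝ`: the elements of `K`
that are integral over `ℤ`. -/
def ringOfIntegers (K : Subfield ℝ) : Subring ℝ :=
  (integralClosure ℤ ℝ).toSubring ⊓ K.toSubring

/-- A unit of an order of rank two is a root of a monic integer quadratic whose constant
term is a unit. -/
theorem unit_quadratic (O : Subring ℝ) (hF : Module.Free ℤ O) (hr : Module.finrank ℤ O = 2)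
    (e f : ℝ) (he : e ∈ O) (hf : f ∈ O) (hef : e * f = 1) :
    ∃ t d d' : ℤ, d * d' = 1 ∧ e ^ 2 - t * e + d = 0 := by
  have : Module.Finite ℤ O := Module.finite_of_finrank_pos (by omega)
  let b : Module.Basis (Fin 2) ℤ O := Module.finBasisOfFinrankEq ℤ O hr
  let x : O := ⟨e, he⟩
  let y : O := ⟨f, hf⟩
  have hxy : x * y = 1 := Subtype.ext hef
  let M := Algebra.leftMulMatrix b x
  let N := Algebra.leftMulMatrix b y
  have hMN : M * N = 1 := by
    rw [← map_mul, hxy, map_one]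
  refine ⟨M.trace, M.det, N.det, ?_, ?_⟩
  · rw [← Matrix.det_mul, hMN, Matrix.det_one]
  · have h1 : Polynomial.aeval M M.charpoly = 0 := Matrix.aeval_self_charpoly M
    have h2 : Polynomial.aeval x M.charpoly = 0 := by
      apply Algebra.leftMulMatrix_injective b
      rw [map_zero, ← Polynomial.aeval_algHom_apply]
      exact h1
    rw [Matrix.charpoly_fin_two] at h2
    have h3 := congrArg (fun z : O => (z : ℝ)) h2
    simpa [x] using h3

/-- If `O` is a unit-generated order of a real quadratic field `K` and `ε` is the smallest
unit of `O` with `ε > 1`, then `O = ℤ + εℤ = ℤ[ε]`. -/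
theorem unitGenerated_eq_zspan (K : Subfield ℝ) (hK : IsRealQuadratic K)
    (O : Subring ℝ) (hO : IsOrderOf K O) (hug : IsUnitGenerated O)
    (ε : ℝ) (hεu : IsUnitOf O ε) (hε1 : 1 < ε)
    (hmin : ∀ u : ℝ, IsUnitOf O u → 1 < u → ε ≤ u) :
    (∀ x : ℝ, x ∈ O ↔ ∃ a b : ℤ, x = (a : ℝ) + (b : ℝ) * ε) ∧
      O = Subring.closure {ε} := by
  obtain ⟨hεO, f, hfO, hεf⟩ := hεu
  obtain ⟨-, -, hF, hr, -⟩ := hO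
  obtain ⟨t, d, d', hd, hq⟩ := unit_quadratic O hF hr ε f hεO hfO hεf
  have hε0 : ε ≠ 0 := by positivity
  have hf : f = ε⁻¹ := eq_inv_of_mul_eq_one_right hεf
  have hdR : (d : ℝ) * d' = 1 := by exact_mod_cast hd
  have hfq : f = (d' * t : ℤ) + ((-d' : ℤ) : ℝ) * ε := by
    apply mul_left_cancel₀ hε0
    rw [hεf]
    push_cast
    linear_combination (d' : ℝ) * hq - hdR
  -- the subring `ℤ + ℤ ε`
  let S : Subring ℝ :=
    { carrier := {x | ∃ a b : ℤ, x = (a : ℝ) + (b : ℝ) * ε}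
      zero_mem' := ⟨0, 0, by simp⟩
      one_mem' := ⟨1, 0, by simp⟩
      add_mem' := by
        rintro _ _ ⟨a, b, rfl⟩ ⟨a', b', rfl⟩
        exact ⟨a + a', b + b', by push_cast; ring⟩
      neg_mem' := by
        rintro _ ⟨a, b, rfl⟩
        exact ⟨-a, -b, by push_cast; ring⟩
      mul_mem' := by
        rintro _ _ ⟨a, b, rfl⟩ ⟨a', b', rfl⟩
        refine ⟨a * a' - b * b' * d, a * b' + a' * b + b * b' * t, ?_⟩
        push_cast
        linear_combination (b * b' : ℝ) * hq }
  have hεS : ε ∈ S := ⟨0, 1, by simp⟩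
  have hfS : f ∈ S := ⟨_, _, hfq⟩
  have hzpow : ∀ (R : Subring ℝ), ε ∈ R → f ∈ R → ∀ n : ℤ, ε ^ n ∈ R := by
    intro R h1 h2 n
    obtain ⟨m, rfl | rfl⟩ := n.eq_nat_or_neg
    · rw [zpow_natCast]; exact pow_mem h1 m
    · rw [zpow_neg, zpow_natCast, ← inv_pow, ← hf]; exact pow_mem h2 m
  have hpos : ∀ u : ℝ, IsUnitOf O u → 0 < u → u ∈ S := by
    rintro u ⟨huO, v, hvO, huv⟩ hu
    obtain ⟨n, hn1, hn2⟩ := exists_mem_Ico_zpow hu hε1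
    have hp : 0 < ε ^ n := zpow_pos (by linarith) n
    have hw : IsUnitOf O (u * ε ^ (-n)) := by
      refine ⟨O.mul_mem huO (hzpow O hεO hfO _), v * ε ^ n,
        O.mul_mem hvO (hzpow O hεO hfO _), ?_⟩
      rw [zpow_neg]
      field_simp
      exact huv
    have hlt : u * ε ^ (-n) < ε := by
      rw [zpow_neg, ← div_eq_mul_inv, div_lt_iff₀ hp, mul_comm, ← zpow_add_one₀ hε0]
      exact hn2
    have hle : u ≤ ε ^ n := by
      by_contra hc
      have : 1 < u * ε ^ (-n) := by
        rw [zpow_neg, ← div_eq_mul_inv, one_lt_div hp]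
        exact not_le.mp hc
      exact absurd (hmin _ hw this) (not_le.mpr hlt)
    rw [le_antisymm hle hn1]
    exact hzpow S hεS hfS n
  have hunit : ∀ u : ℝ, IsUnitOf O u → u ∈ S := by
    rintro u hu
    rcases lt_trichotomy u 0 with h | h | h
    · obtain ⟨huO, v, hvO, huv⟩ := hu
      have := hpos (-u) ⟨O.neg_mem huO, -v, O.neg_mem hvO, by linarith⟩ (by linarith)
      simpa using S.neg_mem this
    · rw [h]; exact S.zero_mem
    · exact hpos u hu h
  have hOS : ∀ x ∈ O, x ∈ S := by
    intro x hx
    have hx' : x ∈ AddSubgroup.closure {x : ℝ | IsUnitOf O x} := by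
      rw [hug]; exact hx
    have hcl : AddSubgroup.closure {x : ℝ | IsUnitOf O x} ≤ S.toAddSubgroup :=
      (AddSubgroup.closure_le _).mpr hunit
    exact hcl hx'
  have hSR : ∀ R : Subring ℝ, ε ∈ R → ∀ x ∈ S, x ∈ R := by
    rintro R hR _ ⟨a, b, rfl⟩
    exact R.add_mem (intCast_mem R a) (R.mul_mem (intCast_mem R b) hR)
  refine ⟨fun x => ⟨hOS x, hSR O hεO x⟩, le_antisymm ?_ ?_⟩
  · intro x hx
    exact hSR _ (Subring.subset_closure (Set.mem_singleton ε)) x (hOS x hx)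
  · rw [Subring.closure_le]
    rintro _ rfl
    exact hεO
end
end

section
/- Let K be a real quadratic field of fundamental discriminant Δ₀, with fundamental unit ε₀ > 1 (under a fixed real embedding). For j ≥ 1 set O(Δ₀, j) = ℤ + ε₀ʲℤ. Then each O(Δ₀, j) is a unit-generated order of K, every unit-generated order of K equals O(Δ₀, j) for some j ≥ 1, and the orders O(Δ₀, j) for j ≥ 1 are pairwise distinct, with the single exception that when Δ₀ = 5 one has O(5, 1) = O(5, 2) = ℤ[(1+√5)/2]. -/
noncomputable section

lemma ug_irr_lin {x : ℝ} (hx : Irrational x) {a b : ℚ} (h : (a : ℝ) + b * x = 0) :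
    a = 0 ∧ b = 0 := by
  have hb : b = 0 := by
    by_contra hb
    apply hx
    refine ⟨-a / b, ?_⟩
    have : (b : ℝ) ≠ 0 := by exact_mod_cast hb
    push_cast
    field_simp
    linarith
  subst hb
  simp at h
  exact ⟨h, rfl⟩

lemma ug_irr_lin_int {x : ℝ} (hx : Irrational x) {a b : ℤ} (h : (a : ℝ) + b * x = 0) :
    a = 0 ∧ b = 0 := by
  have := ug_irr_lin hx (a := (a : ℚ)) (b := (b : ℚ)) (by push_cast; exact h)
  exact_mod_cast this

lemma ug_mem_K {D : ℤ} (hD : 0 < D) (hs : ¬ IsSquare D) {x : ℝ}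
    (hx : x ∈ Subfield.closure {Real.sqrt D}) :
    ∃ a b : ℚ, x = a + b * Real.sqrt D := by
  have hirr : Irrational (Real.sqrt D) := by
    rw [irrational_sqrt_intCast_iff]
    exact ⟨hs, hD.le⟩
  have hsq : Real.sqrt D * Real.sqrt D = D := Real.mul_self_sqrt (by exact_mod_cast hD.le)
  set s := Real.sqrt D with hsdef
  induction hx using Subfield.closure_induction with
  | mem x hx => exact ⟨0, 1, by simp at hx; simp [hx]⟩
  | one => exact ⟨1, 0, by simp⟩
  | add x y _ _ hx hy =>
    obtain ⟨a, b, rfl⟩ := hx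
    obtain ⟨c, d, rfl⟩ := hy
    exact ⟨a + c, b + d, by push_cast; ring⟩
  | neg x _ hx =>
    obtain ⟨a, b, rfl⟩ := hx
    exact ⟨-a, -b, by push_cast; ring⟩
  | inv x _ hx =>
    obtain ⟨a, b, rfl⟩ := hx
    by_cases h0 : (a : ℝ) + b * s = 0
    · exact ⟨0, 0, by simp [h0]⟩
    have h1 : (a : ℝ) - b * s ≠ 0 := by
      intro h
      have := ug_irr_lin hirr (a := a) (b := -b) (by push_cast; linarith)
      apply h0
      have hb : b = 0 := by linarith [this.2]
      simp [this.1, hb]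
    have h2 : ((a : ℝ) + b * s) * (a - b * s) = a ^ 2 - b ^ 2 * D := by
      linear_combination (-(b : ℝ) ^ 2) * hsq
    have h3 : (a : ℝ) ^ 2 - b ^ 2 * D ≠ 0 := by
      rw [← h2]; exact mul_ne_zero h0 h1
    refine ⟨a / (a ^ 2 - b ^ 2 * D), -b / (a ^ 2 - b ^ 2 * D), ?_⟩
    rw [inv_eq_iff_eq_inv, ← mul_eq_one_iff_eq_inv₀]
    · push_cast
      field_simp
      linear_combination h2
    · intro h4
      apply h1
      push_cast at h4
      field_simp at h4
      linarith
  | mul x y _ _ hx hy =>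
    obtain ⟨a, b, rfl⟩ := hx
    obtain ⟨c, d, rfl⟩ := hy
    exact ⟨a * c + b * d * D, a * d + b * c, by push_cast; linear_combination (b : ℝ) * d * hsq⟩

lemma ug_quad {K : Subfield ℝ} (hK : IsRealQuadratic K) {x : ℝ} (hx : x ∈ K)
    (hi : IsIntegral ℤ x) (hirr : Irrational x) : ∃ t n : ℤ, x ^ 2 = t * x - n := by
  obtain ⟨D, hD, hs, rfl⟩ := hK
  obtain ⟨a, b, hab⟩ := ug_mem_K hD hs hx
  have hsq : Real.sqrt D * Real.sqrt D = D := Real.mul_self_sqrt (by exact_mod_cast hD.le)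
  have hx2 : x ^ 2 - 2 * a * x + (a ^ 2 - b ^ 2 * D) = 0 := by
    rw [hab]; linear_combination (b : ℝ) ^ 2 * hsq
  have hm : minpoly ℚ x = (minpoly ℤ x).map (algebraMap ℤ ℚ) :=
    minpoly.isIntegrallyClosed_eq_field_fractions' ℚ hi
  have hiQ : IsIntegral ℚ x := hi.tower_top
  have hmon := minpoly.monic hi
  have hdeg : (minpoly ℤ x).natDegree = (minpoly ℚ x).natDegree := by
    rw [hm, hmon.natDegree_map]
  have hle : (minpoly ℚ x).natDegree ≤ 2 := by
    let p : Polynomial ℚ := Polynomial.C 1 * Polynomial.X ^ 2 + Polynomial.C (-2 * a) * Polynomial.X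
      + Polynomial.C (a ^ 2 - b ^ 2 * D)
    have hp2 : p.natDegree = 2 := Polynomial.natDegree_quadratic one_ne_zero
    have hp0 : p ≠ 0 := by intro h; rw [h] at hp2; simp at hp2
    have hev : Polynomial.aeval x p = 0 := by
      simp only [p, map_add, map_mul, Polynomial.aeval_C, Polynomial.aeval_X, map_pow]
      simp
      linarith
    rw [← hp2]
    exact Polynomial.natDegree_le_of_dvd (minpoly.dvd ℚ x hev) hp0
  have hge : 2 ≤ (minpoly ℚ x).natDegree := by
    rw [minpoly.two_le_natDegree_iff hiQ]
    rintro ⟨q, hq⟩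
    exact hirr ⟨q, by simpa using hq⟩
  have h2 : (minpoly ℤ x).natDegree = 2 := by omega
  have hz := minpoly.aeval ℤ x
  rw [Polynomial.aeval_eq_sum_range, h2] at hz
  have hl : (minpoly ℤ x).coeff 2 = 1 := by rw [← h2]; exact hmon
  simp [Finset.sum_range_succ, hl] at hz
  exact ⟨-(minpoly ℤ x).coeff 1, (minpoly ℤ x).coeff 0, by push_cast; linarith⟩

lemma ug_unit_irr {x : ℝ} (hi : IsIntegral ℤ x) (hi' : IsIntegral ℤ x⁻¹) (h1 : 1 < x) :
    Irrational x := by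
  rintro ⟨q, rfl⟩
  have key : ∀ r : ℚ, IsIntegral ℤ (r : ℝ) → ∃ z : ℤ, (z : ℚ) = r := by
    intro r hr
    have : IsIntegral ℤ r := by
      have h := (isIntegral_algebraMap_iff (R := ℤ) (A := ℚ) (B := ℝ) (x := r)
        (algebraMap ℚ ℝ).injective)
      exact h.1 (by simpa using hr)
    exact IsIntegrallyClosed.isIntegral_iff.1 this
  obtain ⟨z, hz⟩ := key q hi
  obtain ⟨w, hw⟩ := key q⁻¹ (by push_cast; exact hi')
  have h1' : (1 : ℚ) < q := by exact_mod_cast h1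
  have h3 : q * q⁻¹ = 1 := mul_inv_cancel₀ (by linarith)
  rw [← hw, ← hz] at h3
  have h4 : z * w = 1 := by exact_mod_cast h3
  have h5 : 1 < z := by rw [← hz] at h1'; exact_mod_cast h1'
  rcases Int.eq_one_or_neg_one_of_mul_eq_one h4 with h | h <;> omega

lemma ug_unit_quad {K : Subfield ℝ} (hK : IsRealQuadratic K) {x : ℝ} (hx : x ∈ K)
    (hi : IsIntegral ℤ x) (hi' : IsIntegral ℤ x⁻¹) (h1 : 1 < x) :
    ∃ t n : ℤ, x ^ 2 = t * x - n ∧ ((n = 1 ∧ 3 ≤ t) ∨ (n = -1 ∧ 1 ≤ t)) := by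
  have hirr := ug_unit_irr hi hi' h1
  obtain ⟨t, n, h⟩ := ug_quad hK hx hi hirr
  obtain ⟨s, m, h'⟩ := ug_quad hK (K.inv_mem hx) hi' hirr.inv
  have hx0 : x ≠ 0 := by linarith
  have h2 : 1 = s * x - m * x ^ 2 := by
    have := congrArg (· * x ^ 2) h'
    field_simp at this
    linarith
  have h3 := ug_irr_lin_int hirr (a := m * n - 1) (b := s - m * t)
    (by push_cast; rw [h] at h2; linarith)
  have hmn : n * m = 1 := by linarith [h3.1]
  refine ⟨t, n, h, ?_⟩
  rcases Int.eq_one_or_neg_one_of_mul_eq_one hmn with rfl | rfl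
  · left
    refine ⟨rfl, ?_⟩
    by_contra hc
    have : (t : ℝ) ≤ 2 := by exact_mod_cast (by omega : t ≤ 2)
    push_cast at h
    nlinarith
  · right
    refine ⟨rfl, ?_⟩
    by_contra hc
    have : (t : ℝ) ≤ 0 := by exact_mod_cast (by omega : t ≤ 0)
    push_cast at h
    nlinarith

lemma ug_span {K : Subfield ℝ} (hK : IsRealQuadratic K) {e : ℝ} (he : e ∈ K)
    (hirr : Irrational e) {x : ℝ} (hx : x ∈ K) : ∃ a b : ℚ, x = a + b * e := by
  obtain ⟨D, hD, hs, rfl⟩ := hK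
  obtain ⟨a, b, hab⟩ := ug_mem_K hD hs hx
  obtain ⟨c, d, hcd⟩ := ug_mem_K hD hs he
  have hd : d ≠ 0 := by
    rintro rfl
    exact hirr ⟨c, by simp [hcd]⟩
  have hd' : (d : ℝ) ≠ 0 := by exact_mod_cast hd
  refine ⟨a - b * c / d, b / d, ?_⟩
  rw [hab, hcd]
  push_cast
  field_simp
  ring

/-- the ring `ℤ + ηℤ` for `η` a quadratic integer -/
def ugRing (η : ℝ) (t n : ℤ) (h : η ^ 2 = t * η - n) : Subring ℝ where
  carrier := {x : ℝ | ∃ a b : ℤ, x = (a : ℝ) + (b : ℝ) * η}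
  mul_mem' := by
    rintro _ _ ⟨a, b, rfl⟩ ⟨c, d, rfl⟩
    exact ⟨a * c - b * d * n, a * d + b * c + b * d * t, by
      push_cast; linear_combination (b : ℝ) * d * h⟩
  one_mem' := ⟨1, 0, by simp⟩
  add_mem' := by
    rintro _ _ ⟨a, b, rfl⟩ ⟨c, d, rfl⟩
    exact ⟨a + c, b + d, by push_cast; ring⟩
  zero_mem' := ⟨0, 0, by simp⟩
  neg_mem' := by
    rintro _ ⟨a, b, rfl⟩
    exact ⟨-a, -b, by push_cast; ring⟩

lemma ug_inv_mem {η : ℝ} {t n : ℤ} (h : η ^ 2 = t * η - n) (h0 : η ≠ 0)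
    (hn : n = 1 ∨ n = -1) : η⁻¹ ∈ ugRing η t n h := by
  refine ⟨n * t, -n, ?_⟩
  rw [inv_eq_iff_eq_inv, ← mul_eq_one_iff_eq_inv₀]
  · rcases hn with rfl | rfl <;> push_cast at h ⊢ <;> linarith
  · intro hh
    rcases hn with rfl | rfl <;> push_cast at h hh
    · have ht : (t : ℝ) = η := by linarith
      rw [ht] at h; nlinarith
    · have ht : (t : ℝ) = η := by linarith
      rw [ht] at h; nlinarith

lemma ug_part1 {K : Subfield ℝ} (hK : IsRealQuadratic K) {η : ℝ} (hx : η ∈ K)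
    (hi : IsIntegral ℤ η) (hi' : IsIntegral ℤ η⁻¹) (h1 : 1 < η) :
    ∃ O : Subring ℝ, (O : Set ℝ) = {x : ℝ | ∃ a b : ℤ, x = (a : ℝ) + (b : ℝ) * η} ∧
        IsOrderOf K O ∧ IsUnitGenerated O := by
  have hirr := ug_unit_irr hi hi' h1
  obtain ⟨t, n, h, hn⟩ := ug_unit_quad hK hx hi hi' h1
  have hn' : n = 1 ∨ n = -1 := by omega
  have h0 : η ≠ 0 := by linarith
  have hηO : η ∈ ugRing η t n h := ⟨0, 1, by simp⟩
  refine ⟨ugRing η t n h, rfl, ⟨?_, ?_, ?_⟩, ?_⟩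
  · rintro _ ⟨a, b, rfl⟩
    exact K.add_mem (intCast_mem K a) (K.mul_mem (intCast_mem K b) hx)
  · rintro _ ⟨a, b, rfl⟩
    exact (isIntegral_algebraMap (R := ℤ) (x := a)).add
      ((isIntegral_algebraMap (R := ℤ) (x := b)).mul hi)
  · let f : (ℤ × ℤ) →ₗ[ℤ] ugRing η t n h :=
      { toFun := fun p => ⟨(p.1 : ℝ) + (p.2 : ℝ) * η, p.1, p.2, rfl⟩
        map_add' := by
          intro p q
          apply Subtype.ext
          simp
          ring
        map_smul' := by
          intro m p
          apply Subtype.ext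
          simp
          ring }
    have hf : Function.Bijective f := by
      constructor
      · rw [injective_iff_map_eq_zero]
        rintro ⟨a, b⟩ hab
        have : (a : ℝ) + b * η = 0 := congrArg Subtype.val hab
        obtain ⟨rfl, rfl⟩ := ug_irr_lin_int hirr this
        rfl
      · rintro ⟨_, a, b, rfl⟩
        exact ⟨(a, b), rfl⟩
    let E := LinearEquiv.ofBijective f hf
    refine ⟨Module.Free.of_equiv E, ?_, ?_⟩
    · rw [← E.finrank_eq]; simp
    · intro x hxK
      obtain ⟨a, b, rfl⟩ := ug_span hK hx hirr hxK
      refine ⟨_, ⟨a.num * b.den, b.num * a.den, rfl⟩, ((a.den * b.den : ℕ) : ℝ),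
        ⟨(a.den * b.den : ℕ), 0, by simp⟩, ?_, ?_⟩
      · have := a.den_nz
        have := b.den_nz
        exact_mod_cast mul_ne_zero a.den_nz b.den_nz
      · have ha : (a.den : ℝ) ≠ 0 := by exact_mod_cast a.den_nz
        have hb : (b.den : ℝ) ≠ 0 := by exact_mod_cast b.den_nz
        rw [Rat.cast_def a, Rat.cast_def b]
        push_cast
        field_simp
  · apply le_antisymm
    · rw [AddSubgroup.closure_le]
      intro x hx
      exact hx.1
    · rintro _ ⟨a, b, rfl⟩
      have hu1 : (1 : ℝ) ∈ AddSubgroup.closure {x : ℝ | IsUnitOf (ugRing η t n h) x} :=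
        AddSubgroup.subset_closure ⟨Subring.one_mem _, 1, Subring.one_mem _, by simp⟩
      have hu2 : η ∈ AddSubgroup.closure {x : ℝ | IsUnitOf (ugRing η t n h) x} :=
        AddSubgroup.subset_closure ⟨hηO, η⁻¹, ug_inv_mem h h0 hn', mul_inv_cancel₀ h0⟩
      have := AddSubgroup.add_mem _ (AddSubgroup.zsmul_mem _ hu1 a)
        (AddSubgroup.zsmul_mem _ hu2 b)
      simpa using this

lemma ug_zpow_mem {O : Subring ℝ} {x : ℝ} (h : x ∈ O) (h' : x⁻¹ ∈ O) (z : ℤ) : x ^ z ∈ O := by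
  cases z with
  | ofNat m => simpa using O.pow_mem h m
  | negSucc m =>
    rw [zpow_negSucc, ← inv_pow]
    exact O.pow_mem h' _

lemma ug_part2 {K : Subfield ℝ} (hK : IsRealQuadratic K)
    {e : ℝ} (hmem : e ∈ K) (hint : IsIntegral ℤ e) (hinv : IsIntegral ℤ e⁻¹)
    (hpos : 1 < e)
    (hfund : ∀ u : ℝ, u ∈ K → IsIntegral ℤ u → IsIntegral ℤ u⁻¹ → 1 < u → e ≤ u)
    (O : Subring ℝ) (hO : IsOrderOf K O) (hU : IsUnitGenerated O) :
    ∃ j : ℕ, 1 ≤ j ∧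
      (O : Set ℝ) = {x : ℝ | ∃ a b : ℤ, x = (a : ℝ) + (b : ℝ) * e ^ j} := by
  have hirr := ug_unit_irr hint hinv hpos
  obtain ⟨hOK, hOi, -, -, hfrac⟩ := hO
  have he0 : e ≠ 0 := by linarith
  have hepos : 0 < e := by linarith
  let R : Subring ℝ := ringOfIntegers K
  have heR : e ∈ R := ⟨hint, hmem⟩
  have heR' : e⁻¹ ∈ R := ⟨hinv, K.inv_mem hmem⟩
  have hOR : ∀ x ∈ O, x ∈ R := fun x hx => ⟨hOi x hx, hOK hx⟩
  let H : AddSubgroup ℤ :=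
    { carrier := {m | e ^ m ∈ O ∧ e ^ (-m) ∈ O}
      add_mem' := by
        rintro a b ⟨h1, h2⟩ ⟨h3, h4⟩
        refine ⟨?_, ?_⟩
        · rw [zpow_add₀ he0]; exact O.mul_mem h1 h3
        · rw [neg_add, zpow_add₀ he0]; exact O.mul_mem h2 h4
      zero_mem' := by simp
      neg_mem' := by
        rintro a ⟨h1, h2⟩
        exact ⟨h2, by rwa [neg_neg]⟩ }
  -- positive units
  have hposunit : ∀ u v : ℝ, u ∈ O → v ∈ O → u * v = 1 → 0 < u → ∃ m ∈ H, u = e ^ m := by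
    intro u v hu hv huv hu0
    have hvu : v = u⁻¹ := eq_inv_of_mul_eq_one_right huv
    subst hvu
    obtain ⟨m, hm1, hm2⟩ := exists_mem_Ico_zpow hu0 hpos
    have hep : 0 < e ^ m := zpow_pos hepos m
    have hw : u * e ^ (-m) ∈ R := R.mul_mem (hOR _ hu) (ug_zpow_mem heR heR' _)
    have hw' : (u * e ^ (-m))⁻¹ ∈ R := by
      rw [mul_inv, zpow_neg, inv_inv]
      exact R.mul_mem (hOR _ hv) (ug_zpow_mem heR heR' _)
    have hum : u = e ^ m := by
      by_contra hne
      have hlt : e ^ m < u := lt_of_le_of_ne hm1 (Ne.symm hne)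
      have h1 : 1 < u * e ^ (-m) := by
        rw [zpow_neg, ← div_eq_mul_inv, lt_div_iff₀ hep]; linarith
      have h2 := hfund _ hw.2 hw.1 hw'.1 h1
      rw [zpow_neg, ← div_eq_mul_inv, le_div_iff₀ hep] at h2
      rw [zpow_add_one₀ he0] at hm2
      linarith
    refine ⟨m, ⟨hum ▸ hu, ?_⟩, hum⟩
    rw [zpow_neg, ← hum]; exact hv
  have hunit : ∀ u, IsUnitOf O u → ∃ m ∈ H, u = e ^ m ∨ u = - e ^ m := by
    rintro u ⟨hu, v, hv, huv⟩
    have hu0 : u ≠ 0 := by rintro rfl; simp at huv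
    rcases lt_or_gt_of_ne hu0 with hlt | hgt
    · obtain ⟨m, hm, h⟩ := hposunit (-u) (-v) (O.neg_mem hu) (O.neg_mem hv) (by linarith)
        (by linarith)
      exact ⟨m, hm, Or.inr (by linarith)⟩
    · obtain ⟨m, hm, h⟩ := hposunit u v hu hv huv hgt
      exact ⟨m, hm, Or.inl h⟩
  obtain ⟨g, hg⟩ := Int.subgroup_cyclic H
  rw [← AddSubgroup.zmultiples_eq_closure, ← Int.zmultiples_natAbs] at hg
  set j := g.natAbs with hj
  have hjH : (j : ℤ) ∈ H := by rw [hg]; exact AddSubgroup.mem_zmultiples _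
  have hj1 : 1 ≤ j := by
    by_contra hc
    have hj0 : j = 0 := by omega
    rw [hj0] at hg
    have hOZ : ∀ x ∈ O, ∃ z : ℤ, x = z := by
      intro x hx
      have hx' : x ∈ O.toAddSubgroup := hx
      rw [← hU] at hx'
      have hle : AddSubgroup.closure {x : ℝ | IsUnitOf O x} ≤ (Int.castAddHom ℝ).range := by
        rw [AddSubgroup.closure_le]
        intro u hu
        obtain ⟨m, hm, h⟩ := hunit u hu
        rw [hg] at hm
        simp at hm
        subst hm
        rcases h with h | h
        · exact ⟨1, by simp [h]⟩
        · exact ⟨-1, by simp [h]⟩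
      obtain ⟨z, hz⟩ := hle hx'
      exact ⟨z, by simpa using hz.symm⟩
    obtain ⟨p, hp, q, hq, -, hpq⟩ := hfrac e hmem
    obtain ⟨a, rfl⟩ := hOZ p hp
    obtain ⟨b, rfl⟩ := hOZ q hq
    exact hirr ⟨a / b, by rw [hpq]; push_cast; rfl⟩
  refine ⟨j, hj1, ?_⟩
  have hη1 : 1 < e ^ j := one_lt_pow₀ hpos (by omega)
  have hη0 : e ^ j ≠ 0 := by positivity
  obtain ⟨t, n, h, hn⟩ := ug_unit_quad hK (K.pow_mem hmem j) (hint.pow j)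
    (by rw [← inv_pow]; exact hinv.pow j) hη1
  have hn' : n = 1 ∨ n = -1 := by omega
  have hηO : e ^ j ∈ O := by simpa using hjH.1
  apply Set.Subset.antisymm
  · have hle : AddSubgroup.closure {x : ℝ | IsUnitOf O x}
        ≤ (ugRing (e ^ j) t n h).toAddSubgroup := by
      rw [AddSubgroup.closure_le]
      intro u hu
      obtain ⟨m, hm, h'⟩ := hunit u hu
      rw [hg] at hm
      obtain ⟨z, rfl⟩ := AddSubgroup.mem_zmultiples_iff.1 hm
      have hmem' : e ^ (z • (j : ℤ)) ∈ ugRing (e ^ j) t n h := by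
        have : e ^ (z • (j : ℤ)) = (e ^ j) ^ z := by
          rw [smul_eq_mul, mul_comm, zpow_mul, zpow_natCast]
        rw [this]
        have hself : e ^ j ∈ ugRing (e ^ j) t n h := ⟨0, 1, by simp⟩
        exact ug_zpow_mem hself (ug_inv_mem h hη0 hn') z
      rcases h' with h' | h'
      · rw [h']; exact hmem'
      · rw [h']; exact Subring.neg_mem _ hmem'
    intro x hx
    have hx' : x ∈ O.toAddSubgroup := hx
    rw [← hU] at hx'
    exact hle hx'
  · rintro _ ⟨a, b, rfl⟩
    exact O.add_mem (intCast_mem O a) (O.mul_mem (intCast_mem O b) hηO)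

/-- Lucas sequence: `e ^ k = A k * e + integer`. -/
def ugA (t n : ℤ) : ℕ → ℤ
  | 0 => 0
  | 1 => 1
  | k + 2 => t * ugA t n (k + 1) - n * ugA t n k

lemma ugA_pow {e : ℝ} {t n : ℤ} (h : e ^ 2 = t * e - n) (k : ℕ) :
    e ^ (k + 1) = ugA t n (k + 1) * e - n * ugA t n k := by
  induction k with
  | zero => simp [ugA]
  | succ k ih =>
    rw [pow_succ, ih]
    simp only [ugA]
    push_cast
    linear_combination (ugA t n (k + 1) : ℝ) * h

lemma ugA_grow_pos {t : ℤ} (ht : 3 ≤ t) (k : ℕ) :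
    0 ≤ ugA t 1 k ∧ ugA t 1 k < ugA t 1 (k + 1) := by
  induction k with
  | zero => simp [ugA]
  | succ k ih =>
    refine ⟨by omega, ?_⟩
    simp only [ugA]
    nlinarith [ih.1, ih.2]

lemma ugA_grow_neg {t : ℤ} (ht : 1 ≤ t) (k : ℕ) :
    0 < ugA t (-1) (k + 1) ∧ ugA t (-1) (k + 1) ≤ ugA t (-1) (k + 2) ∧
      ugA t (-1) (k + 2) < ugA t (-1) (k + 3) := by
  induction k with
  | zero => simp [ugA]; constructor <;> nlinarith
  | succ k ih =>
    obtain ⟨h1, h2, h3⟩ := ih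
    refine ⟨lt_of_lt_of_le h1 h2, h3.le, ?_⟩
    have : ugA t (-1) (k + 1 + 3) = t * ugA t (-1) (k + 3) - -1 * ugA t (-1) (k + 2) := rfl
    rw [this]
    have : 0 < ugA t (-1) (k + 3) := by omega
    have e1 : ugA t (-1) (k + 1 + 2) = ugA t (-1) (k + 3) := rfl
    rw [e1]
    nlinarith

lemma ugA_inj {t n : ℤ} (hn : (n = 1 ∧ 3 ≤ t) ∨ (n = -1 ∧ 1 ≤ t)) {j k : ℕ} (hj : 1 ≤ j)
    (hjk : j < k) (h : ugA t n j = ugA t n k) : n = -1 ∧ t = 1 ∧ j = 1 ∧ k = 2 := by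
  rcases hn with ⟨rfl, ht⟩ | ⟨rfl, ht⟩
  · have : StrictMono (ugA t 1) := strictMono_nat_of_lt_succ fun k => (ugA_grow_pos ht k).2
    exact absurd h (this hjk).ne
  · have hs : StrictMono (fun i => ugA t (-1) (i + 2)) :=
      strictMono_nat_of_lt_succ fun k => (ugA_grow_neg ht k).2.2
    obtain ⟨k, rfl⟩ : ∃ k', k = k' + 2 := ⟨k - 2, by omega⟩
    rcases Nat.lt_or_ge 1 j with h2 | h2
    · obtain ⟨j, rfl⟩ : ∃ j', j = j' + 2 := ⟨j - 2, by omega⟩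
      have := hs (show j < k by omega)
      exact absurd h this.ne
    · have hj1 : j = 1 := by omega
      subst hj1
      have ha1 : ugA t (-1) 1 = 1 := rfl
      have ha2 : ugA t (-1) 2 = t := by simp [ugA]
      rcases Nat.eq_zero_or_pos k with rfl | hk
      · simp only [zero_add] at h
        exact ⟨rfl, by omega, rfl, rfl⟩
      · have := hs hk
        simp only [zero_add] at this
        omega

lemma ug_part3 {e : ℝ} (hirr : Irrational e) {t n : ℤ} (h : e ^ 2 = t * e - n)
    (hn : (n = 1 ∧ 3 ≤ t) ∨ (n = -1 ∧ 1 ≤ t)) {j k : ℕ} (hj : 1 ≤ j) (hjk : j < k)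
    (hset : {x : ℝ | ∃ a b : ℤ, x = (a : ℝ) + (b : ℝ) * e ^ j} =
          {x : ℝ | ∃ a b : ℤ, x = (a : ℝ) + (b : ℝ) * e ^ k}) :
    n = -1 ∧ t = 1 ∧ j = 1 ∧ k = 2 := by
  have key : ∀ i l : ℕ, 1 ≤ i → 1 ≤ l →
      (∃ a b : ℤ, e ^ i = (a : ℝ) + (b : ℝ) * e ^ l) → ∃ b : ℤ, ugA t n i = b * ugA t n l := by
    rintro i l hi hl ⟨a, b, hab⟩
    obtain ⟨i, rfl⟩ : ∃ i', i = i' + 1 := ⟨i - 1, by omega⟩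
    obtain ⟨l, rfl⟩ : ∃ l', l = l' + 1 := ⟨l - 1, by omega⟩
    rw [ugA_pow h, ugA_pow h] at hab
    have := (ug_irr_lin_int hirr (a := -n * ugA t n i - a + b * n * ugA t n l)
      (b := ugA t n (i + 1) - b * ugA t n (l + 1)) (by push_cast; linarith)).2
    exact ⟨b, by linarith⟩
  have h1 : e ^ j ∈ {x : ℝ | ∃ a b : ℤ, x = (a : ℝ) + (b : ℝ) * e ^ k} := by
    rw [← hset]; exact ⟨0, 1, by simp⟩
  have h2 : e ^ k ∈ {x : ℝ | ∃ a b : ℤ, x = (a : ℝ) + (b : ℝ) * e ^ j} := by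
    rw [hset]; exact ⟨0, 1, by simp⟩
  obtain ⟨b, hb⟩ := key j k hj (by omega) h1
  obtain ⟨c, hc⟩ := key k j (by omega) hj h2
  have hpos : ∀ i, 1 ≤ i → 0 ≤ ugA t n i := by
    intro i hi
    obtain ⟨i, rfl⟩ : ∃ i', i = i' + 1 := ⟨i - 1, by omega⟩
    rcases hn with ⟨rfl, ht⟩ | ⟨rfl, ht⟩
    · exact (ugA_grow_pos ht _).1
    · exact (ugA_grow_neg ht _).1.le
  exact ugA_inj hn hj hjk (Int.dvd_antisymm (hpos j hj) (hpos k (by omega))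
    ⟨c, by rw [hc]; ring⟩ ⟨b, by rw [hb]; ring⟩)

lemma ug_golden {e : ℝ} (hpos : 1 < e) (h : e ^ 2 = e + 1) : e = (1 + Real.sqrt 5) / 2 := by
  have : Real.sqrt 5 = 2 * e - 1 := by
    rw [Real.sqrt_eq_iff_mul_self_eq] <;> nlinarith
  linarith

/-- Let `K` be a real quadratic field with fundamental unit `ε₀ > 1` (the smallest unit of
the ring of integers exceeding 1), and set `O(Δ₀, j) = ℤ + ε₀ʲℤ` for `j ≥ 1`. Then each
`O(Δ₀, j)` is a unit-generated order of `K`; every unit-generated order of `K` is of this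
form; and the `O(Δ₀, j)` are pairwise distinct, with the single exception that when
`Δ₀ = 5` (i.e. `K = ℚ(√5)`) one has `O(5,1) = O(5,2) = ℤ[(1+√5)/2]`. -/
theorem unitGenerated_orders_parametrization (K : Subfield ℝ) (hK : IsRealQuadratic K)
    (ε₀ : ℝ) (hmem : ε₀ ∈ K) (hint : IsIntegral ℤ ε₀) (hinv : IsIntegral ℤ ε₀⁻¹)
    (hpos : 1 < ε₀)
    (hfund : ∀ u : ℝ, u ∈ K → IsIntegral ℤ u → IsIntegral ℤ u⁻¹ → 1 < u → ε₀ ≤ u) :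
    (∀ j : ℕ, 1 ≤ j → ∃ O : Subring ℝ,
        (O : Set ℝ) = {x : ℝ | ∃ a b : ℤ, x = (a : ℝ) + (b : ℝ) * ε₀ ^ j} ∧
        IsOrderOf K O ∧ IsUnitGenerated O) ∧
    (∀ O : Subring ℝ, IsOrderOf K O → IsUnitGenerated O →
        ∃ j : ℕ, 1 ≤ j ∧
          (O : Set ℝ) = {x : ℝ | ∃ a b : ℤ, x = (a : ℝ) + (b : ℝ) * ε₀ ^ j}) ∧
    (∀ j k : ℕ, 1 ≤ j → 1 ≤ k → j ≠ k →
        {x : ℝ | ∃ a b : ℤ, x = (a : ℝ) + (b : ℝ) * ε₀ ^ j} =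
          {x : ℝ | ∃ a b : ℤ, x = (a : ℝ) + (b : ℝ) * ε₀ ^ k} →
        K = Subfield.closure {Real.sqrt 5} ∧
          ((j = 1 ∧ k = 2) ∨ (j = 2 ∧ k = 1))) ∧
    (K = Subfield.closure {Real.sqrt 5} →
        ε₀ = (1 + Real.sqrt 5) / 2 ∧
        {x : ℝ | ∃ a b : ℤ, x = (a : ℝ) + (b : ℝ) * ε₀ ^ 1} =
          {x : ℝ | ∃ a b : ℤ, x = (a : ℝ) + (b : ℝ) * ε₀ ^ 2}) := by
  have hirr := ug_unit_irr hint hinv hpos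
  obtain ⟨t, n, h, hn⟩ := ug_unit_quad hK hmem hint hinv hpos
  have hKs : n = -1 → t = 1 → K = Subfield.closure {Real.sqrt 5} := by
    rintro rfl rfl
    have hg := ug_golden hpos (by push_cast at h; linarith)
    have h5 : Real.sqrt 5 = 2 * ε₀ - 1 := by linarith
    apply le_antisymm
    · intro x hx
      obtain ⟨a, b, rfl⟩ := ug_span hK hmem hirr hx
      have hs : Real.sqrt 5 ∈ Subfield.closure {Real.sqrt 5} := Subfield.subset_closure rfl
      have he : ε₀ ∈ Subfield.closure {Real.sqrt 5} := by
        rw [hg]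
        exact Subfield.div_mem _ (Subfield.add_mem _ (Subfield.one_mem _) hs) (ofNat_mem _ 2)
      exact Subfield.add_mem _ (SubfieldClass.ratCast_mem _ a)
        (Subfield.mul_mem _ (SubfieldClass.ratCast_mem _ b) he)
    · rw [Subfield.closure_le]
      rintro x rfl
      rw [h5]
      exact K.sub_mem (K.mul_mem (ofNat_mem _ 2) hmem) K.one_mem
  refine ⟨?_, ?_, ?_, ?_⟩
  · intro j hj
    exact ug_part1 hK (K.pow_mem hmem j) (hint.pow j) (by rw [← inv_pow]; exact hinv.pow j)
      (one_lt_pow₀ hpos (by omega))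
  · exact fun O hO hU => ug_part2 hK hmem hint hinv hpos hfund O hO hU
  · intro j k hj hk hjk hset
    rcases lt_or_gt_of_ne hjk with hlt | hlt
    · obtain ⟨h1, h2, h3, h4⟩ := ug_part3 hirr h hn hj hlt hset
      exact ⟨hKs h1 h2, Or.inl ⟨h3, h4⟩⟩
    · obtain ⟨h1, h2, h3, h4⟩ := ug_part3 hirr h hn hk hlt hset.symm
      exact ⟨hKs h1 h2, Or.inr ⟨h4, h3⟩⟩
  · intro hK5
    have hs5 : Real.sqrt 5 * Real.sqrt 5 = 5 := Real.mul_self_sqrt (by norm_num)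
    have hs2 : 2 < Real.sqrt 5 := by
      rw [Real.lt_sqrt (by norm_num)]; norm_num
    set φ : ℝ := (1 + Real.sqrt 5) / 2 with hφ
    have hφ2 : φ ^ 2 = φ + 1 := by rw [hφ]; linarith
    have hφ1 : 1 < φ := by rw [hφ]; linarith
    have hφK : φ ∈ K := by
      rw [hK5]
      have hs : Real.sqrt 5 ∈ Subfield.closure {Real.sqrt 5} := Subfield.subset_closure rfl
      exact Subfield.div_mem _ (Subfield.add_mem _ (Subfield.one_mem _) hs) (ofNat_mem _ 2)
    have hφi : IsIntegral ℤ φ := by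
      refine ⟨Polynomial.X ^ 2 - Polynomial.X - 1, by monicity!, ?_⟩
      simp
      linarith
    have hφv : φ⁻¹ = φ - 1 := by
      rw [inv_eq_iff_eq_inv, ← mul_eq_one_iff_eq_inv₀ (by linarith)]
      linarith
    have hle := hfund φ hφK hφi (by rw [hφv]; exact hφi.sub isIntegral_one) hφ1
    have hge : ε₀ + 1 ≤ ε₀ ^ 2 := by
      rcases hn with ⟨rfl, ht⟩ | ⟨rfl, ht⟩
      · have : (3 : ℝ) ≤ t := by exact_mod_cast ht
        push_cast at h
        nlinarith
      · have : (1 : ℝ) ≤ t := by exact_mod_cast ht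
        push_cast at h
        nlinarith
    have heq : ε₀ = φ := by
      apply le_antisymm hle
      nlinarith
    refine ⟨heq, ?_⟩
    have he2 : ε₀ ^ 2 = ε₀ + 1 := by rw [heq]; exact hφ2
    ext x
    constructor
    · rintro ⟨a, b, rfl⟩
      exact ⟨a - b, b, by rw [he2]; push_cast; ring⟩
    · rintro ⟨a, b, rfl⟩
      exact ⟨a + b, b, by rw [he2]; push_cast; ring⟩
end
end

section
/- Every real quadratic field K contains infinitely many distinct unit-generated orders; that is, the set of orders O of K that are generated as ℤ-modules by their unit groups O^× is infinite. -/
noncomputable section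

/-- The subring `ℤ + ℤ s` of `ℝ`, where `s ^ 2 = n` is an integer. -/
def ordr (s : ℝ) (n : ℤ) (h : s * s = n) : Subring ℝ where
  carrier := {r | ∃ a b : ℤ, r = a + b * s}
  zero_mem' := ⟨0, 0, by simp⟩
  one_mem' := ⟨1, 0, by simp⟩
  add_mem' := by
    rintro _ _ ⟨a, b, rfl⟩ ⟨c, d, rfl⟩
    exact ⟨a + c, b + d, by push_cast; ring⟩
  neg_mem' := by
    rintro _ ⟨a, b, rfl⟩
    exact ⟨-a, -b, by push_cast; ring⟩
  mul_mem' := by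
    rintro _ _ ⟨a, b, rfl⟩ ⟨c, d, rfl⟩
    exact ⟨a * c + b * d * n, a * d + b * c, by push_cast; rw [← h]; ring⟩

theorem mem_ordr {s : ℝ} {n : ℤ} {h : s * s = n} {r : ℝ} :
    r ∈ ordr s n h ↔ ∃ a b : ℤ, r = a + b * s := Iff.rfl

theorem irr_zero {s : ℝ} (hs : Irrational s) {a b : ℤ} (h : (a : ℝ) + b * s = 0) :
    a = 0 ∧ b = 0 := by
  have hb : b = 0 := by
    by_contra hb
    have := (hs.intCast_mul hb).intCast_add a
    rw [h] at this
    exact not_irrational_zero this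
  subst hb
  simpa using h

/-- The `ℤ`-module `ℤ + ℤ s` is free of rank two. -/
def ordrEquiv {s : ℝ} (n : ℤ) (h : s * s = n) (hs : Irrational s) :
    (ℤ × ℤ) ≃ₗ[ℤ] ordr s n h :=
  LinearEquiv.ofBijective
    { toFun := fun p => ⟨p.1 + p.2 * s, p.1, p.2, rfl⟩
      map_add' := by
        intro p q
        apply Subtype.ext
        simp
        ring
      map_smul' := by
        intro m p
        apply Subtype.ext
        simp
        ring }
    (by
      constructor
      · intro p q hpq
        have h1 : (p.1 : ℝ) + p.2 * s = q.1 + q.2 * s := congrArg Subtype.val hpq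
        have h2 := irr_zero hs (a := p.1 - q.1) (b := p.2 - q.2) (by push_cast; linarith)
        exact Prod.ext (by omega) (by omega)
      · rintro ⟨_, a, b, rfl⟩
        exact ⟨(a, b), rfl⟩)

theorem ordr_isOrder {s : ℝ} (n : ℤ) (h : s * s = n) (hs : Irrational s) {t : ℝ} {y : ℤ}
    (hy : y ≠ 0) (hst : s = y * t) : IsOrderOf (Subfield.closure {t}) (ordr s n h) := by
  have ht : t ∈ Subfield.closure {t} := Subfield.subset_closure rfl
  refine ⟨?_, ?_, Module.Free.of_equiv (ordrEquiv n h hs), ?_, ?_⟩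
  · rintro _ ⟨a, b, rfl⟩
    rw [hst]
    exact add_mem (intCast_mem _ a) (mul_mem (intCast_mem _ b) (mul_mem (intCast_mem _ y) ht))
  · rintro _ ⟨a, b, rfl⟩
    have hi : IsIntegral ℤ s := by
      apply IsIntegral.of_pow (n := 2) (by norm_num)
      rw [pow_two, h]
      exact isIntegral_algebraMap (x := n)
    exact (isIntegral_algebraMap (x := a)).add ((isIntegral_algebraMap (x := b)).mul hi)
  · rw [← (ordrEquiv n h hs).finrank_eq]
    simp
  · intro x hx
    induction hx using Subfield.closure_induction with
    | mem x hx =>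
      obtain rfl : x = t := hx
      refine ⟨s, ⟨0, 1, by simp⟩, y, intCast_mem _ y, by exact_mod_cast hy, ?_⟩
      have : (y : ℝ) ≠ 0 := by exact_mod_cast hy
      rw [hst]; field_simp
    | one => exact ⟨1, one_mem _, 1, one_mem _, one_ne_zero, by simp⟩
    | add x z _ _ hx hz =>
      obtain ⟨p, hp, q, hq, hq0, rfl⟩ := hx
      obtain ⟨p', hp', q', hq', hq0', rfl⟩ := hz
      exact ⟨p * q' + q * p', add_mem (mul_mem hp hq') (mul_mem hq hp'), q * q', mul_mem hq hq',
        mul_ne_zero hq0 hq0', by field_simp⟩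
    | neg x _ hx =>
      obtain ⟨p, hp, q, hq, hq0, rfl⟩ := hx
      exact ⟨-p, neg_mem hp, q, hq, hq0, by field_simp⟩
    | inv x _ hx =>
      obtain ⟨p, hp, q, hq, hq0, rfl⟩ := hx
      by_cases hp0 : p = 0
      · exact ⟨0, zero_mem _, 1, one_mem _, one_ne_zero, by simp [hp0]⟩
      · exact ⟨q, hq, p, hp, hp0, by simp⟩
    | mul x z _ _ hx hz =>
      obtain ⟨p, hp, q, hq, hq0, rfl⟩ := hx
      obtain ⟨p', hp', q', hq', hq0', rfl⟩ := hz
      exact ⟨p * p', mul_mem hp hp', q * q', mul_mem hq hq', mul_ne_zero hq0 hq0', by field_simp⟩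

theorem ordr_unitGenerated {s : ℝ} (n : ℤ) (h : s * s = n) (x : ℤ) (hx : x * x - n = 1) :
    IsUnitGenerated (ordr s n h) := by
  have hxr : (x : ℝ) * x - n = 1 := by exact_mod_cast hx
  apply le_antisymm
  · rw [AddSubgroup.closure_le]
    exact fun r hr => hr.1
  · rintro _ ⟨a, b, rfl⟩
    have h1 : (1 : ℝ) ∈ AddSubgroup.closure {x : ℝ | IsUnitOf (ordr s n h) x} :=
      AddSubgroup.subset_closure ⟨one_mem _, 1, one_mem _, by simp⟩
    have h2 : (x + s : ℝ) ∈ AddSubgroup.closure {x : ℝ | IsUnitOf (ordr s n h) x} :=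
      AddSubgroup.subset_closure ⟨⟨x, 1, by simp⟩, x - s, ⟨x, -1, by simp; ring⟩, by linarith⟩
    have h3 := add_mem (zsmul_mem h1 (a - b * x)) (zsmul_mem h2 b)
    convert h3 using 1
    simp only [zsmul_eq_mul]
    push_cast
    ring

theorem ordr_dvd {t : ℝ} (ht : Irrational t) {y z n m : ℤ} {h : (y * t) * (y * t) = n}
    {h' : (z * t) * (z * t) = m} (he : ordr (y * t) n h = ordr (z * t) m h') : z ∣ y := by
  have : (y * t : ℝ) ∈ ordr (z * t) m h' := he ▸ ⟨0, 1, by simp⟩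
  obtain ⟨a, b, hab⟩ := this
  have := irr_zero ht (a := a) (b := b * z - y) (by push_cast; linarith)
  exact ⟨b, by linarith [this.2]⟩

/-- Every real quadratic field contains infinitely many distinct unit-generated orders. -/
theorem infinite_unitGenerated_orders (K : Subfield ℝ) (hK : IsRealQuadratic K) :
    {O : Subring ℝ | IsOrderOf K O ∧ IsUnitGenerated O}.Infinite := by
  obtain ⟨D, hD, hsq, rfl⟩ := hK
  obtain ⟨f, hf⟩ := Pell.IsFundamental.exists_of_not_isSquare hD hsq
  have hirr : Irrational (Real.sqrt D) :=
    irrational_sqrt_intCast_iff.2 ⟨hsq, hD.le⟩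
  have hpos : ∀ k : ℕ, 0 < (f ^ ((k : ℤ) + 1)).y := fun k =>
    Pell.Solution₁.y_zpow_pos hf.x_pos hf.2.1 (by positivity)
  have hDD : Real.sqrt D * Real.sqrt D = D := Real.mul_self_sqrt (by exact_mod_cast hD.le)
  have hs : ∀ y : ℤ, (y * Real.sqrt D) * (y * Real.sqrt D) = ((D * y ^ 2 : ℤ) : ℝ) := by
    intro y
    push_cast
    linear_combination (y : ℝ) ^ 2 * hDD
  refine Set.infinite_of_injective_forall_mem
    (f := fun k : ℕ => ordr ((f ^ ((k : ℤ) + 1)).y * Real.sqrt D) _ (hs _)) ?_ ?_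
  · intro k l hkl
    have h1 := ordr_dvd hirr hkl
    have h2 := ordr_dvd hirr hkl.symm
    have h3 := Int.dvd_antisymm (hpos k).le (hpos l).le h2 h1
    have h4 := hf.y_strictMono.injective h3
    omega
  · intro k
    have hy := (hpos k).ne'
    refine ⟨ordr_isOrder _ _ (hirr.intCast_mul hy) hy rfl,
      ordr_unitGenerated _ _ (f ^ ((k : ℤ) + 1)).x ?_⟩
    have := (f ^ ((k : ℤ) + 1)).prop
    linarith
end
end
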